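/- arXiv:1601.06118 — 3 statements merged into one kernel-verified Lean document; each statement's English description precedes it below -/
import Mathlib

section
/- Let A : ℝ → ℂ^{d×d} be real analytic and 1-periodic and let α ∈ ℝ be such that L₁(α,A) = −∞. Assume additionally that for every n the rank of A_n(x) is constant in x, say rank A_n(x) = r_n for all x. Then there exists a real analytic 1-periodic map M : ℝ → GL(d,ℂ) such that M(x+α)^{−1} A(x) M(x) = J is a constant matrix in Jordan normal form: J is block diagonal with m = dim ker A(x) blocks, each block being a nilpotent Jordan block with 0 on the diagonal and 1 on the superdiagonal. -/
open MeasureTheory Filter Topology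

/-- Iterates of the one-frequency cocycle: `A_n(x) = A(x+(n-1)α) ⋯ A(x+α) A(x)`. -/
noncomputable def matIter {d : ℕ} (α : ℝ) (A : ℝ → Matrix (Fin d) (Fin d) ℂ) :
    ℕ → ℝ → Matrix (Fin d) (Fin d) ℂ
  | 0, _ => 1
  | n + 1, x => matIter α A n (x + α) * A x

/-- The `k`-th largest singular value of a matrix, `1 ≤ k ≤ d`, via the
Courant–Fischer max–min characterization:
`σ_k(M) = max {t | ∃ V of dim k, ∀ v ∈ V, t‖v‖ ≤ ‖Mv‖}`. -/
noncomputable def singVal {d : ℕ} (k : ℕ) (M : Matrix (Fin d) (Fin d) ℂ) : ℝ :=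
  sSup {t : ℝ | ∃ V : Submodule ℂ (EuclideanSpace ℂ (Fin d)),
    Module.finrank ℂ V = k ∧ ∀ v ∈ V, t * ‖v‖ ≤ ‖(Matrix.toEuclideanLin M) v‖}

/-- The integral `∫ ln(g) dμ`, valued in `[-∞,∞]` (here `ln 0 = -∞`); by convention it is `-∞`
whenever the negative part of `ln g` is not `μ`-integrable. -/
noncomputable def elogIntegral {X : Type*} [MeasurableSpace X] (μ : Measure X) (g : X → ℝ) :
    EReal :=
  if μ {x | g x = 0} = 0 ∧ (∫⁻ x, ENNReal.ofReal (-Real.log (g x)) ∂μ) ≠ ⊤ then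
    (∫⁻ x, ENNReal.ofReal (Real.log (g x)) ∂μ).toEReal
      - (∫⁻ x, ENNReal.ofReal (-Real.log (g x)) ∂μ).toEReal
  else ⊥

/-- `L_k(α, A) = L`: the `k`-th Lyapunov exponent of the one-frequency cocycle `(α, A)`
is `L ∈ [-∞,∞)`, i.e. `L = lim_n (1/n) ∫₀¹ ln σ_k(A_n(x)) dx`. -/
def HasLyapunovExp {d : ℕ} (α : ℝ) (A : ℝ → Matrix (Fin d) (Fin d) ℂ) (k : ℕ) (L : EReal) :
    Prop :=
  Tendsto (fun n : ℕ => (((n : ℝ)⁻¹ : ℝ) : EReal)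
      * elogIntegral (volume.restrict (Set.Ioc (0:ℝ) 1))
          (fun x => singVal k (matIter α A n x)))
    atTop (𝓝 L)

/-- A real analytic, 1-periodic matrix valued map. -/
def AnalyticPeriodicMat {d e : ℕ} (A : ℝ → Matrix (Fin d) (Fin e) ℂ) : Prop :=
  Function.Periodic A 1 ∧ ∀ (x : ℝ) (i : Fin d) (j : Fin e), AnalyticAt ℝ (fun t => A t i j) x


namespace AnalyticPeriodicMat

variable {d e f : ℕ}

theorem mul' {A : ℝ → Matrix (Fin d) (Fin e) ℂ} {B : ℝ → Matrix (Fin e) (Fin f) ℂ}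
    (hA : AnalyticPeriodicMat A) (hB : AnalyticPeriodicMat B) :
    AnalyticPeriodicMat (fun x => A x * B x) := by
  refine ⟨fun x => ?_, fun x i j => ?_⟩
  · simp only [hA.1 x, hB.1 x]
  · simp only [Matrix.mul_apply]
    exact Finset.analyticAt_fun_sum _ fun k _ => (hA.2 x i k).fun_mul (hB.2 x k j)

theorem sub' {A B : ℝ → Matrix (Fin d) (Fin e) ℂ}
    (hA : AnalyticPeriodicMat A) (hB : AnalyticPeriodicMat B) :
    AnalyticPeriodicMat (fun x => A x - B x) := by
  refine ⟨fun x => ?_, fun x i j => ?_⟩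
  · simp only [hA.1 x, hB.1 x]
  · simp only [Matrix.sub_apply]
    exact (hA.2 x i j).fun_sub (hB.2 x i j)

theorem const' (A : Matrix (Fin d) (Fin e) ℂ) : AnalyticPeriodicMat (fun _ : ℝ => A) :=
  ⟨fun _ => rfl, fun _ _ _ => analyticAt_const⟩

theorem shift {A : ℝ → Matrix (Fin d) (Fin e) ℂ} (hA : AnalyticPeriodicMat A) (c : ℝ) :
    AnalyticPeriodicMat (fun x => A (x + c)) := by
  refine ⟨fun x => ?_, fun x i j => ?_⟩
  · show A (x + 1 + c) = A (x + c)
    rw [add_right_comm, hA.1]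
  · exact (hA.2 (x + c) i j).comp_of_eq (f := fun t : ℝ => t + c)
      (analyticAt_id.fun_add analyticAt_const) rfl

/-- assembling from columns of vectors -/
theorem conjT {A : ℝ → Matrix (Fin d) (Fin e) ℂ} (hA : AnalyticPeriodicMat A) :
    AnalyticPeriodicMat (fun x => (A x).conjTranspose) := by
  refine ⟨fun x => ?_, fun x i j => ?_⟩
  · simp only [hA.1 x]
  · simp only [Matrix.conjTranspose_apply]
    exact (Complex.conjCLE.toContinuousLinearMap.analyticAt _).comp (hA.2 x j i)

theorem adj {A : ℝ → Matrix (Fin d) (Fin d) ℂ} (hA : AnalyticPeriodicMat A) :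
    AnalyticPeriodicMat (fun x => (A x).adjugate) := by
  refine ⟨fun x => ?_, fun x i j => ?_⟩
  · simp only [hA.1 x]
  · simp only [Matrix.adjugate_apply, Matrix.det_apply']
    refine Finset.analyticAt_fun_sum _ fun σ _ => analyticAt_const.fun_mul ?_
    refine Finset.analyticAt_fun_prod _ fun k _ => ?_
    by_cases h : σ k = j
    · simp only [h, Matrix.updateRow_self]
      exact analyticAt_const
    · simp only [Matrix.updateRow_ne h]
      exact hA.2 x _ _

theorem contDiff {A : ℝ → Matrix (Fin d) (Fin e) ℂ} (hA : AnalyticPeriodicMat A) (i j) :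
    ContDiff ℝ 1 (fun x => A x i j) :=
  contDiff_iff_contDiffAt.2 fun x => (hA.2 x i j).contDiffAt

end AnalyticPeriodicMat

theorem exists_nonvanishing {d e : ℕ} {B : ℝ → Matrix (Fin e) (Fin d) ℂ}
    (hB : AnalyticPeriodicMat B) (h0 : ∀ x, B x ≠ 0) :
    ∃ v : Fin d → ℂ, ∀ x, (B x).mulVec v ≠ 0 := by
  classical
  let F : (ij : Fin e × Fin d) → (ℝ × ({k : Fin d // k ≠ ij.2} → ℂ)) → (Fin d → ℂ) :=
    fun ij xw k => if h : k ≠ ij.2 then B xw.1 ij.1 ij.2 * xw.2 ⟨k, h⟩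
      else - ∑ l : {k : Fin d // k ≠ ij.2}, B xw.1 ij.1 l * xw.2 l
  have hc : ∀ ij k l, ContDiff ℝ 1
      (fun xw : (ℝ × ({k : Fin d // k ≠ (ij : Fin e × Fin d).2} → ℂ)) => B xw.1 k l) :=
    fun ij k l => (hB.contDiff k l).comp contDiff_fst
  have hw : ∀ (ij : Fin e × Fin d) l, ContDiff ℝ 1
      (fun xw : (ℝ × ({k : Fin d // k ≠ ij.2} → ℂ)) => xw.2 l) :=
    fun ij l => (contDiff_apply ℝ ℂ l).comp contDiff_snd
  have hF : ∀ ij, ContDiff ℝ 1 (F ij) := by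
    intro ij
    rw [contDiff_pi]
    intro k
    by_cases h : k ≠ ij.2
    · simp only [F, dif_pos h]
      exact (hc ij _ _).mul (hw ij _)
    · simp only [F, dif_neg h]
      exact (ContDiff.sum fun l _ => (hc ij _ _).mul (hw ij _)).neg
  have hdim : ∀ ij, dimH (Set.range (F ij)) < Module.finrank ℝ (Fin d → ℂ) := by
    intro ij
    refine (hF ij).dimH_range_le.trans_lt ?_
    have hd : 0 < d := ij.2.pos
    norm_cast
    rw [Module.finrank_prod, Module.finrank_pi_fintype, Module.finrank_pi_fintype]
    simp
    omega
  have hdim' : dimH (⋃ ij, Set.range (F ij)) < Module.finrank ℝ (Fin d → ℂ) := by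
    rw [dimH_iUnion]
    rcases isEmpty_or_nonempty (Fin e × Fin d) with h | h
    · exfalso
      apply h0 0
      ext i j
      exact h.elim (i, j)
    · obtain ⟨ij, hij⟩ := exists_eq_ciSup_of_finite (f := fun ij => dimH (Set.range (F ij)))
      rw [← hij]
      exact hdim ij
  obtain ⟨v, hv⟩ := (dense_compl_of_dimH_lt_finrank hdim').nonempty
  refine ⟨v, fun x hx => hv ?_⟩
  obtain ⟨i, j, hij⟩ : ∃ i j, B x i j ≠ 0 := by
    by_contra! h
    exact h0 x (by ext i j; exact h i j)
  refine Set.mem_iUnion.2 ⟨(i, j), (x, fun k => v k / B x i j), ?_⟩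
  ext k
  by_cases h : k ≠ j
  · simp only [F, dif_pos h]
    field_simp
  · have h' : k = j := not_not.1 h
    subst h'
    simp only [F, dif_neg h]
    have h1 : ∑ l, B x i l * v l = 0 := congrFun hx i
    rw [← Finset.add_sum_erase _ _ (Finset.mem_univ k)] at h1
    have h2 : ∑ l : {l : Fin d // l ≠ k}, B x i l * (v l / B x i k)
        = (∑ l ∈ Finset.univ.erase k, B x i l * v l) / B x i k := by
      rw [Finset.sum_div, ← Finset.sum_subtype (Finset.univ.erase k) (by simp)
        (fun l => B x i l * (v l / B x i k))]
      exact Finset.sum_congr rfl fun l _ => by ring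
    rw [h2]
    have : (∑ l ∈ Finset.univ.erase k, B x i l * v l) = - (B x i k * v k) := by
      linear_combination h1
    rw [this]
    field_simp

/-- shift matrices -/
noncomputable def shiftN (p n : ℕ) : Matrix (Fin p) (Fin p) ℂ :=
  Matrix.of fun i j => if (j : ℕ) = (i : ℕ) + n then 1 else 0

/-- superdiagonal matrix -/
noncomputable def Jm {r : ℕ} (ε : Fin r → ℂ) : Matrix (Fin r) (Fin r) ℂ :=
  Matrix.of fun i j => if (j : ℕ) = (i : ℕ) + 1 then ε i else 0

theorem mul_shiftN_apply {a p n : ℕ} (U : Matrix (Fin a) (Fin p) ℂ) (i : Fin a) (k : Fin p) :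
    (U * shiftN p n) i k = if h : n ≤ k then U i ⟨k - n, by omega⟩ else 0 := by
  rw [Matrix.mul_apply]
  simp only [shiftN, Matrix.of_apply]
  split_ifs with h
  · rw [Finset.sum_eq_single ⟨k - n, by omega⟩]
    · simp [h]
    · intro b _ hb
      rw [if_neg, mul_zero]
      intro h'
      apply hb
      ext
      simp
      omega
    · simp
  · apply Finset.sum_eq_zero
    intro b _
    rw [if_neg (by omega), mul_zero]

theorem shiftN_mul_apply {a p n : ℕ} (U : Matrix (Fin p) (Fin a) ℂ) (j : Fin p) (i : Fin a) :
    (shiftN p n * U) j i = if h : j + n < p then U ⟨j + n, h⟩ i else 0 := by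
  rw [Matrix.mul_apply]
  simp only [shiftN, Matrix.of_apply]
  split_ifs with h
  · rw [Finset.sum_eq_single ⟨j + n, h⟩]
    · simp
    · intro b _ hb
      rw [if_neg, zero_mul]
      intro h'
      apply hb
      ext
      simp [h']
    · simp
  · apply Finset.sum_eq_zero
    intro b _
    rw [if_neg (by omega), zero_mul]

theorem rank_sandwich {a b p q : ℕ} (U : Matrix (Fin a) (Fin p) ℂ) (L : Matrix (Fin p) (Fin a) ℂ)
    (X : Matrix (Fin p) (Fin q) ℂ) (V : Matrix (Fin q) (Fin b) ℂ) (W : Matrix (Fin b) (Fin q) ℂ)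
    (h1 : L * U = 1) (h2 : V * W = 1) : (U * X * V).rank = X.rank := by
  apply le_antisymm
  · exact (Matrix.rank_mul_le_left _ _).trans (Matrix.rank_mul_le_right _ _)
  · have : X = L * (U * X * V) * W := by
      calc X = (L * U) * X * (V * W) := by rw [h1, h2, Matrix.one_mul, Matrix.mul_one]
        _ = _ := by simp only [Matrix.mul_assoc]
    conv_lhs => rw [this]
    exact (Matrix.rank_mul_le_left _ _).trans (Matrix.rank_mul_le_right _ _)

theorem rank_split {d : ℕ} (B R R1 : Matrix (Fin d) (Fin d) ℂ) (h : R1 * B = B * R)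
    (hR : R * R = R) (hR1 : R1 * R1 = R1) : B.rank = (B * R).rank + (B - B * R).rank := by
  have hsup : LinearMap.range (B * R).mulVecLin ⊔ LinearMap.range (B - B * R).mulVecLin
      = LinearMap.range B.mulVecLin := by
    apply le_antisymm
    · apply sup_le
      · rintro _ ⟨v, rfl⟩
        exact ⟨R.mulVec v, by simp [Matrix.mulVec_mulVec]⟩
      · rintro _ ⟨v, rfl⟩
        exact ⟨v - R.mulVec v, by simp [Matrix.mulVec_sub, Matrix.mulVec_mulVec]⟩
    · rintro _ ⟨v, rfl⟩
      have : B.mulVecLin v = (B * R).mulVecLin v + (B - B * R).mulVecLin v := by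
        simp
      rw [this]
      exact Submodule.add_mem_sup ⟨v, rfl⟩ ⟨v, rfl⟩
  have hinf : LinearMap.range (B * R).mulVecLin ⊓ LinearMap.range (B - B * R).mulVecLin = ⊥ := by
    rw [eq_bot_iff]
    rintro _ ⟨⟨v, rfl⟩, ⟨w, hw⟩⟩
    have h1 : R1.mulVec ((B * R).mulVec v) = (B * R).mulVec v := by
      rw [Matrix.mulVec_mulVec, ← h, ← Matrix.mul_assoc, hR1]
    have h2 : R1.mulVec ((B - B * R).mulVec w) = 0 := by
      rw [Matrix.mulVec_mulVec, Matrix.mul_sub, ← Matrix.mul_assoc, h, Matrix.mul_assoc, hR,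
        sub_self, Matrix.zero_mulVec]
    simp only [Matrix.mulVecLin_apply] at hw ⊢
    rw [hw, h1] at h2
    rw [h2]
    simp
  have := Submodule.finrank_sup_add_finrank_inf_eq (LinearMap.range (B * R).mulVecLin)
    (LinearMap.range (B - B * R).mulVecLin)
  rw [hsup, hinf, finrank_bot, add_zero] at this
  exact this

theorem chain_step {d : ℕ} (α : ℝ) (B : ℕ → ℝ → Matrix (Fin d) (Fin d) ℂ)
    (hB : ∀ n, AnalyticPeriodicMat (B n))
    (hco : ∀ j k x, B (j + k) x = B j (x + k * α) * B k x) (q : ℕ)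
    (hq : ∀ x, B q x ≠ 0) (hq1 : ∀ x, B (q + 1) x = 0) :
    ∃ (U : ℝ → Matrix (Fin d) (Fin (q + 1)) ℂ) (V : ℝ → Matrix (Fin (q + 1)) (Fin d) ℂ),
      AnalyticPeriodicMat U ∧ AnalyticPeriodicMat V ∧ (∀ x, V x * U x = 1) ∧
      (∀ (n : ℕ) x, B n x * U x = U (x + n * α) * shiftN (q + 1) n) ∧
      (∀ (n : ℕ) x, V (x + n * α) * B n x = shiftN (q + 1) n * V x) := by
  obtain ⟨v, hv⟩ := exists_nonvanishing (hB q) hq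
  have hge : ∀ m, q + 1 ≤ m → ∀ x, B m x = 0 := by
    intro m hm x
    obtain ⟨t, rfl⟩ := Nat.exists_eq_add_of_le hm
    rw [hco, hq1, Matrix.zero_mul]
  let u : ℕ → ℝ → Matrix (Fin d) (Fin 1) ℂ :=
    fun n x => B n (x + -(n * α)) * Matrix.of fun i _ => v i
  have hu : ∀ n, AnalyticPeriodicMat (u n) := fun n =>
    ((hB n).shift _).mul' (AnalyticPeriodicMat.const' _)
  have hBu : ∀ n m x, B n x * u m x = u (n + m) (x + n * α) := by
    intro n m x
    simp only [u]
    rw [← Matrix.mul_assoc]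
    congr 1
    rw [hco]
    congr 2 <;> push_cast <;> ring
  have hu0 : ∀ m, q + 1 ≤ m → ∀ x, u m x = 0 := by
    intro m hm x
    simp only [u]
    rw [hge m hm, Matrix.zero_mul]
  have hune : ∀ x, u q x ≠ 0 := by
    intro x h
    apply hv (x + -(q * α))
    ext i
    exact congrFun (congrFun h i) 0
  let nrm : ℝ → ℂ := fun x => ((u q x).conjTranspose * u q x) 0 0
  have hnrm : ∀ x, nrm x ≠ 0 := by
    intro x h
    apply hune x
    open scoped ComplexOrder in rw [← Matrix.conjTranspose_mul_self_eq_zero]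
    ext i j
    rw [Subsingleton.elim i 0, Subsingleton.elim j 0]
    exact h
  have hnrmA := (hu q).conjT.mul' (hu q)
  let ψ : ℝ → Matrix (Fin 1) (Fin d) ℂ := fun x => (nrm x)⁻¹ • (u q x).conjTranspose
  have hψ : AnalyticPeriodicMat ψ := by
    refine ⟨fun x => ?_, fun x i j => ?_⟩
    · simp only [ψ, nrm, (hu q).1 x]
    · simp only [ψ, Matrix.smul_apply, smul_eq_mul]
      exact ((hnrmA.2 x 0 0).fun_inv (hnrm x)).fun_mul ((hu q).conjT.2 x i j)
  have hψu : ∀ x, (ψ x * u q x) 0 0 = 1 := by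
    intro x
    simp only [ψ, Matrix.smul_mul, Matrix.smul_apply, smul_eq_mul]
    exact inv_mul_cancel₀ (hnrm x)
  let φ : ℕ → ℝ → Matrix (Fin 1) (Fin d) ℂ := fun j x => ψ (x + j * α) * B j x
  have hφ : ∀ j, AnalyticPeriodicMat (φ j) := fun j => (hψ.shift _).mul' (hB j)
  have hφB : ∀ (n j : ℕ) x, φ j (x + n * α) * B n x = φ (j + n) x := by
    intro n j x
    simp only [φ]
    rw [Matrix.mul_assoc, ← hco]
    congr 2
    push_cast
    ring
  have hφ0 : ∀ m, q + 1 ≤ m → ∀ x, φ m x = 0 := by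
    intro m hm x
    simp only [φ]
    rw [hge m hm, Matrix.mul_zero]
  let U : ℝ → Matrix (Fin d) (Fin (q + 1)) ℂ := fun x => Matrix.of fun i k => u (q - k) x i 0
  let Φ : ℝ → Matrix (Fin (q + 1)) (Fin d) ℂ := fun x => Matrix.of fun j i => φ j x 0 i
  have hU : AnalyticPeriodicMat U := by
    refine ⟨fun x => ?_, fun x i j => (hu _).2 x i 0⟩
    ext i j
    simp only [U, Matrix.of_apply, (hu _).1 x]
  have hΦ : AnalyticPeriodicMat Φ := by
    refine ⟨fun x => ?_, fun x i j => (hφ _).2 x 0 j⟩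
    ext i j
    simp only [Φ, Matrix.of_apply, (hφ _).1 x]
  have hBU : ∀ (n : ℕ) x, B n x * U x = U (x + n * α) * shiftN (q + 1) n := by
    intro n x
    ext i k
    rw [mul_shiftN_apply]
    have h1 : (B n x * U x) i k = (B n x * u (q - k) x) i 0 := by
      simp only [Matrix.mul_apply, U, Matrix.of_apply]
    rw [h1, hBu]
    have hk := k.2
    split_ifs with h
    · simp only [U, Matrix.of_apply]
      congr 2
      omega
    · rw [hu0 _ (by omega)]
      rfl
  have hΦB : ∀ (n : ℕ) x, Φ (x + n * α) * B n x = shiftN (q + 1) n * Φ x := by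
    intro n x
    ext j i
    rw [shiftN_mul_apply]
    have h1 : (Φ (x + n * α) * B n x) j i = (φ j (x + n * α) * B n x) 0 i := by
      simp only [Matrix.mul_apply, Φ, Matrix.of_apply]
    rw [h1, hφB]
    split_ifs with h
    · rfl
    · rw [hφ0 _ (by omega)]
      rfl
  let G : ℝ → Matrix (Fin (q + 1)) (Fin (q + 1)) ℂ := fun x => Φ x * U x
  have hG : AnalyticPeriodicMat G := hΦ.mul' hU
  have hGe : ∀ x j k, G x j k = (ψ (x + (j : ℕ) * α) * u (j + (q - k)) (x + (j : ℕ) * α)) 0 0 := by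
    intro x j k
    have : G x j k = (φ j x * u (q - k) x) 0 0 := by
      simp only [G, Matrix.mul_apply, Φ, U, Matrix.of_apply]
    rw [this]
    simp only [φ]
    rw [Matrix.mul_assoc, hBu]
  have hdet : ∀ x, (G x).det = 1 := by
    intro x
    rw [Matrix.det_of_isUpperTriangular]
    · apply Finset.prod_eq_one
      intro j _
      rw [hGe]
      have : (j : ℕ) + (q - j) = q := by have := j.2; omega
      rw [this, hψu]
    · intro j k hjk
      have hjk' : (k : ℕ) < j := hjk
      have := j.2
      rw [hGe, hu0 _ (by omega), Matrix.mul_zero]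
      rfl
  have hadj : ∀ x, (G x).adjugate * G x = 1 := by
    intro x
    rw [Matrix.adjugate_mul, hdet, one_smul]
  have hadj' : ∀ x, G x * (G x).adjugate = 1 := by
    intro x
    rw [Matrix.mul_adjugate, hdet, one_smul]
  have hGS : ∀ (n : ℕ) x, G (x + n * α) * shiftN (q + 1) n = shiftN (q + 1) n * G x := by
    intro n x
    simp only [G]
    rw [Matrix.mul_assoc, ← hBU, ← Matrix.mul_assoc, hΦB, Matrix.mul_assoc]
  have hadjS : ∀ (n : ℕ) x, (G (x + n * α)).adjugate * shiftN (q + 1) n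
      = shiftN (q + 1) n * (G x).adjugate := by
    intro n x
    calc (G (x + n * α)).adjugate * shiftN (q + 1) n
        = (G (x + n * α)).adjugate * (shiftN (q + 1) n * G x) * (G x).adjugate := by
          rw [Matrix.mul_assoc, Matrix.mul_assoc, hadj', Matrix.mul_one]
      _ = ((G (x + n * α)).adjugate * G (x + n * α)) * shiftN (q + 1) n * (G x).adjugate := by
          rw [← hGS, Matrix.mul_assoc (G (x + n * α)).adjugate (G (x + n * α))]
      _ = _ := by rw [hadj, Matrix.one_mul]
  refine ⟨U, fun x => (G x).adjugate * Φ x, hU, hG.adj.mul' hΦ, ?_, hBU, ?_⟩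
  · intro x
    rw [Matrix.mul_assoc]
    exact hadj x
  · intro n x
    show (G (x + n * α)).adjugate * Φ (x + n * α) * B n x = _
    rw [Matrix.mul_assoc, hΦB, ← Matrix.mul_assoc, hadjS, Matrix.mul_assoc]

theorem jordan_ind {d : ℕ} (α : ℝ) : ∀ (R : ℕ) (B : ℕ → ℝ → Matrix (Fin d) (Fin d) ℂ),
    (∀ n, AnalyticPeriodicMat (B n)) →
    (∀ (j k : ℕ) x, B (j + k) x = B j (x + k * α) * B k x) →
    (∀ n x y, (B n x).rank = (B n y).rank) →
    (∃ s, ∀ x, B s x = 0) → (B 0 0).rank ≤ R →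
    ∃ (r : ℕ) (M : ℝ → Matrix (Fin d) (Fin r) ℂ) (N : ℝ → Matrix (Fin r) (Fin d) ℂ)
      (ε : Fin r → ℂ), AnalyticPeriodicMat M ∧ AnalyticPeriodicMat N ∧
      (∀ x, M x * N x = B 0 x) ∧ (∀ x, N x * M x = 1) ∧
      (∀ i, ε i = 0 ∨ ε i = 1) ∧ (∀ i : Fin r, (i : ℕ) + 1 = r → ε i = 0) ∧
      (∀ x, B 1 x * M x = M (x + α) * Jm ε) := by
  have rank0 : ∀ X : Matrix (Fin d) (Fin d) ℂ, X.rank = 0 → X = 0 := by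
    intro X hX
    have h1 : LinearMap.range X.mulVecLin = ⊥ := Submodule.finrank_eq_zero.1 hX
    have h2 : X.mulVecLin = 0 := LinearMap.range_eq_bot.1 h1
    ext i j
    have h3 := congrFun (LinearMap.congr_fun h2 (Pi.single j 1)) i
    simpa using h3
  have base : ∀ (B : ℕ → ℝ → Matrix (Fin d) (Fin d) ℂ), (∀ x, B 0 x = 0) →
      ∃ (r : ℕ) (M : ℝ → Matrix (Fin d) (Fin r) ℂ) (N : ℝ → Matrix (Fin r) (Fin d) ℂ)
      (ε : Fin r → ℂ), AnalyticPeriodicMat M ∧ AnalyticPeriodicMat N ∧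
      (∀ x, M x * N x = B 0 x) ∧ (∀ x, N x * M x = 1) ∧
      (∀ i, ε i = 0 ∨ ε i = 1) ∧ (∀ i : Fin r, (i : ℕ) + 1 = r → ε i = 0) ∧
      (∀ x, B 1 x * M x = M (x + α) * Jm ε) := by
    intro B hB
    refine ⟨0, fun _ => 0, fun _ => 0, fun _ => 0, .const' _, .const' _, ?_, ?_, ?_, ?_, ?_⟩
    · intro x
      rw [hB, Matrix.zero_mul]
    · intro x
      exact Subsingleton.elim _ _
    · intro i; exact i.elim0
    · intro i; exact i.elim0
    · intro x
      exact Subsingleton.elim _ _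
  intro R
  induction R with
  | zero =>
    intro B hB hco hrk hnil hR
    refine base B fun x => rank0 _ ?_
    rw [hrk 0 x 0]
    omega
  | succ R ih =>
    intro B hB hco hrk hnil hR
    classical
    by_cases hB0 : ∀ x, B 0 x = 0
    · exact base B hB0
    have hp : ∃ q, (∀ x, B q x ≠ 0) ∧ ∀ x, B (q + 1) x = 0 := by
      have hs := Nat.find_spec hnil
      have hmin := fun m => Nat.find_min (m := m) hnil
      rcases hc : Nat.find hnil with _ | q
      · rw [hc] at hs
        exact absurd hs hB0
      · rw [hc] at hs hmin
        refine ⟨q, ?_, hs⟩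
        intro x hx
        apply hmin q (by omega)
        intro y
        apply rank0
        rw [hrk q y x, hx, Matrix.rank_zero]
    obtain ⟨q, hq, hq1⟩ := hp
    obtain ⟨U, V, hU, hV, hVU, hBU, hVB⟩ := chain_step α B hB hco q hq hq1
    have hRR : ∀ x, (U x * V x) * (U x * V x) = U x * V x := by
      intro x
      rw [Matrix.mul_assoc, ← Matrix.mul_assoc (V x), hVU, Matrix.one_mul]
    have hcomm : ∀ (n : ℕ) x, (U (x + n * α) * V (x + n * α)) * B n x = B n x * (U x * V x) := by
      intro n x
      rw [Matrix.mul_assoc, hVB, ← Matrix.mul_assoc, ← hBU, Matrix.mul_assoc]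
    have hrkR : ∀ (n : ℕ) x, (B n x * (U x * V x)).rank = (shiftN (q + 1) n).rank := by
      intro n x
      rw [← Matrix.mul_assoc, hBU]
      exact rank_sandwich _ _ _ _ _ (hVU _) (hVU x)
    have hsplit : ∀ (n : ℕ) x, (B n x).rank
        = (shiftN (q + 1) n).rank + (B n x - B n x * (U x * V x)).rank := by
      intro n x
      rw [← hrkR n x]
      exact rank_split _ _ _ (hcomm n x) (hRR _) (hRR _)
    have hS0 : shiftN (q + 1) 0 = 1 := by
      ext i j
      simp only [shiftN, Matrix.of_apply, Matrix.one_apply, add_zero]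
      by_cases h : i = j
      · simp [h]
      · rw [if_neg h, if_neg]
        intro h'
        exact h (Fin.ext h'.symm)
    have hU0 : ∀ x, B 0 x * U x = U x := by
      intro x
      have := hBU 0 x
      rwa [hS0, Matrix.mul_one, Nat.cast_zero, zero_mul, add_zero] at this
    have hV0 : ∀ x, V x * B 0 x = V x := by
      intro x
      have := hVB 0 x
      rwa [hS0, Matrix.one_mul, Nat.cast_zero, zero_mul, add_zero] at this
    obtain ⟨r, M, N, ε, hM, hN, hMN, hNM, hε, hεl, hJ⟩ :=
      ih (fun n x => B n x - B n x * (U x * V x))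
      (fun n => (hB n).sub' ((hB n).mul' (hU.mul' hV)))
      (by
        intro j k x
        rw [hco, Matrix.sub_mul, Matrix.mul_sub, Matrix.mul_sub, Matrix.mul_assoc (B j _) _ (B k x),
          hcomm, Matrix.mul_assoc (B j _) (U (x + k * α) * V (x + k * α)) (B k x * _),
          ← Matrix.mul_assoc (U (x + k * α) * V (x + k * α)) (B k x), hcomm,
          Matrix.mul_assoc (B k x) (U x * V x), hRR, sub_self, sub_zero, Matrix.mul_assoc])
      (by
        intro n x y
        have h1 := hsplit n x
        have h2 := hsplit n y
        have h3 := hrk n x y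
        omega)
      ⟨q + 1, fun x => by simp [hq1]⟩
      (by
        have h1 := hsplit 0 0
        rw [hS0, Matrix.rank_one, Fintype.card_fin] at h1
        omega)
    have hMP : ∀ x, (B 0 x - B 0 x * (U x * V x)) * M x = M x := by
      intro x
      rw [← hMN x, Matrix.mul_assoc, hNM, Matrix.mul_one]
    have hNP : ∀ x, N x * (B 0 x - B 0 x * (U x * V x)) = N x := by
      intro x
      rw [← hMN x, ← Matrix.mul_assoc, hNM, Matrix.one_mul]
    have hVM : ∀ x, V x * M x = 0 := by
      intro x
      rw [← hMP x, ← Matrix.mul_assoc, Matrix.mul_sub, ← Matrix.mul_assoc, hV0,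
        ← Matrix.mul_assoc, hVU, Matrix.one_mul, sub_self, Matrix.zero_mul]
    have hNU : ∀ x, N x * U x = 0 := by
      intro x
      rw [← hNP x, Matrix.mul_assoc, Matrix.sub_mul, Matrix.mul_assoc, Matrix.mul_assoc (U x),
        hVU, Matrix.mul_one, sub_self, Matrix.mul_zero]
    have hBM : ∀ x, B 1 x * M x = M (x + α) * Jm ε := by
      intro x
      rw [← hJ x]
      rw [Matrix.sub_mul, Matrix.mul_assoc (B 1 x) (U x * V x), Matrix.mul_assoc (U x), hVM,
        Matrix.mul_zero, Matrix.mul_zero, sub_zero]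
    let e := (finSumFinEquiv (m := q + 1) (n := r)).symm
    let ε' : Fin (q + 1) ⊕ Fin r → ℂ := Sum.elim (fun i => if (i : ℕ) = q then 0 else 1) ε
    have hJblk : Jm (ε' ∘ e) =
        (Matrix.fromBlocks (shiftN (q + 1) 1) 0 0 (Jm ε)).submatrix e e := by
      ext i j
      obtain ⟨i, rfl⟩ := e.symm.surjective i
      obtain ⟨j, rfl⟩ := e.symm.surjective j
      rcases i with i | i <;> rcases j with j | j <;>
        simp [Jm, shiftN, ε', e]
      · by_cases h : (i : ℕ) = q
        · have := j.2
          rw [if_neg (by omega), if_neg (by omega)]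
        · simp [h]
      · intro h
        have := i.2
        omega
      · intro h
        have := j.2
        omega
      · by_cases h : (j : ℕ) = i + 1
        · rw [if_pos (by omega), if_pos h]
        · rw [if_neg (by omega), if_neg h]
    refine ⟨q + 1 + r, fun x => (Matrix.fromCols (U x) (M x)).submatrix id e,
      fun x => (Matrix.fromRows (V x) (N x)).submatrix e id, ε' ∘ e, ?_, ?_, ?_, ?_, ?_, ?_, ?_⟩
    · refine ⟨fun x => ?_, fun x i j => ?_⟩
      · simp only [hU.1 x, hM.1 x]
      · simp only [Matrix.submatrix_apply]
        rcases e j with k | k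
        · exact hU.2 x _ _
        · exact hM.2 x _ _
    · refine ⟨fun x => ?_, fun x i j => ?_⟩
      · simp only [hV.1 x, hN.1 x]
      · simp only [Matrix.submatrix_apply]
        rcases e i with k | k
        · exact hV.2 x _ _
        · exact hN.2 x _ _
    · intro x
      rw [Matrix.submatrix_mul_equiv, Matrix.fromCols_mul_fromRows, hMN, ← Matrix.mul_assoc, hU0]
      simp
    · intro x
      rw [Matrix.submatrix_mul _ _ e id e Function.bijective_id |>.symm,
        Matrix.fromRows_mul_fromCols, hVU, hVM, hNU, hNM, Matrix.fromBlocks_one,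
        Matrix.submatrix_one_equiv]
    · intro i
      simp only [Function.comp]
      rcases e i with k | k
      · simp only [ε', Sum.elim_inl]
        split_ifs <;> simp
      · exact hε k
    · intro i
      obtain ⟨i, rfl⟩ := e.symm.surjective i
      rcases i with i | i
      · simp [ε', e]
        omega
      · simp [ε', e]
        intro h
        apply hεl
        omega
    · intro x
      have h1 := hBU 1 x
      rw [Nat.cast_one, one_mul] at h1
      have : B 1 x * (Matrix.fromCols (U x) (M x)).submatrix id e
          = (B 1 x * Matrix.fromCols (U x) (M x)).submatrix id e := by
        rw [Matrix.submatrix_mul _ _ id id e Function.bijective_id, Matrix.submatrix_id_id]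
      rw [this, hJblk, Matrix.submatrix_mul_equiv, Matrix.mul_fromCols, h1, hBM]
      congr 1
      rw [Matrix.fromCols_mul_fromBlocks]
      simp

theorem matIter_add {d : ℕ} (α : ℝ) (A : ℝ → Matrix (Fin d) (Fin d) ℂ) (j k : ℕ) (x : ℝ) :
    matIter α A (j + k) x = matIter α A j (x + k * α) * matIter α A k x := by
  induction k generalizing x with
  | zero => simp [matIter]
  | succ k ih =>
    rw [← add_assoc]
    simp only [matIter]
    rw [ih, Matrix.mul_assoc]
    congr 2
    push_cast
    ring

theorem matIter_analytic {d : ℕ} (α : ℝ) (A : ℝ → Matrix (Fin d) (Fin d) ℂ)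
    (hA : AnalyticPeriodicMat A) (n : ℕ) : AnalyticPeriodicMat (matIter α A n) := by
  induction n with
  | zero => exact AnalyticPeriodicMat.const' 1
  | succ n ih => exact (ih.shift α).mul' hA

theorem AnalyticPeriodicMat.cont {d e : ℕ} {A : ℝ → Matrix (Fin d) (Fin e) ℂ}
    (hA : AnalyticPeriodicMat A) : Continuous A :=
  continuous_matrix fun i j => (hA.contDiff i j).continuous

theorem elog_ge (g : ℝ → ℝ) (K : ℝ) (hK : 0 ≤ K) (hg : ∀ x, Real.exp (-K) ≤ g x) :
    ((-K : ℝ) : EReal) ≤ elogIntegral (volume.restrict (Set.Ioc (0:ℝ) 1)) g := by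
  have hpos : ∀ x, 0 < g x := fun x => (Real.exp_pos _).trans_le (hg x)
  have hlog : ∀ x, -Real.log (g x) ≤ K := by
    intro x
    have := (Real.le_log_iff_exp_le (hpos x)).2 (hg x)
    linarith
  have hint : (∫⁻ x, ENNReal.ofReal (-Real.log (g x)) ∂(volume.restrict (Set.Ioc (0:ℝ) 1)))
      ≤ ENNReal.ofReal K := by
    calc _ ≤ ∫⁻ x, ENNReal.ofReal K ∂(volume.restrict (Set.Ioc (0:ℝ) 1)) :=
          lintegral_mono fun x => ENNReal.ofReal_le_ofReal (hlog x)
      _ = _ := by simp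
  have h0 : {x | g x = 0} = ∅ := by
    ext x
    simp [(hpos x).ne']
  unfold elogIntegral
  rw [if_pos ⟨by rw [h0]; simp, (hint.trans_lt ENNReal.ofReal_lt_top).ne⟩]
  rw [EReal.coe_neg, ← zero_sub]
  apply EReal.sub_le_sub
  · exact EReal.coe_ennreal_nonneg _
  · refine (EReal.coe_ennreal_le_coe_ennreal_iff.2 hint).trans ?_
    rw [EReal.coe_ennreal_ofReal, max_eq_left hK]

theorem singVal_ge {d : ℕ} (X : Matrix (Fin d) (Fin d) ℂ) (v : Fin d → ℂ) (hv : v ≠ 0) :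
    ‖X.mulVec v‖ / ‖WithLp.toLp 2 v‖ ≤ singVal 1 X := by
  have hv' : WithLp.toLp 2 v ≠ 0 := by
    intro h
    apply hv
    simpa using h
  have hvn : 0 < ‖WithLp.toLp 2 v‖ := norm_pos_iff.2 hv'
  unfold singVal
  apply le_csSup
  · let L := (Matrix.toEuclideanLin X).toContinuousLinearMap
    refine ⟨‖L‖, ?_⟩
    rintro t ⟨V, hV, ht⟩
    haveI : Nontrivial V := Module.nontrivial_of_finrank_pos (R := ℂ) (by omega)
    obtain ⟨w, hw⟩ := exists_ne (0 : V)
    have hw0 : 0 < ‖(w : EuclideanSpace ℂ (Fin d))‖ := norm_pos_iff.2 (by simpa using hw)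
    have h1 := (ht w w.2).trans (L.le_opNorm w)
    exact le_of_mul_le_mul_right h1 hw0
  · refine ⟨ℂ ∙ (WithLp.toLp 2 v), finrank_span_singleton hv', ?_⟩
    intro w hw
    obtain ⟨c, rfl⟩ := Submodule.mem_span_singleton.1 hw
    rw [map_smul, norm_smul, norm_smul]
    have h1 : ‖X.mulVec v‖ ≤ ‖Matrix.toEuclideanLin X (WithLp.toLp 2 v)‖ := by
      rw [pi_norm_le_iff_of_nonneg (norm_nonneg _)]
      intro i
      exact PiLp.norm_apply_le (Matrix.toEuclideanLin X (WithLp.toLp 2 v)) i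
    calc _ = ‖c‖ * ‖X.mulVec v‖ := by field_simp
      _ ≤ _ := by gcongr

theorem local_bound {d : ℕ} (P Q : ℝ → Matrix (Fin d) (Fin d) ℂ) (hP : Continuous P)
    (hQ : Continuous Q) (hrk : ∀ x y, (Q x).rank = (Q y).rank)
    (hPQ : ∀ x v, (Q x).mulVec v = 0 → (P x).mulVec v = 0) (x0 : ℝ) :
    ∃ s ∈ 𝓝 x0, ∃ c : ℝ, 0 < c ∧ ∀ x ∈ s, ∀ v, c * ‖(P x).mulVec v‖ ≤ ‖(Q x).mulVec v‖ := by
  let Λ : Matrix (Fin d) (Fin d) ℂ →ₗ[ℂ] ((Fin d → ℂ) →L[ℂ] (Fin d → ℂ)) :=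
    (LinearMap.toContinuousLinearMap : ((Fin d → ℂ) →ₗ[ℂ] (Fin d → ℂ)) ≃ₗ[ℂ] _).toLinearMap ∘ₗ
      (Matrix.toLin' : _ ≃ₗ[ℂ] _).toLinearMap
  have hΛ : ∀ X v, Λ X v = X.mulVec v := fun X v => by simp [Λ]
  have hΛc : Continuous Λ := Λ.continuous_of_finiteDimensional
  obtain ⟨W, hW⟩ := Submodule.exists_isCompl (LinearMap.ker (Q x0).mulVecLin)
  have hinj : LinearMap.ker ((Q x0).mulVecLin.domRestrict W) = ⊥ := by
    rw [LinearMap.ker_eq_bot']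
    rintro ⟨w, hw⟩ h
    have := Submodule.disjoint_def.1 hW.disjoint w h hw
    simpa using this
  obtain ⟨K, hK, hKL⟩ := LinearMap.exists_antilipschitzWith _ hinj
  have hKW : ∀ w ∈ W, ‖w‖ ≤ K * ‖(Q x0).mulVec w‖ := by
    intro w hw
    have := hKL.le_mul_norm_sub ⟨w, hw⟩ 0
    simpa using this
  have hK' : (0:ℝ) < K := hK
  have e1 : ∀ᶠ x in 𝓝 x0, ‖Λ (Q x) - Λ (Q x0)‖ < 1 / (2 * K) := by
    have : Tendsto (fun x => ‖Λ (Q x) - Λ (Q x0)‖) (𝓝 x0) (𝓝 0) := by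
      have h := ((hΛc.comp hQ).sub (continuous_const (y := Λ (Q x0)))).norm.tendsto x0
      simpa using h
    exact this.eventually (gt_mem_nhds (by positivity))
  have e2 : ∀ᶠ x in 𝓝 x0, ‖Λ (P x)‖ < ‖Λ (P x0)‖ + 1 :=
    ((hΛc.comp hP).norm.tendsto x0).eventually (gt_mem_nhds (lt_add_one _))
  have hC : 0 < ‖Λ (P x0)‖ + 1 := by positivity
  refine ⟨_, e1.and e2, 1 / (2 * K * (‖Λ (P x0)‖ + 1)), by positivity, ?_⟩
  rintro x ⟨h1, h2⟩ v
  have hw : ∀ w ∈ W, ‖w‖ ≤ 2 * K * ‖(Q x).mulVec w‖ := by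
    intro w hw
    have h3 := hKW w hw
    have h4 : ‖(Q x0).mulVec w‖ ≤ ‖(Q x).mulVec w‖ + 1 / (2 * K) * ‖w‖ := by
      have h5 := (Λ (Q x) - Λ (Q x0)).le_opNorm w
      rw [ContinuousLinearMap.sub_apply, hΛ, hΛ] at h5
      have h6 : ‖(Λ (Q x) - Λ (Q x0))‖ * ‖w‖ ≤ 1 / (2 * K) * ‖w‖ := by gcongr
      have h7 := norm_sub_norm_le ((Q x0).mulVec w) ((Q x).mulVec w)
      rw [norm_sub_rev] at h7
      linarith
    have h8 : (K:ℝ) * ‖(Q x0).mulVec w‖ ≤ K * ‖(Q x).mulVec w‖ + 1 / 2 * ‖w‖ := by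
      calc (K:ℝ) * ‖(Q x0).mulVec w‖ ≤ K * (‖(Q x).mulVec w‖ + 1 / (2 * K) * ‖w‖) := by gcongr
        _ = _ := by field_simp
    linarith
  have hdis : Disjoint W (LinearMap.ker (Q x).mulVecLin) := by
    rw [Submodule.disjoint_def]
    intro w hwW hwk
    have h3 := hw w hwW
    have h4 : (Q x).mulVec w = 0 := hwk
    rw [h4, norm_zero, mul_zero] at h3
    exact norm_le_zero_iff.1 h3
  have htop : W ⊔ LinearMap.ker (Q x).mulVecLin = ⊤ := by
    apply Submodule.eq_top_of_disjoint _ _ _ hdis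
    have a1 := LinearMap.finrank_range_add_finrank_ker (Q x).mulVecLin
    have a2 := LinearMap.finrank_range_add_finrank_ker (Q x0).mulVecLin
    have a3 := Submodule.finrank_add_eq_of_isCompl hW
    have a4 : Module.finrank ℂ (LinearMap.range (Q x).mulVecLin)
      = Module.finrank ℂ (LinearMap.range (Q x0).mulVecLin) := hrk x x0
    omega
  have hv : v ∈ W ⊔ LinearMap.ker (Q x).mulVecLin := htop ▸ Submodule.mem_top
  obtain ⟨w, hwW, k, hk, rfl⟩ := Submodule.mem_sup.1 hv
  have hk1 : (Q x).mulVec k = 0 := hk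
  rw [Matrix.mulVec_add, Matrix.mulVec_add, hk1, hPQ x k hk1, add_zero, add_zero]
  have h3 := hw w hwW
  have h4 := (Λ (P x)).le_opNorm w
  rw [hΛ] at h4
  have h5 : ‖(P x).mulVec w‖ ≤ (‖Λ (P x0)‖ + 1) * (2 * K * ‖(Q x).mulVec w‖) :=
    h4.trans (by gcongr)
  rw [div_mul_eq_mul_div, one_mul, div_le_iff₀ (by positivity)]
  linarith

theorem global_bound {d : ℕ} (P Q : ℝ → Matrix (Fin d) (Fin d) ℂ) (hP : AnalyticPeriodicMat P)
    (hQ : AnalyticPeriodicMat Q) (hrk : ∀ x y, (Q x).rank = (Q y).rank)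
    (hPQ : ∀ x v, (Q x).mulVec v = 0 → (P x).mulVec v = 0) :
    ∃ c : ℝ, 0 < c ∧ ∀ x v, c * ‖(P x).mulVec v‖ ≤ ‖(Q x).mulVec v‖ := by
  have key : ∃ c : ℝ, 0 < c ∧
      ∀ x ∈ Set.Icc (0:ℝ) 1, ∀ v, c * ‖(P x).mulVec v‖ ≤ ‖(Q x).mulVec v‖ := by
    refine isCompact_Icc.induction_on
      (p := fun s => ∃ c : ℝ, 0 < c ∧ ∀ x ∈ s, ∀ v, c * ‖(P x).mulVec v‖ ≤ ‖(Q x).mulVec v‖)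
      ⟨1, one_pos, by simp⟩ ?_ ?_ ?_
    · rintro s t hst ⟨c, hc, h⟩
      exact ⟨c, hc, fun x hx => h x (hst hx)⟩
    · rintro s t ⟨c, hc, h⟩ ⟨c', hc', h'⟩
      refine ⟨min c c', lt_min hc hc', ?_⟩
      rintro x (hx | hx) v
      · exact le_trans (by gcongr; exact min_le_left _ _) (h x hx v)
      · exact le_trans (by gcongr; exact min_le_right _ _) (h' x hx v)
    · intro x _
      obtain ⟨s, hs, c, hc, h⟩ := local_bound P Q hP.cont hQ.cont hrk hPQ x
      exact ⟨s, mem_nhdsWithin_of_mem_nhds hs, c, hc, h⟩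
  obtain ⟨c, hc, h⟩ := key
  refine ⟨c, hc, fun x v => ?_⟩
  have hper : Function.Periodic (fun x => (P x, Q x)) 1 := fun x => by
    simp only [hP.1 x, hQ.1 x]
  obtain ⟨y, hy, hxy⟩ := hper.exists_mem_Ico₀ one_pos x
  simp only [Prod.mk.injEq] at hxy
  rw [hxy.1, hxy.2]
  exact h y ⟨hy.1, hy.2.le⟩ v

theorem exists_nil {d : ℕ} (α : ℝ) (A : ℝ → Matrix (Fin d) (Fin d) ℂ)
    (hA : AnalyticPeriodicMat A)
    (hL1 : HasLyapunovExp α A 1 ⊥)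
    (hrank : ∀ (n : ℕ) (x y : ℝ), (matIter α A n x).rank = (matIter α A n y).rank) :
    ∃ s, ∀ x, matIter α A s x = 0 := by
  by_contra hcon
  push Not at hcon
  have hne : ∀ s x, matIter α A s x ≠ 0 := by
    intro s x hx
    obtain ⟨y, hy⟩ := hcon s
    apply hy
    have h1 := hrank s y x
    rw [hx, Matrix.rank_zero] at h1
    have h2 : LinearMap.range (matIter α A s y).mulVecLin = ⊥ := Submodule.finrank_eq_zero.1 h1
    have h3 : (matIter α A s y).mulVecLin = 0 := LinearMap.range_eq_bot.1 h2
    ext i j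
    simpa using congrFun (LinearMap.congr_fun h3 (Pi.single j 1)) i
  obtain ⟨N, hN⟩ : ∃ N, ∀ n, (matIter α A N 0).rank ≤ (matIter α A n 0).rank :=
    ⟨Function.argmin (fun n => (matIter α A n 0).rank),
      fun n => Function.argmin_le (fun n => (matIter α A n 0).rank) n⟩
  have hstep : ∀ n x, matIter α A (n + 1) x = matIter α A 1 (x + n * α) * matIter α A n x := by
    intro n x
    rw [add_comm, matIter_add]
  have hker : ∀ x v, (matIter α A (N + 1) x).mulVec v = 0 → (matIter α A N x).mulVec v = 0 := by
    intro x v hv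
    have hle : LinearMap.ker (matIter α A N x).mulVecLin
        ≤ LinearMap.ker (matIter α A (N + 1) x).mulVecLin := by
      intro w hw
      have hw' : (matIter α A N x).mulVec w = 0 := hw
      show (matIter α A (N + 1) x).mulVec w = 0
      rw [hstep, ← Matrix.mulVec_mulVec, hw', Matrix.mulVec_zero]
    have heq := Submodule.eq_of_le_of_finrank_le hle (by
      have a1 := LinearMap.finrank_range_add_finrank_ker (matIter α A N x).mulVecLin
      have a2 := LinearMap.finrank_range_add_finrank_ker (matIter α A (N + 1) x).mulVecLin
      have a3 : Module.finrank ℂ (LinearMap.range (matIter α A N x).mulVecLin)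
          ≤ Module.finrank ℂ (LinearMap.range (matIter α A (N + 1) x).mulVecLin) := by
        have := hN (N + 1)
        rw [hrank N 0 x, hrank (N + 1) 0 x] at this
        exact this
      omega)
    have : v ∈ LinearMap.ker (matIter α A N x).mulVecLin := heq ▸ hv
    exact this
  obtain ⟨c, hc, hcb⟩ := global_bound (matIter α A N) (matIter α A (N + 1))
    (matIter_analytic α A hA N) (matIter_analytic α A hA (N + 1)) (hrank (N + 1)) hker
  obtain ⟨v, hv⟩ := exists_nonvanishing (matIter_analytic α A hA N) (hne N)
  have hv0 : v ≠ 0 := by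
    rintro rfl
    exact hv 0 (Matrix.mulVec_zero _)
  have hgrow : ∀ (n : ℕ) x, c ^ n * ‖(matIter α A N x).mulVec v‖
      ≤ ‖(matIter α A (N + n) x).mulVec v‖ := by
    intro n
    induction n with
    | zero => simp
    | succ n ih =>
      intro x
      have h1 := hcb (x + n * α) ((matIter α A n x).mulVec v)
      rw [Matrix.mulVec_mulVec, Matrix.mulVec_mulVec, ← matIter_add, ← matIter_add,
        add_right_comm] at h1
      calc _ = c * (c ^ n * ‖(matIter α A N x).mulVec v‖) := by ring
        _ ≤ c * ‖(matIter α A (N + n) x).mulVec v‖ := by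
          gcongr
          exact ih x
        _ ≤ _ := h1
  obtain ⟨a, ha, hab⟩ : ∃ a : ℝ, 0 < a ∧ ∀ x, a ≤ ‖(matIter α A N x).mulVec v‖ := by
    have hcont : Continuous (fun x => ‖(matIter α A N x).mulVec v‖) :=
      ((matIter_analytic α A hA N).cont.matrix_mulVec continuous_const).norm
    obtain ⟨z, _, hz⟩ := (isCompact_Icc (a := (0:ℝ)) (b := 1)).exists_isMinOn
      ⟨0, by simp⟩ hcont.continuousOn
    refine ⟨_, norm_pos_iff.2 (hv z), fun x => ?_⟩
    obtain ⟨y, hy, hxy⟩ := (matIter_analytic α A hA N).1.exists_mem_Ico₀ one_pos x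
    rw [hxy]
    exact hz ⟨hy.1, hy.2.le⟩
  set b := a / ‖WithLp.toLp 2 v‖ with hb
  have hvn : 0 < ‖WithLp.toLp 2 v‖ := by
    apply norm_pos_iff.2
    intro h
    apply hv0
    simpa using h
  have hbpos : 0 < b := by positivity
  set K := |Real.log b| + |Real.log c| with hK
  have hK0 : 0 ≤ K := by positivity
  have hsv : ∀ m, N + 1 ≤ m → ∀ x, Real.exp (-(m * K)) ≤ singVal 1 (matIter α A m x) := by
    intro m hm x
    obtain ⟨n, rfl⟩ := Nat.exists_eq_add_of_le (show N ≤ m by omega)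
    refine le_trans ?_ (singVal_ge _ v hv0)
    have h1 : c ^ n * b ≤ ‖(matIter α A (N + n) x).mulVec v‖ / ‖WithLp.toLp 2 v‖ := by
      rw [hb, ← mul_div_assoc]
      gcongr
      refine le_trans ?_ (hgrow n x)
      gcongr
      exact hab x
    refine le_trans ?_ h1
    rw [← Real.le_log_iff_exp_le (by positivity), Real.log_mul (by positivity) hbpos.ne',
      Real.log_pow]
    have h2 := neg_abs_le (Real.log b)
    have h3 := neg_abs_le (Real.log c)
    have h4 : (1:ℝ) ≤ ((N + n : ℕ) : ℝ) := by exact_mod_cast (by omega)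
    have h5 : (n:ℝ) ≤ ((N + n : ℕ) : ℝ) := by exact_mod_cast (by omega)
    have h6 : |Real.log b| ≤ ((N + n : ℕ) : ℝ) * |Real.log b| :=
      le_mul_of_one_le_left (abs_nonneg _) h4
    have h7 : (n:ℝ) * |Real.log c| ≤ ((N + n : ℕ) : ℝ) * |Real.log c| := by gcongr
    have h8 : (n:ℝ) * (-|Real.log c|) ≤ n * Real.log c := by gcongr
    rw [hK, mul_add]
    linarith
  have hfin : ((-K : ℝ) : EReal) ≤ ⊥ := by
    refine ge_of_tendsto hL1 ?_
    filter_upwards [eventually_ge_atTop (N + 1)] with m hm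
    have h1 := elog_ge _ (m * K) (by positivity) (hsv m hm)
    have hm0 : (m:ℝ) ≠ 0 := by
      have : m ≠ 0 := by omega
      exact_mod_cast this
    have h2 : ((-K : ℝ) : EReal) = (((m:ℝ)⁻¹ : ℝ) : EReal) * ((-(m * K) : ℝ) : EReal) := by
      rw [← EReal.coe_mul]
      congr 1
      field_simp
    rw [h2]
    exact mul_le_mul_of_nonneg_left h1 (by
      rw [EReal.coe_nonneg]
      positivity)
  exact absurd hfin (by simp)

theorem rank_Jm {d : ℕ} (ε : Fin d → ℂ) (h1 : ∀ i, ε i = 0 ∨ ε i = 1)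
    (h2 : ∀ i : Fin d, (i : ℕ) + 1 = d → ε i = 0) :
    (Finset.univ.filter fun i : Fin d => ε i = 1).card = (Jm ε).rank := by
  classical
  have hJ : Jm ε * (Jm ε).conjTranspose = Matrix.diagonal ε := by
    ext i k
    rw [Matrix.mul_apply]
    simp only [Jm, Matrix.conjTranspose_apply, Matrix.of_apply]
    by_cases hi : (i : ℕ) + 1 = d
    · rw [Finset.sum_eq_zero]
      · by_cases hik : i = k
        · subst hik
          simp [h2 i hi]
        · simp [hik]
      · intro j _
        have := j.2
        rw [if_neg (by omega), zero_mul]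
    · rw [Finset.sum_eq_single ⟨i + 1, by have := i.2; omega⟩]
      · by_cases hik : i = k
        · subst hik
          rcases h1 i with h | h <;> simp [h]
        · have : (i : ℕ) ≠ k := fun h => hik (Fin.ext h)
          simp [hik, this]
      · intro j _ hj
        rw [if_neg, zero_mul]
        intro h
        exact hj (Fin.ext h)
      · simp
  open scoped ComplexOrder in rw [← Matrix.rank_self_mul_conjTranspose, hJ, Matrix.rank_diagonal]
  rw [Fintype.card_subtype]
  congr 1
  ext i
  rcases h1 i with h | h <;> simp [h]

/-- If `L₁(α,A) = -∞` and for every `n` the rank of `A_n(x)` is constant in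
`x`, then `A` can be analytically conjugated to a constant matrix `J` in nilpotent Jordan
normal form: `J` has entries in `{0,1}`, supported on the superdiagonal, i.e. it is block
diagonal consisting of `m = dim ker A(x)` nilpotent Jordan blocks (equivalently, the number
of `1`s equals `rank A(x) = d - m`). -/
theorem stmt_2 {d : ℕ} (α : ℝ) (A : ℝ → Matrix (Fin d) (Fin d) ℂ)
    (hA : AnalyticPeriodicMat A)
    (hL1 : HasLyapunovExp α A 1 ⊥)
    (hrank : ∀ (n : ℕ) (x y : ℝ), (matIter α A n x).rank = (matIter α A n y).rank) :
    ∃ (M : ℝ → Matrix (Fin d) (Fin d) ℂ) (ε : Fin d → ℂ),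
      AnalyticPeriodicMat M ∧
      (∀ x : ℝ, IsUnit (M x)) ∧
      (∀ i : Fin d, ε i = 0 ∨ ε i = 1) ∧
      (∀ x : ℝ, (Finset.univ.filter fun i : Fin d => ε i = 1).card = (A x).rank) ∧
      (∀ x : ℝ, (M (x + α))⁻¹ * A x * M x
          = Matrix.of fun i j : Fin d => if (j : ℕ) = (i : ℕ) + 1 then ε i else 0) := by
  obtain ⟨r, M, N, ε, hM, hN, hMN, hNM, hε, hεl, hJ⟩ := jordan_ind α _ (matIter α A)
    (matIter_analytic α A hA) (matIter_add α A) hrank (exists_nil α A hA hL1 hrank) le_rfl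
  have hMN1 : ∀ x, M x * N x = 1 := hMN
  have hrd : r = d := by
    apply le_antisymm
    · have h1 := Matrix.rank_mul_le_right (N 0) (M 0)
      rw [hNM, Matrix.rank_one, Fintype.card_fin] at h1
      exact h1.trans (Matrix.rank_le_height _)
    · have h1 := Matrix.rank_mul_le_right (M 0) (N 0)
      rw [hMN1, Matrix.rank_one, Fintype.card_fin] at h1
      exact h1.trans (Matrix.rank_le_height _)
  subst hrd
  have hJ' : ∀ x, A x * M x = M (x + α) * Jm ε := by
    intro x
    have := hJ x
    simpa [matIter] using this
  refine ⟨M, ε, hM, ?_, hε, ?_, ?_⟩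
  · intro x
    exact ⟨⟨M x, N x, hMN1 x, hNM x⟩, rfl⟩
  · intro x
    rw [rank_Jm ε hε hεl, ← rank_sandwich (M (x + α)) (N (x + α)) (Jm ε) (N x) (M x)
      (hNM _) (hNM x), ← hJ', Matrix.mul_assoc, hMN1, Matrix.mul_one]
  · intro x
    rw [Matrix.inv_eq_left_inv (hNM (x + α)), Matrix.mul_assoc, hJ', ← Matrix.mul_assoc, hNM,
      Matrix.one_mul]
    rfl
end

section
/- Let A : ℝ → ℂ^{d×d} be real analytic and 1-periodic and let α ∈ ℝ be such that L₁(α,A) = −∞ (in which case L_k(α,A) = −∞ for all k = 1,…,d). Then there exists a real analytic 1-periodic map A' : ℝ → ℂ^{d×d} such that for every ε ≠ 0 all Lyapunov exponents of the cocycle (α, A + εA') are distinct: L₁(α,A+εA') > L₂(α,A+εA') > … > L_d(α,A+εA'). In particular, there are arbitrarily small analytic perturbations of (α,A) with simple Lyapunov spectrum. -/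
open MeasureTheory Filter Topology

/-- ring of real analytic 1-periodic functions -/
def perAn : Subring (ℝ → ℂ) where
  carrier := {f | Function.Periodic f 1 ∧ ∀ x, AnalyticAt ℝ f x}
  mul_mem' := fun ha hb => ⟨ha.1.mul hb.1, fun x => (ha.2 x).mul (hb.2 x)⟩
  one_mem' := ⟨fun _ => rfl, fun _ => analyticAt_const⟩
  add_mem' := fun ha hb => ⟨ha.1.add hb.1, fun x => (ha.2 x).add (hb.2 x)⟩
  zero_mem' := ⟨fun _ => rfl, fun _ => analyticAt_const⟩
  neg_mem' := fun ha => ⟨fun x => by simp [ha.1 x], fun x => (ha.2 x).neg⟩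

theorem perAn_anal (f : perAn) : AnalyticOnNhd ℝ f.1 Set.univ := fun x _ => f.2.2 x

theorem perAn_cont (f : perAn) : Continuous f.1 :=
  continuous_iff_continuousAt.2 fun x => (f.2.2 x).continuousAt

theorem perAn_bdd (f : perAn) : ∃ C : ℝ, 0 < C ∧ ∀ x, ‖f.1 x‖ ≤ C := by
  obtain ⟨C, hC⟩ := isCompact_Icc.exists_bound_of_continuousOn (s := Set.Icc (0:ℝ) 1)
    (perAn_cont f).continuousOn
  refine ⟨max C 1, by positivity, fun x => ?_⟩
  obtain ⟨y, hy, h⟩ := f.2.1.exists_mem_Ico₀ one_pos x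
  rw [h]
  exact (hC y ⟨hy.1, hy.2.le⟩).trans (le_max_left _ _)

instance : IsDomain perAn := by
  have : NoZeroDivisors perAn := ⟨by
    intro a b hab
    have h : ∀ z ∈ (Set.univ : Set ℝ), a.1 z * b.1 z = 0 := fun z _ => congrFun (congrArg Subtype.val hab) z
    rcases (perAn_anal a).eq_zero_or_eq_zero_of_mul_eq_zero (perAn_anal b) h isPreconnected_univ with h | h
    · left; ext x; exact h x trivial
    · right; ext x; exact h x trivial⟩
  exact NoZeroDivisors.to_isDomain _

theorem perAn_isUnit (f : perAn) (h : ∀ x, f.1 x ≠ 0) : IsUnit f := by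
  refine IsUnit.of_mul_eq_one (⟨fun x => (f.1 x)⁻¹, fun x => ?_, fun x => (f.2.2 x).inv (h x)⟩ : perAn) ?_
  · simp [f.2.1 x]
  · ext x; exact mul_inv_cancel₀ (h x)

/-- constants -/
def perC (c : ℂ) : perAn := ⟨fun _ => c, fun _ => rfl, fun _ => analyticAt_const⟩

/-- e(x) - e(x0) -/
noncomputable def pz (x0 : ℝ) : perAn :=
  ⟨fun x => Complex.exp (2 * Real.pi * Complex.I * x) - Complex.exp (2 * Real.pi * Complex.I * x0), by
    intro x
    have : (2 * Real.pi * Complex.I * ((x + 1 : ℝ) : ℂ)) = 2 * Real.pi * Complex.I * x + 2 * Real.pi * Complex.I := by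
      push_cast; ring
    simp only [this, Complex.exp_periodic _], by
    intro x
    refine AnalyticAt.sub ?_ analyticAt_const
    have h1 : AnalyticAt ℝ Complex.exp (2 * Real.pi * Complex.I * x) := analyticAt_cexp.restrictScalars
    have h2 : AnalyticAt ℝ (fun x : ℝ => (2 * Real.pi * Complex.I * x : ℂ)) x :=
      analyticAt_const.mul (Complex.ofRealCLM.analyticAt x)
    exact AnalyticAt.comp (g := Complex.exp) (f := fun x : ℝ => (2 * Real.pi * Complex.I * x : ℂ)) h1 h2⟩

theorem pz_self (x0 : ℝ) : (pz x0).1 x0 = 0 := by simp [pz]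

theorem pz_eq_zero {x0 x : ℝ} (h : (pz x0).1 x = 0) : ∃ n : ℤ, x = x0 + n := by
  simp only [pz, sub_eq_zero, Complex.exp_eq_exp_iff_exists_int] at h
  obtain ⟨n, hn⟩ := h
  refine ⟨n, ?_⟩
  have h2 : (2 * Real.pi * Complex.I : ℂ) ≠ 0 := Complex.two_pi_I_ne_zero
  have : (x : ℂ) = x0 + n := by
    apply mul_left_cancel₀ h2; rw [hn]; ring
  exact_mod_cast this

theorem pz_deriv (x0 x : ℝ) : deriv (pz x0).1 x ≠ 0 := by
  have : HasDerivAt (pz x0).1 (Complex.exp (2 * Real.pi * Complex.I * x) * (2 * Real.pi * Complex.I * 1)) x := by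
    have h2 : HasDerivAt (fun y : ℝ => (2 * Real.pi * Complex.I * y : ℂ)) (2 * Real.pi * Complex.I * 1) x :=
      (Complex.ofRealCLM.hasDerivAt (x := x)).const_mul _
    exact h2.cexp.sub_const _
  rw [this.deriv]
  simp [Complex.exp_ne_zero, Real.pi_ne_zero]

theorem AnalyticAt.dslope' {f : ℝ → ℂ} {x : ℝ} (h : AnalyticAt ℝ f x) : AnalyticAt ℝ (dslope f x) x := by
  obtain ⟨p, hp⟩ := h
  exact ⟨_, hp.has_fpower_series_dslope_fslope⟩

theorem perAn_periodic_int (f : perAn) (x : ℝ) (n : ℤ) : f.1 (x + n) = f.1 x := by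
  have := f.2.1.int_mul n x
  simpa using this

theorem pz_dvd {f : perAn} {x0 : ℝ} (h : f.1 x0 = 0) : pz x0 ∣ f := by
  let g : ℝ → ℂ := fun x => if (pz x0).1 x = 0 then deriv f.1 x / deriv (pz x0).1 x else f.1 x / (pz x0).1 x
  have hz : ∀ x, (pz x0).1 x = 0 → f.1 x = 0 := by
    intro x hx
    obtain ⟨n, rfl⟩ := pz_eq_zero hx
    rw [perAn_periodic_int, h]
  have hper : Function.Periodic g 1 := by
    intro x
    have hd : ∀ f : perAn, deriv f.1 (x + 1) = deriv f.1 x := by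
      intro f
      rw [← deriv_comp_add_const]
      congr 1
      ext y; exact f.2.1 y
    simp only [g, hd, f.2.1 x, (pz x0).2.1 x]
  have han : ∀ x, AnalyticAt ℝ g x := by
    intro x
    by_cases hx : (pz x0).1 x = 0
    · have h1 : g =ᶠ[𝓝 x] fun y => dslope f.1 x y / dslope (pz x0).1 x y := by
        have hne : ∀ᶠ y in 𝓝[≠] x, (pz x0).1 y ≠ 0 := by
          rcases ((pz x0).2.2 x).eventually_eq_zero_or_eventually_ne_zero with h0 | h0
          · exfalso
            apply pz_deriv x0 x
            have : (pz x0).1 =ᶠ[𝓝 x] fun _ => 0 := h0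
            rw [this.deriv_eq]; simp
          · exact h0
        rw [eventually_nhdsWithin_iff] at hne
        filter_upwards [hne] with y hy
        by_cases hxy : y = x
        · subst hxy; simp [g, hx]
        · have := hy hxy
          simp only [g, this, if_false]
          rw [dslope_of_ne _ hxy, dslope_of_ne _ hxy, slope_def_module, slope_def_module, hz x hx, hx]
          have h3 : ((y - x : ℝ) : ℂ) ≠ 0 := by exact_mod_cast sub_ne_zero.2 hxy
          simp only [sub_zero, Complex.real_smul, Complex.ofReal_inv]
          field_simp
      refine AnalyticAt.congr ?_ h1.symm
      refine AnalyticAt.div (f.2.2 x).dslope' ((pz x0).2.2 x).dslope' ?_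
      rw [dslope_same]; exact pz_deriv x0 x
    · have h1 : g =ᶠ[𝓝 x] fun y => f.1 y / (pz x0).1 y := by
        filter_upwards [((pz x0).2.2 x).continuousAt.eventually_ne hx] with y hy
        simp [g, hy]
      exact ((f.2.2 x).div ((pz x0).2.2 x) hx).congr h1.symm
  refine ⟨⟨g, hper, han⟩, ?_⟩
  ext x
  change f.1 x = (pz x0).1 x * g x
  by_cases hx : (pz x0).1 x = 0
  · rw [hz x hx, hx, zero_mul]
  · simp only [g, hx, if_false]; field_simp

theorem perAn_factor (x0 : ℝ) : ∀ (n : ℕ) (f : perAn), (∃ g0 : ℝ → ℂ, ContinuousAt g0 x0 ∧ g0 x0 ≠ 0 ∧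
      ∀ᶠ z in 𝓝[≠] x0, f.1 z = (z - x0) ^ n • g0 z) →
    ∃ m : ℕ, ∃ g : perAn, f = pz x0 ^ m * g ∧ g.1 x0 ≠ 0 := by
  intro n
  induction n with
  | zero =>
    rintro f ⟨g0, hg, hg0, he⟩
    refine ⟨0, f, by simp, ?_⟩
    have h1 : Tendsto f.1 (𝓝[≠] x0) (𝓝 (f.1 x0)) := ((perAn_cont f).tendsto x0).mono_left nhdsWithin_le_nhds
    have h2 : Tendsto g0 (𝓝[≠] x0) (𝓝 (g0 x0)) := hg.tendsto.mono_left nhdsWithin_le_nhds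
    have h3 : f.1 =ᶠ[𝓝[≠] x0] g0 := by
      filter_upwards [he] with z hz; simpa using hz
    rw [tendsto_nhds_unique h1 (h2.congr' h3.symm)]
    exact hg0
  | succ n ih =>
    rintro f ⟨g0, hg, hg0, he⟩
    by_cases h : f.1 x0 = 0
    · obtain ⟨g, rfl⟩ := pz_dvd h
      have hd : ContinuousAt (dslope (pz x0).1 x0) x0 := ((pz x0).2.2 x0).dslope'.continuousAt
      have hd0 : dslope (pz x0).1 x0 x0 ≠ 0 := by rw [dslope_same]; exact pz_deriv x0 x0
      obtain ⟨m, k, hk, hk2⟩ := ih g ⟨fun z => g0 z / dslope (pz x0).1 x0 z, hg.div hd hd0,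
        div_ne_zero hg0 hd0, by
          filter_upwards [he, nhdsWithin_le_nhds (hd.eventually_ne hd0), self_mem_nhdsWithin] with z hz hz2 hz3
          have hz3 : z ≠ x0 := hz3
          have h4 : (pz x0).1 z = (z - x0) • dslope (pz x0).1 x0 z := by
            rw [sub_smul_dslope, pz_self, sub_zero]
          have h5 : (pz x0).1 z * g.1 z = (z - x0) ^ (n+1) • g0 z := hz
          rw [h4] at h5
          have h3 : (z : ℂ) - x0 ≠ 0 := by exact_mod_cast sub_ne_zero.2 hz3
          simp only [Complex.real_smul] at h5 ⊢
          push_cast at h5 ⊢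
          apply mul_left_cancel₀ (mul_ne_zero h3 hz2)
          rw [h5]
          field_simp
          ring⟩
      exact ⟨m + 1, k, by rw [hk]; ring, hk2⟩
    · exact ⟨0, f, by simp, h⟩

theorem perAn_order (f : perAn) (hf : f ≠ 0) (x0 : ℝ) : ¬ ∀ᶠ z in 𝓝 x0, f.1 z = 0 := by
  intro h
  apply hf
  ext x
  exact congrFun ((perAn_anal f).eq_of_eventuallyEq (fun x _ => analyticAt_const (v := (0:ℂ))) h) x

/-- conj -/
def perConj (f : perAn) : perAn := ⟨fun x => (starRingEnd ℂ) (f.1 x), fun x => by simp [f.2.1 x],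
  fun x => (Complex.conjCLE.toContinuousLinearMap.analyticAt _).comp (f.2.2 x)⟩

theorem perAn_common_zero (I : Ideal perAn) (hI : I ≠ ⊤) : ∃ x0 : ℝ, ∀ f ∈ I, f.1 x0 = 0 := by
  by_contra! hcon
  choose h hI' hne using hcon
  obtain ⟨t, ht, hcov⟩ := (isCompact_Icc (a := (0:ℝ)) (b := 1)).elim_nhds_subcover
    (fun x => {y | (h x).1 y ≠ 0}) (fun x _ => ((h x).2.2 x).continuousAt.eventually_ne (hne x))
  apply hI
  let F : perAn := ∑ x ∈ t, perConj (h x) * h x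
  have hF : F ∈ I := I.sum_mem fun x _ => I.mul_mem_left _ (hI' x)
  refine I.eq_top_of_isUnit_mem hF (perAn_isUnit F ?_)
  intro y0
  obtain ⟨y, hy, hyy⟩ := F.2.1.exists_mem_Ico₀ one_pos y0
  rw [hyy]
  have hval : F.1 y = ((∑ x ∈ t, Complex.normSq ((h x).1 y) : ℝ) : ℂ) := by
    have : F.1 = ∑ x ∈ t, (perConj (h x)).1 * (h x).1 := by
      simp [F]
    rw [this, Finset.sum_apply]
    push_cast
    refine Finset.sum_congr rfl fun x _ => ?_
    simp [perConj, Complex.normSq_eq_conj_mul_self]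
  rw [hval]
  have hmem := hcov ⟨hy.1, hy.2.le⟩
  simp only [Set.mem_iUnion] at hmem
  obtain ⟨x, hxt, hx⟩ := hmem
  have : 0 < ∑ x ∈ t, Complex.normSq ((h x).1 y) :=
    Finset.sum_pos' (fun _ _ => Complex.normSq_nonneg _) ⟨x, hxt, Complex.normSq_pos.2 hx⟩
  exact_mod_cast this.ne'

instance : IsPrincipalIdealRing perAn := by
  apply IsPrincipalIdealRing.of_prime_ne_bot
  intro P hP hbot
  obtain ⟨x0, hx0⟩ := perAn_common_zero P hP.ne_top
  obtain ⟨f, hf, hf0⟩ := Submodule.exists_mem_ne_zero_of_ne_bot hbot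
  obtain ⟨n, g0, hg1, hg2, hg3⟩ := (f.2.2 x0).exists_eventuallyEq_pow_smul_nonzero_iff.2
    (perAn_order f hf0 x0)
  obtain ⟨m, g, hfg, hg⟩ := perAn_factor x0 n f
    ⟨g0, hg1.continuousAt, hg2, nhdsWithin_le_nhds hg3⟩
  have hp : pz x0 ∈ P := by
    rw [hfg] at hf
    rcases hP.mem_or_mem hf with h | h
    · exact hP.mem_of_pow_mem _ h
    · exact absurd (hx0 g h) hg
  refine ⟨pz x0, le_antisymm ?_ ?_⟩
  · intro k hk
    exact Ideal.mem_span_singleton.2 (pz_dvd (hx0 k hk))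
  · exact (Ideal.span_singleton_le_iff_mem _).2 hp

open MeasureTheory Filter Topology

/-- shift -/
def tau (α : ℝ) : perAn →+* perAn where
  toFun f := ⟨fun x => f.1 (x + α), fun x => by
      have := f.2.1 (x + α)
      beta_reduce; rw [← this]; congr 1; ring,
    fun x => AnalyticAt.comp (g := f.1) (f := fun x => x + α) (f.2.2 (x + α)) (analyticAt_id.add analyticAt_const)⟩
  map_one' := rfl
  map_mul' _ _ := rfl
  map_zero' := rfl
  map_add' _ _ := rfl

/-- evaluation -/
def evr (x : ℝ) : perAn →+* ℂ where
  toFun f := f.1 x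
  map_one' := rfl
  map_mul' _ _ := rfl
  map_zero' := rfl
  map_add' _ _ := rfl

/-- evaluation of a matrix -/
def evM {d : ℕ} (M : Matrix (Fin d) (Fin d) perAn) (x : ℝ) : Matrix (Fin d) (Fin d) ℂ := M.map (evr x)

theorem evM_mul {d : ℕ} (M N : Matrix (Fin d) (Fin d) perAn) (x : ℝ) : evM (M * N) x = evM M x * evM N x :=
  Matrix.map_mul

theorem evM_one {d : ℕ} (x : ℝ) : evM (1 : Matrix (Fin d) (Fin d) perAn) x = 1 :=
  Matrix.map_one _ (map_zero _) (map_one _)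

theorem evM_tau {d : ℕ} (α : ℝ) (M : Matrix (Fin d) (Fin d) perAn) (x : ℝ) :
    evM (M.map (tau α)) x = evM M (x + α) := rfl

theorem evM_bdd {d : ℕ} (M : Matrix (Fin d) (Fin d) perAn) :
    ∃ K : ℝ, 0 < K ∧ ∀ x i j, ‖evM M x i j‖ ≤ K := by
  choose C hC hb using fun p : Fin d × Fin d => perAn_bdd (M p.1 p.2)
  refine ⟨∑ p, C p + 1, add_pos_of_nonneg_of_pos (Finset.sum_nonneg fun p _ => (hC p).le) one_pos, fun x i j => ?_⟩
  have h1 := hb (i, j) x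
  have h2 := Finset.single_le_sum (f := C) (fun p _ => (hC p).le) (Finset.mem_univ (i, j))
  exact h1.trans (h2.trans (by linarith))

theorem mul_entry_le {d : ℕ} {X Y : Matrix (Fin d) (Fin d) ℂ} {a b : ℝ} (ha : 0 ≤ a)
    (hX : ∀ i j, ‖X i j‖ ≤ a) (hY : ∀ i j, ‖Y i j‖ ≤ b) (i j : Fin d) : ‖(X * Y) i j‖ ≤ d * (a * b) := by
  rw [Matrix.mul_apply]
  refine (norm_sum_le _ _).trans ?_
  calc ∑ k, ‖X i k * Y k j‖ ≤ ∑ k : Fin d, a * b := by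
        refine Finset.sum_le_sum fun k _ => ?_
        rw [norm_mul]
        exact mul_le_mul (hX _ _) (hY _ _) (norm_nonneg _) ha
    _ = _ := by simp

theorem matIter_conj {d : ℕ} (α : ℝ) (A B P Q : ℝ → Matrix (Fin d) (Fin d) ℂ)
    (hQP : ∀ x, Q x * P x = 1) (hA : ∀ x, A x = P (x + α) * B x * Q x) :
    ∀ (n : ℕ) (x : ℝ), matIter α A n x = P (x + n * α) * matIter α B n x * Q x := by
  intro n
  induction n with
  | zero => intro x; simp [matIter, mul_eq_one_comm.1 (hQP x)]
  | succ n ih =>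
    intro x
    have : x + α + n * α = x + (n + 1 : ℕ) * α := by push_cast; ring
    rw [matIter, matIter, ih, hA, this]
    calc _ = P (x + (n + 1 : ℕ) * α) * matIter α B n (x + α) * (Q (x + α) * P (x + α)) * B x * Q x := by
          simp only [Matrix.mul_assoc]
      _ = _ := by rw [hQP]; simp only [Matrix.mul_assoc, Matrix.one_mul]

theorem matIter_block {d : ℕ} (α : ℝ) (N : ℝ → Matrix (Fin (d+1)) (Fin (d+1)) ℂ)
    (hN : ∀ x i, N x i 0 = 0) : ∀ (n : ℕ) (x : ℝ),
    (∀ i : Fin d, matIter α N n x i.succ 0 = 0) ∧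
    ∀ i j : Fin d, matIter α N n x i.succ j.succ =
      matIter α (fun x => (N x).submatrix Fin.succ Fin.succ) n x i j := by
  intro n
  induction n with
  | zero => intro x; simp [matIter, Matrix.one_apply, Fin.succ_ne_zero]
  | succ n ih =>
    intro x
    constructor
    · intro i; simp [matIter, Matrix.mul_apply, hN]
    · intro i j
      simp [matIter, Matrix.mul_apply, Fin.sum_univ_succ, (ih _).1, (ih _).2]

theorem matIter_det {d : ℕ} (α : ℝ) (A : ℝ → Matrix (Fin d) (Fin d) ℂ) : ∀ (n : ℕ) (x : ℝ),
    (matIter α A n x).det = ∏ i ∈ Finset.range n, (A (x + i * α)).det := by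
  intro n
  induction n with
  | zero => intro x; simp [matIter]
  | succ n ih =>
    intro x
    rw [matIter, Matrix.det_mul, ih, Finset.prod_range_succ']
    congr 1
    · refine Finset.prod_congr rfl fun i _ => ?_
      congr 2; push_cast; ring
    · simp

/-- uniform lower bound -/
def LBd {d : ℕ} (α : ℝ) (A : ℝ → Matrix (Fin d) (Fin d) ℂ) : Prop :=
  ∃ c : ℝ, 0 < c ∧ ∃ m : ℕ, 0 < m ∧ ∃ g : perAn, g ≠ 0 ∧ ∀ (n : ℕ) (x b : ℝ),
    (∀ i j, ‖matIter α A n x i j‖ ≤ b) → c * ∏ i ∈ Finset.range n, ‖g.1 (x + i * α)‖ ≤ b ^ m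

theorem exists_col {d : ℕ} (M : Matrix (Fin (d+1)) (Fin (d+1)) perAn) (h : M.det = 0) :
    ∃ U V : Matrix (Fin (d+1)) (Fin (d+1)) perAn, V * U = 1 ∧ ∀ i, (M * U) i 0 = 0 := by
  obtain ⟨v, hv0, hv⟩ := Matrix.exists_mulVec_eq_zero_iff.2 h
  let K := LinearMap.ker M.mulVecLin
  obtain ⟨k, S⟩ := Submodule.smithNormalForm (Pi.basisFun perAn (Fin (d+1))) K
  have hk : 0 < k := by
    rcases Nat.eq_zero_or_pos k with rfl | h
    · exfalso
      have hs : Subsingleton K := S.bN.repr.toEquiv.subsingleton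
      have : (⟨v, by simpa [K] using hv⟩ : K) = 0 := Subsingleton.elim _ _
      exact hv0 (congrArg Subtype.val this)
    · exact h
  let i0 : Fin k := ⟨0, hk⟩
  have ha : S.a i0 ≠ 0 := by
    intro h0
    have := S.snf i0
    rw [h0, zero_smul] at this
    exact S.bN.ne_zero i0 (Subtype.ext this)
  have hker : M.mulVec (S.bM (S.f i0)) = 0 := by
    have h1 : M.mulVec (S.a i0 • S.bM (S.f i0)) = 0 := by
      rw [← S.snf i0]
      exact (S.bN i0).2
    rw [Matrix.mulVec_smul] at h1
    exact (smul_eq_zero.1 h1).resolve_left ha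
  let b := S.bM.reindex (Equiv.swap (S.f i0) 0)
  have hb : b 0 = S.bM (S.f i0) := by simp [b]
  refine ⟨(Pi.basisFun perAn (Fin (d+1))).toMatrix b, b.toMatrix (Pi.basisFun perAn (Fin (d+1))),
    Module.Basis.toMatrix_mul_toMatrix_flip _ _, fun i => ?_⟩
  have := congrFun hker i
  rw [← hb] at this
  simpa [Matrix.mul_apply, Matrix.mulVec, dotProduct, Module.Basis.toMatrix_apply] using this

/-- block extension -/
def extM {d : ℕ} (X : Matrix (Fin d) (Fin d) perAn) : Matrix (Fin (d+1)) (Fin (d+1)) perAn :=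
  Matrix.of (Fin.cons (Fin.cons 1 0) (fun i => Fin.cons 0 (X i)))

theorem extM_00 {d : ℕ} (X : Matrix (Fin d) (Fin d) perAn) : extM X 0 0 = 1 := rfl
theorem extM_0s {d : ℕ} (X : Matrix (Fin d) (Fin d) perAn) (j : Fin d) : extM X 0 j.succ = 0 := rfl
theorem extM_s0 {d : ℕ} (X : Matrix (Fin d) (Fin d) perAn) (j : Fin d) : extM X j.succ 0 = 0 := rfl
theorem extM_ss {d : ℕ} (X : Matrix (Fin d) (Fin d) perAn) (i j : Fin d) : extM X i.succ j.succ = X i j := rfl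

theorem extM_mul {d : ℕ} (X Y : Matrix (Fin d) (Fin d) perAn) : extM X * extM Y = extM (X * Y) := by
  ext1 i j
  refine Fin.cases ?_ (fun i => ?_) i <;> refine Fin.cases ?_ (fun j => ?_) j <;>
  simp [Matrix.mul_apply, Fin.sum_univ_succ, extM_00, extM_0s, extM_s0, extM_ss]

theorem extM_one {d : ℕ} : extM (1 : Matrix (Fin d) (Fin d) perAn) = 1 := by
  ext1 i j
  refine Fin.cases ?_ (fun i => ?_) i <;> refine Fin.cases ?_ (fun j => ?_) j <;>
  simp [Matrix.one_apply, extM_00, extM_0s, extM_s0, extM_ss, Fin.succ_ne_zero, (Fin.succ_ne_zero _).symm]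

theorem dichotomy (α : ℝ) : ∀ (d : ℕ) (M : Matrix (Fin d) (Fin d) perAn),
    (∃ U V : Matrix (Fin d) (Fin d) perAn, V * U = 1 ∧ ∀ i j, j ≤ i → (V.map (tau α) * M * U) i j = 0)
    ∨ LBd α (evM M) := by
  intro d
  induction d with
  | zero => intro M; exact Or.inl ⟨1, 1, by simp, fun i => i.elim0⟩
  | succ d ih =>
    intro M
    by_cases hdet : M.det = 0
    · obtain ⟨U, V, hVU, hcol⟩ := exists_col M hdet
      let N := V.map (tau α) * M * U
      have hN0 : ∀ i, N i 0 = 0 := by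
        intro i
        simp only [N, Matrix.mul_assoc]
        rw [Matrix.mul_apply]
        simp [hcol]
      rcases ih (N.submatrix Fin.succ Fin.succ) with ⟨U', V', hVU', ht⟩ | ⟨c, hc, m, hm, g, hg, hb⟩
      · left
        refine ⟨U * extM U', extM V' * V, ?_, ?_⟩
        · calc extM V' * V * (U * extM U') = extM V' * (V * U) * extM U' := by simp only [Matrix.mul_assoc]
            _ = 1 := by rw [hVU, Matrix.mul_one, extM_mul, hVU', extM_one]
        · have hE : (extM V').map (tau α) = extM (V'.map (tau α)) := by
            ext1 i j
            refine Fin.cases ?_ (fun i => ?_) i <;> refine Fin.cases ?_ (fun j => ?_) j <;>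
            simp [extM_00, extM_0s, extM_s0, extM_ss]
          have hT : (extM V' * V).map (tau α) * M * (U * extM U') = extM (V'.map (tau α)) * N * extM U' := by
            rw [Matrix.map_mul, hE]; simp only [N, Matrix.mul_assoc]
          intro i j
          rw [hT]
          refine Fin.cases ?_ (fun i => ?_) i <;> refine Fin.cases ?_ (fun j => ?_) j
          · intro _
            simp [Matrix.mul_apply, Fin.sum_univ_succ, extM_00, extM_0s, extM_s0, extM_ss, hN0]
          · intro h; exact absurd h (by simp)
          · intro _
            simp [Matrix.mul_apply, Fin.sum_univ_succ, extM_00, extM_0s, extM_s0, extM_ss, hN0]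
          · intro h
            have := ht i j (by simpa using h)
            simpa [Matrix.mul_apply, Fin.sum_univ_succ, extM_00, extM_0s, extM_s0, extM_ss] using this
      · right
        obtain ⟨K1, hK1, hU⟩ := evM_bdd U
        obtain ⟨K2, hK2, hV⟩ := evM_bdd V
        set D : ℝ := (d + 1 : ℕ) * ((d + 1 : ℕ) * K2 * K1) with hD
        have hDpos : 0 < D := by positivity
        refine ⟨c / D ^ m, by positivity, m, hm, g, hg, fun n x b hM => ?_⟩
        have hUV : U * V = 1 := mul_eq_one_comm.1 hVU
        have hconj := matIter_conj α (evM N) (evM M) (evM V) (evM U)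
          (fun x => by rw [← evM_mul, hUV, evM_one])
          (fun x => by simp only [N]; rw [evM_mul, evM_mul, evM_tau]) n x
        have hblk := (matIter_block α (evM N) (fun x i => by
          simp [evM, hN0]) n x).2
        have key := hb n x (D * b) (fun i j => by
          have h1 := hblk i j
          have h2 : (fun x => (evM N x).submatrix Fin.succ Fin.succ) = evM (N.submatrix Fin.succ Fin.succ) := rfl
          rw [h2] at h1
          rw [← h1, hconj]
          have hb0 : 0 ≤ b := (norm_nonneg _).trans (hM 0 0)
          refine (mul_entry_le (by positivity) (mul_entry_le hK2.le (hV _) hM) (hU _) _ _).trans (le_of_eq ?_)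
          rw [hD]; ring)
        rw [mul_pow] at key
        rw [div_mul_eq_mul_div, div_le_iff₀ (by positivity)]
        linarith
    · right
      refine ⟨((d+1).factorial : ℝ)⁻¹, by positivity, d + 1, by omega, M.det, hdet, fun n x b hM => ?_⟩
      have h1 := Matrix.det_le (abv := IsAbsoluteValue.toAbsoluteValue (norm : ℂ → ℝ)) hM
      have h2 : ∀ y, (evM M y).det = (M.det).1 y := fun y => ((evr y).map_det M).symm
      simp only [IsAbsoluteValue.toAbsoluteValue_apply, matIter_det, norm_prod, h2, Fintype.card_fin, nsmul_eq_mul] at h1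
      rw [inv_mul_le_iff₀ (by positivity)]
      exact h1

open MeasureTheory Filter Topology

theorem elog_mono {X : Type*} [MeasurableSpace X] (μ : Measure X) (g h : X → ℝ)
    (hg : ∀ x, 0 ≤ g x) (hgh : ∀ x, g x ≤ h x) : elogIntegral μ g ≤ elogIntegral μ h := by
  unfold elogIntegral
  by_cases hc : μ {x | g x = 0} = 0 ∧ (∫⁻ x, ENNReal.ofReal (-Real.log (g x)) ∂μ) ≠ ⊤
  · have hae : ∀ᵐ x ∂μ, 0 < g x := by
      rw [ae_iff]
      refine measure_mono_null (fun x hx => ?_) hc.1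
      exact le_antisymm (not_lt.1 hx) (hg x)
    have h1 : (∫⁻ x, ENNReal.ofReal (-Real.log (h x)) ∂μ) ≤ ∫⁻ x, ENNReal.ofReal (-Real.log (g x)) ∂μ := by
      refine lintegral_mono_ae ?_
      filter_upwards [hae] with x hx
      exact ENNReal.ofReal_le_ofReal (neg_le_neg (Real.log_le_log hx (hgh x)))
    have h2 : (∫⁻ x, ENNReal.ofReal (Real.log (g x)) ∂μ) ≤ ∫⁻ x, ENNReal.ofReal (Real.log (h x)) ∂μ := by
      refine lintegral_mono_ae ?_
      filter_upwards [hae] with x hx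
      exact ENNReal.ofReal_le_ofReal (Real.log_le_log hx (hgh x))
    have hc' : μ {x | h x = 0} = 0 ∧ (∫⁻ x, ENNReal.ofReal (-Real.log (h x)) ∂μ) ≠ ⊤ := by
      refine ⟨measure_mono_null (fun x hx => ?_) hc.1, ne_top_of_le_ne_top hc.2 h1⟩
      have hx : h x = 0 := hx
      exact le_antisymm (hx ▸ hgh x) (hg x)
    rw [if_pos hc, if_pos hc']
    exact EReal.sub_le_sub (by exact_mod_cast h2) (by exact_mod_cast h1)
  · rw [if_neg hc]; exact bot_le

theorem elog_eq {X : Type*} [MeasurableSpace X] (μ : Measure X) (g : X → ℝ)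
    (h0 : μ {x | g x = 0} = 0) (hi : Integrable (fun x => Real.log (g x)) μ) :
    elogIntegral μ g = ((∫ x, Real.log (g x) ∂μ : ℝ) : EReal) := by
  unfold elogIntegral
  have h1 : (∫⁻ x, ENNReal.ofReal (Real.log (g x)) ∂μ) ≠ ⊤ := hi.lintegral_lt_top.ne
  have h2 : (∫⁻ x, ENNReal.ofReal (-Real.log (g x)) ∂μ) ≠ ⊤ := hi.neg.lintegral_lt_top.ne
  rw [if_pos ⟨h0, h2⟩, integral_eq_lintegral_pos_part_sub_lintegral_neg_part hi, EReal.coe_sub,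
    EReal.coe_ennreal_toReal h1, EReal.coe_ennreal_toReal h2]

instance : IsProbabilityMeasure (volume.restrict (Set.Ioc (0:ℝ) 1)) := ⟨by simp⟩

theorem elog_const {c : ℝ} (hc : 0 < c) :
    elogIntegral (volume.restrict (Set.Ioc (0:ℝ) 1)) (fun _ => c) = ((Real.log c : ℝ) : EReal) := by
  rw [elog_eq _ _ (by simp [hc.ne']) (integrable_const _)]
  simp

theorem lim_lemma (F : ℕ → EReal) (l : ℝ)
    (hu : ∀ δ : ℝ, 0 < δ → ∃ C : ℝ, ∀ n : ℕ, F n ≤ ((C + n * (l + δ) : ℝ) : EReal))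
    (hl : ∀ δ : ℝ, 0 < δ → ∃ C : ℝ, ∀ n : ℕ, ((C + n * (l - δ) : ℝ) : EReal) ≤ F n) :
    Tendsto (fun n : ℕ => (((n : ℝ)⁻¹ : ℝ) : EReal) * F n) atTop (𝓝 (l : EReal)) := by
  have hz : ∀ C : ℝ, Tendsto (fun n : ℕ => (n : ℝ)⁻¹ * C) atTop (𝓝 0) := fun C => by
    simpa using (tendsto_inv_atTop_nhds_zero_nat (𝕜 := ℝ)).mul_const C
  have hnn : ∀ n : ℕ, (0 : EReal) ≤ (((n : ℝ)⁻¹ : ℝ) : EReal) := fun n => by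
    exact_mod_cast (by positivity : (0:ℝ) ≤ (n : ℝ)⁻¹)
  rw [tendsto_order]
  constructor
  · intro a ha
    obtain ⟨b, hab, hbl⟩ := EReal.lt_iff_exists_real_btwn.1 ha
    have hbl : b < l := by exact_mod_cast hbl
    obtain ⟨C, hC⟩ := hl ((l - b) / 2) (by linarith)
    filter_upwards [(hz C).eventually_const_lt (show -((l - b) / 2) < 0 by linarith), eventually_gt_atTop 0] with n hn hn0
    have hn0' : (n : ℝ) ≠ 0 := by positivity
    refine hab.trans_le (le_trans ?_ (mul_le_mul_of_nonneg_left (hC n) (hnn n)))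
    rw [← EReal.coe_mul]
    have : (n : ℝ)⁻¹ * (C + n * (l - (l - b) / 2)) = (n : ℝ)⁻¹ * C + (l - (l - b) / 2) := by
      field_simp
    rw [this]
    exact_mod_cast (by linarith)
  · intro a ha
    obtain ⟨b, hab, hbl⟩ := EReal.lt_iff_exists_real_btwn.1 ha
    have hab : l < b := by exact_mod_cast hab
    obtain ⟨C, hC⟩ := hu ((b - l) / 2) (by linarith)
    filter_upwards [(hz C).eventually_lt_const (show 0 < ((b - l) / 2) by linarith), eventually_gt_atTop 0] with n hn hn0
    have hn0' : (n : ℝ) ≠ 0 := by positivity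
    refine lt_of_le_of_lt (le_trans (mul_le_mul_of_nonneg_left (hC n) (hnn n)) ?_) hbl
    rw [← EReal.coe_mul]
    have : (n : ℝ)⁻¹ * (C + n * (l + (b - l) / 2)) = (n : ℝ)⁻¹ * C + (l + (b - l) / 2) := by
      field_simp
    rw [this]
    exact_mod_cast (by linarith)

theorem sv_le {d k : ℕ} {M : Matrix (Fin d) (Fin d) ℂ} {B : ℝ} (hB : 0 ≤ B)
    (h : ∀ V : Submodule ℂ (EuclideanSpace ℂ (Fin d)), Module.finrank ℂ V = k →
      ∃ v ∈ V, v ≠ 0 ∧ ‖(Matrix.toEuclideanLin M) v‖ ≤ B * ‖v‖) : singVal k M ≤ B := by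
  refine Real.sSup_le ?_ hB
  rintro t ⟨V, hV, ht⟩
  obtain ⟨v, hv, hv0, hle⟩ := h V hV
  exact le_of_mul_le_mul_right ((ht v hv).trans hle) (norm_pos_iff.2 hv0)

theorem exists_ne_zero {d k : ℕ} (hk : 0 < k) (V : Submodule ℂ (EuclideanSpace ℂ (Fin d)))
    (hV : Module.finrank ℂ V = k) : ∃ v ∈ V, v ≠ 0 := by
  apply Submodule.exists_mem_ne_zero_of_ne_bot
  rintro rfl
  simp at hV
  omega

theorem le_sv {d k : ℕ} (hk : 0 < k) {M : Matrix (Fin d) (Fin d) ℂ} {t : ℝ}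
    (V : Submodule ℂ (EuclideanSpace ℂ (Fin d))) (hV : Module.finrank ℂ V = k)
    (h : ∀ v ∈ V, t * ‖v‖ ≤ ‖(Matrix.toEuclideanLin M) v‖) : t ≤ singVal k M := by
  refine le_csSup ?_ ⟨V, hV, h⟩
  refine ⟨‖LinearMap.toContinuousLinearMap (Matrix.toEuclideanLin M)‖, ?_⟩
  rintro s ⟨W, hW, hs⟩
  obtain ⟨v, hv, hv0⟩ := exists_ne_zero hk W hW
  exact le_of_mul_le_mul_right ((hs v hv).trans
    (ContinuousLinearMap.le_opNorm (LinearMap.toContinuousLinearMap (Matrix.toEuclideanLin M)) v))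
    (norm_pos_iff.2 hv0)

theorem le_sv_map {d k : ℕ} (hk : 0 < k) {M : Matrix (Fin d) (Fin d) ℂ} {t : ℝ}
    (f : (Fin k → ℂ) →ₗ[ℂ] EuclideanSpace ℂ (Fin d)) (hf : Function.Injective f)
    (h : ∀ u, t * ‖f u‖ ≤ ‖(Matrix.toEuclideanLin M) (f u)‖) : t ≤ singVal k M := by
  refine le_sv hk (LinearMap.range f) ?_ ?_
  · rw [LinearMap.finrank_range_of_inj hf]; simp
  · rintro v ⟨u, rfl⟩; exact h u

theorem entry_le_sv {d : ℕ} (M : Matrix (Fin d) (Fin d) ℂ) (i j : Fin d) : ‖M i j‖ ≤ singVal 1 M := by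
  refine le_sv one_pos (Submodule.span ℂ {EuclideanSpace.single j (1:ℂ)})
    (finrank_span_singleton (by simp)) ?_
  intro v hv
  obtain ⟨c, rfl⟩ := Submodule.mem_span_singleton.1 hv
  rw [map_smul, norm_smul, norm_smul]
  have h1 : (Matrix.toEuclideanLin M (EuclideanSpace.single j 1)) i = M i j := by
    simp [Matrix.toLpLin_apply]
  have h2 := PiLp.norm_apply_le (Matrix.toEuclideanLin M (EuclideanSpace.single j 1)) i
  rw [h1] at h2
  simp only [EuclideanSpace.norm_single, norm_one, mul_one]
  nlinarith [norm_nonneg c]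

/-- coordinate inclusion -/
def incl (d k : ℕ) : (Fin k → ℂ) →ₗ[ℂ] (Fin d → ℂ) where
  toFun u i := if h : i.val < k then u ⟨i.val, h⟩ else 0
  map_add' u v := by ext i; by_cases h : i.val < k <;> simp [h]
  map_smul' c v := by ext i; by_cases h : i.val < k <;> simp [h]

theorem incl_inj {d k : ℕ} (hk : k ≤ d) : Function.Injective (incl d k) := by
  intro u v h
  ext i
  have := congrFun h ⟨i.val, i.2.trans_le hk⟩
  simpa [incl] using this

theorem incl_zero {d k : ℕ} (u : Fin k → ℂ) (i : Fin d) (h : k ≤ i.val) : incl d k u i = 0 := by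
  simp [incl, not_lt.2 h]

theorem sv_nonneg {d k : ℕ} (hk : 0 < k) (hkd : k ≤ d) (M : Matrix (Fin d) (Fin d) ℂ) : 0 ≤ singVal k M := by
  refine le_sv_map hk ((WithLp.linearEquiv 2 ℂ (Fin d → ℂ)).symm.toLinearMap ∘ₗ incl d k) ?_ ?_
  · exact (WithLp.linearEquiv 2 ℂ (Fin d → ℂ)).symm.injective.comp (incl_inj hkd)
  · intro u; simp

theorem sv_le_one {d k : ℕ} (hk : 0 < k) (hkd : k ≤ d) (M : Matrix (Fin d) (Fin d) ℂ) :
    singVal k M ≤ singVal 1 M := by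
  refine Real.sSup_le ?_ (sv_nonneg one_pos (by omega) M)
  rintro t ⟨V, hV, ht⟩
  obtain ⟨v, hv, hv0⟩ := exists_ne_zero hk V hV
  refine le_sv one_pos (Submodule.span ℂ {v}) (finrank_span_singleton hv0) ?_
  intro w hw
  exact ht w ((Submodule.span_singleton_le_iff_mem v V).2 hv hw)

theorem perAn_ae (g : perAn) (hg : g ≠ 0) : ∀ᵐ x : ℝ ∂(volume.restrict (Set.Ioc (0:ℝ) 1)), g.1 x ≠ 0 := by
  obtain ⟨x, hx⟩ : ∃ x, g.1 x ≠ 0 := by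
    by_contra! h
    exact hg (Subtype.ext (funext h))
  have h := (perAn_anal g).preimage_zero_mem_codiscrete hx
  have h2 := ae_restrict_le_codiscreteWithin (μ := (volume : Measure ℝ)) MeasurableSet.univ h
  rw [Measure.restrict_univ] at h2
  exact ae_restrict_of_ae h2

theorem perAn_log_int (g : perAn) : Integrable (fun x => Real.log ‖g.1 x‖) (volume.restrict (Set.Ioc (0:ℝ) 1)) := by
  have h : MeromorphicOn g.1 (Set.uIcc 0 1) := fun x _ => (g.2.2 x).meromorphicAt
  have := h.intervalIntegrable_log_norm
  rwa [intervalIntegrable_iff_integrableOn_Ioc_of_le zero_le_one] at this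

theorem perAn_shift_int (g : perAn) (a : ℝ) :
    ∫ x in Set.Ioc (0:ℝ) 1, Real.log ‖g.1 (x + a)‖ = ∫ x in Set.Ioc (0:ℝ) 1, Real.log ‖g.1 x‖ := by
  rw [← intervalIntegral.integral_of_le zero_le_one, ← intervalIntegral.integral_of_le zero_le_one,
    intervalIntegral.integral_comp_add_right (fun x => Real.log ‖g.1 x‖)]
  have hp : Function.Periodic (fun x => Real.log ‖g.1 x‖) 1 := fun x => by simp [g.2.1 x]
  have := hp.intervalIntegral_add_eq a 0
  simpa [add_comm] using this

theorem tau_ne_zero (g : perAn) (hg : g ≠ 0) (a : ℝ) : tau a g ≠ 0 := by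
  intro h
  apply hg
  ext x
  have := congrFun (congrArg Subtype.val h) (x - a)
  simpa [tau] using this

theorem LBd_not {d : ℕ} (hd : 0 < d) (α : ℝ) (A : ℝ → Matrix (Fin d) (Fin d) ℂ) (h : LBd α A) :
    ¬ HasLyapunovExp α A 1 ⊥ := by
  obtain ⟨c, hc, m, hm, g, hg, hb⟩ := h
  intro hL
  set I : ℝ := ∫ x in Set.Ioc (0:ℝ) 1, Real.log ‖g.1 x‖ with hI
  set μ := (volume.restrict (Set.Ioc (0:ℝ) 1)) with hμ
  have key : ∀ n : ℕ, (((m : ℝ)⁻¹ * (Real.log c + n * I) : ℝ) : EReal) ≤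
      elogIntegral μ (fun x => singVal 1 (matIter α A n x)) := by
    intro n
    let h : ℝ → ℝ := fun x => (c * ∏ i ∈ Finset.range n, ‖g.1 (x + i * α)‖) ^ ((m : ℝ)⁻¹)
    have hae : ∀ᵐ x ∂μ, ∀ i : ℕ, g.1 (x + i * α) ≠ 0 :=
      ae_all_iff.2 fun i => perAn_ae (tau (i * α) g) (tau_ne_zero g hg _)
    have hlog : (fun x => (m : ℝ)⁻¹ * (Real.log c + ∑ i ∈ Finset.range n, Real.log ‖g.1 (x + i * α)‖))
        =ᵐ[μ] fun x => Real.log (h x) := by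
      filter_upwards [hae] with x hx
      have hp : 0 < ∏ i ∈ Finset.range n, ‖g.1 (x + i * α)‖ :=
        Finset.prod_pos fun i _ => norm_pos_iff.2 (hx i)
      simp only [h]
      rw [Real.log_rpow (mul_pos hc hp), Real.log_mul hc.ne' hp.ne', Real.log_prod]
      exact fun i _ => (norm_pos_iff.2 (hx i)).ne'
    have hsi : ∀ i ∈ Finset.range n, Integrable (fun x => Real.log ‖g.1 (x + i * α)‖) μ :=
      fun i _ => perAn_log_int (tau (i * α) g)
    have hint : Integrable (fun x => (m : ℝ)⁻¹ * (Real.log c + ∑ i ∈ Finset.range n, Real.log ‖g.1 (x + i * α)‖)) μ :=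
      ((integrable_const _).add (integrable_finsetSum _ hsi)).const_mul _
    have hh0 : μ {x | h x = 0} = 0 := by
      have : ∀ᵐ x ∂μ, h x ≠ 0 := by
        filter_upwards [hae] with x hx
        have hp : 0 < ∏ i ∈ Finset.range n, ‖g.1 (x + i * α)‖ :=
          Finset.prod_pos fun i _ => norm_pos_iff.2 (hx i)
        exact (Real.rpow_pos_of_pos (mul_pos hc hp) _).ne'
      simpa [ae_iff] using this
    have he := elog_eq μ h hh0 (hint.congr hlog)
    have hval : ∫ x, Real.log (h x) ∂μ = (m : ℝ)⁻¹ * (Real.log c + n * I) := by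
      rw [← integral_congr_ae hlog, integral_const_mul, integral_add (integrable_const _) (integrable_finsetSum _ hsi),
        integral_finsetSum _ hsi]
      have : ∀ i : ℕ, ∫ x, Real.log ‖g.1 (x + i * α)‖ ∂μ = I := fun i => perAn_shift_int g _
      simp [this]
    rw [← hval, ← he]
    refine elog_mono _ _ _ (fun x => ?_) (fun x => ?_)
    · have : 0 ≤ ∏ i ∈ Finset.range n, ‖g.1 (x + i * α)‖ := Finset.prod_nonneg fun i _ => norm_nonneg _
      exact Real.rpow_nonneg (by positivity) _
    · have h1 := hb n x _ (entry_le_sv (matIter α A n x))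
      have : 0 ≤ ∏ i ∈ Finset.range n, ‖g.1 (x + i * α)‖ := Finset.prod_nonneg fun i _ => norm_nonneg _
      have h2 := Real.rpow_le_rpow (by positivity) h1 (by positivity : 0 ≤ (m : ℝ)⁻¹)
      rwa [Real.pow_rpow_inv_natCast (sv_nonneg one_pos hd _) hm.ne'] at h2
  have hlt := (hL.eventually (gt_mem_nhds (EReal.bot_lt_coe ((m : ℝ)⁻¹ * (-|Real.log c| + I))))).and (eventually_ge_atTop 1)
  obtain ⟨n, hn, hn1⟩ := hlt.exists
  refine absurd hn (not_lt.2 ?_)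
  refine le_trans ?_ (mul_le_mul_of_nonneg_left (key n) (by exact_mod_cast (by positivity : (0:ℝ) ≤ (n : ℝ)⁻¹)))
  rw [← EReal.coe_mul, EReal.coe_le_coe_iff]
  have hn1' : (1 : ℝ) ≤ n := by exact_mod_cast hn1
  have : (n : ℝ)⁻¹ * ((m : ℝ)⁻¹ * (Real.log c + n * I)) = (m : ℝ)⁻¹ * ((n : ℝ)⁻¹ * Real.log c + I) := by
    field_simp
  rw [this]
  refine mul_le_mul_of_nonneg_left ?_ (by positivity)
  have h3 : (n : ℝ)⁻¹ ≤ 1 := inv_le_one_of_one_le₀ hn1'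
  have h4 : 0 ≤ (n : ℝ)⁻¹ := by positivity
  have h5 := neg_abs_le (Real.log c)
  nlinarith [abs_nonneg (Real.log c)]

open MeasureTheory Filter Topology

/-- triangular data -/
structure TriD {d : ℕ} (B : ℝ → Matrix (Fin d) (Fin d) ℂ) (l : Fin d → ℝ) (K : ℝ) : Prop where
  low : ∀ x i j, j < i → B x i j = 0
  diag : ∀ x i, ‖B x i i‖ = Real.exp (l i)
  up : ∀ x i j, i < j → ‖B x i j‖ ≤ K
  pos : 0 < K
  anti : Antitone l

theorem tri_off {d : ℕ} {B : ℝ → Matrix (Fin d) (Fin d) ℂ} {l : Fin d → ℝ} {K : ℝ} (h : TriD B l K)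
    {s : ℝ} (hs : 0 < s) (hs1 : s ≤ 1) (x : ℝ) (w : Fin d → ℂ) (r : ℝ) (hr : 0 ≤ r) (i : Fin d)
    (hw : ∀ j, i < j → ‖w j‖ ≤ r * s ^ j.val) :
    ‖((B x).mulVec w) i - B x i i * w i‖ ≤ d * K * s * (r * s ^ i.val) := by
  have h1 : ((B x).mulVec w) i - B x i i * w i = ∑ j ∈ Finset.univ.erase i, B x i j * w j := by
    rw [Matrix.mulVec, dotProduct, ← Finset.add_sum_erase _ _ (Finset.mem_univ i)]
    ring
  rw [h1]
  have hK := h.pos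
  calc ‖∑ j ∈ Finset.univ.erase i, B x i j * w j‖ ≤ ∑ j ∈ Finset.univ.erase i, ‖B x i j * w j‖ := norm_sum_le _ _
    _ ≤ ∑ j ∈ Finset.univ.erase i, K * s * (r * s ^ i.val) := by
        refine Finset.sum_le_sum fun j hj => ?_
        rw [norm_mul]
        rcases lt_or_gt_of_ne (Finset.ne_of_mem_erase hj) with hji | hij
        · rw [h.low x i j hji]; simp; positivity
        · calc ‖B x i j‖ * ‖w j‖ ≤ K * (r * s ^ j.val) :=
                mul_le_mul (h.up x i j hij) (hw j hij) (norm_nonneg _) hK.le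
            _ ≤ K * (r * s ^ (i.val + 1)) := by
                have : s ^ j.val ≤ s ^ (i.val + 1) := pow_le_pow_of_le_one hs.le hs1 (by have : i.val < j.val := hij; omega)
                gcongr
            _ = _ := by ring
    _ ≤ ∑ j : Fin d, K * s * (r * s ^ i.val) :=
        Finset.sum_le_sum_of_subset_of_nonneg (Finset.subset_univ _) fun _ _ _ => by positivity
    _ = _ := by simp; ring

theorem tri_up {d : ℕ} {B : ℝ → Matrix (Fin d) (Fin d) ℂ} {l : Fin d → ℝ} {K : ℝ} (h : TriD B l K)
    (α : ℝ) {s : ℝ} (hs : 0 < s) (hs1 : s ≤ 1) (k : Fin d) : ∀ (n : ℕ) (x : ℝ) (w : Fin d → ℂ) (r : ℝ), 0 ≤ r →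
    (∀ i, k ≤ i → ‖w i‖ ≤ r * s ^ i.val) → ∀ i, k ≤ i →
    ‖((matIter α B n x).mulVec w) i‖ ≤ (Real.exp (l k) + d * K * s) ^ n * r * s ^ i.val := by
  intro n
  have hK := h.pos
  induction n with
  | zero => intro x w r hr hw i hi; simpa [matIter] using hw i hi
  | succ n ih =>
    intro x w r hr hw i hi
    rw [matIter, ← Matrix.mulVec_mulVec]
    refine (ih (x + α) ((B x).mulVec w) ((Real.exp (l k) + d * K * s) * r) (by positivity) ?_ i hi).trans (le_of_eq (by ring))
    intro i hi
    have h1 := tri_off h hs hs1 x w r hr i (fun j hj => hw j (hi.trans hj.le))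
    have h2 : ‖B x i i * w i‖ ≤ Real.exp (l k) * (r * s ^ i.val) := by
      rw [norm_mul, h.diag]
      exact mul_le_mul (Real.exp_le_exp.2 (h.anti hi)) (hw i hi) (norm_nonneg _) (Real.exp_pos _).le
    have h3 := norm_le_norm_add_norm_sub (B x i i * w i) (((B x).mulVec w) i)
    rw [norm_sub_rev] at h3
    linarith

theorem tri_low {d : ℕ} {B : ℝ → Matrix (Fin d) (Fin d) ℂ} {l : Fin d → ℝ} {K : ℝ} (h : TriD B l K)
    (α : ℝ) {s : ℝ} (hs : 0 < s) (hs1 : s ≤ 1) (k : Fin d) (hpos : 0 < Real.exp (l k) - d * K * s) :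
    ∀ (n : ℕ) (x : ℝ) (w : Fin d → ℂ) (r : ℝ), 0 < r →
    (∀ i, k < i → w i = 0) → (∃ i : Fin d, r * s ^ i.val ≤ ‖w i‖) →
    ∃ i : Fin d, (Real.exp (l k) - d * K * s) ^ n * r * s ^ i.val ≤ ‖((matIter α B n x).mulVec w) i‖ := by
  intro n
  have hK := h.pos
  induction n with
  | zero => intro x w r hr hw hi; simpa [matIter] using hi
  | succ n ih =>
    intro x w r hr hw hi
    obtain ⟨i0, hi0⟩ := hi
    rw [matIter, ← Matrix.mulVec_mulVec]
    have : Nonempty (Fin d) := ⟨k⟩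
    obtain ⟨i, hmax⟩ := Finite.exists_max (fun i : Fin d => ‖w i‖ / s ^ i.val)
    set r' := ‖w i‖ / s ^ i.val with hr'
    have hwi : ‖w i‖ = r' * s ^ i.val := by rw [hr']; field_simp
    have hrr : r ≤ r' := ((le_div_iff₀ (by positivity)).2 hi0).trans (hmax i0)
    have hr'0 : 0 < r' := hr.trans_le hrr
    have hik : i ≤ k := by
      by_contra hcon
      have := hw i (not_le.1 hcon)
      rw [hr', this] at hr'0
      simp at hr'0
    obtain ⟨j, hj⟩ := ih (x + α) ((B x).mulVec w) ((Real.exp (l k) - d * K * s) * r) (by positivity) (by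
      intro i hi
      rw [Matrix.mulVec, dotProduct]
      refine Finset.sum_eq_zero fun j _ => ?_
      rcases lt_or_ge j i with hji | hij
      · rw [h.low x i j hji, zero_mul]
      · rw [hw j (hi.trans_le hij), mul_zero]) ⟨i, by
        have h1 := tri_off h hs hs1 x w r' hr'0.le i (fun j hj => (div_le_iff₀ (by positivity)).1 (hmax j))
        have h2 : Real.exp (l k) * (r' * s ^ i.val) ≤ ‖B x i i * w i‖ := by
          rw [norm_mul, h.diag, hwi]
          exact mul_le_mul_of_nonneg_right (Real.exp_le_exp.2 (h.anti hik)) (by positivity)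
        have h3 := norm_le_norm_add_norm_sub (((B x).mulVec w) i) (B x i i * w i)
        have h4 : (Real.exp (l k) - d * K * s) * r * s ^ i.val ≤ (Real.exp (l k) - d * K * s) * r' * s ^ i.val := by
          gcongr
        nlinarith⟩
    exact ⟨j, le_trans (le_of_eq (by ring)) hj⟩

theorem mulVec_le {d : ℕ} {X : Matrix (Fin d) (Fin d) ℂ} {a b : ℝ} (ha : 0 ≤ a)
    (hX : ∀ i j, ‖X i j‖ ≤ a) {y : Fin d → ℂ} (hy : ∀ j, ‖y j‖ ≤ b) (i : Fin d) :
    ‖(X.mulVec y) i‖ ≤ d * a * b := by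
  rw [Matrix.mulVec, dotProduct]
  refine (norm_sum_le _ _).trans ?_
  calc ∑ k, ‖X i k * y k‖ ≤ ∑ k : Fin d, a * b := by
        refine Finset.sum_le_sum fun k _ => ?_
        rw [norm_mul]
        exact mul_le_mul (hX _ _) (hy _) (norm_nonneg _) ha
    _ = _ := by simp; ring

theorem euc_le {d : ℕ} (v : EuclideanSpace ℂ (Fin d)) {b : ℝ} (hb : 0 ≤ b) (h : ∀ i, ‖v i‖ ≤ b) : ‖v‖ ≤ d * b := by
  rw [EuclideanSpace.norm_eq]
  apply Real.sqrt_le_iff.2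
  refine ⟨by positivity, ?_⟩
  calc ∑ i, ‖v i‖ ^ 2 ≤ ∑ i : Fin d, b ^ 2 := Finset.sum_le_sum fun i _ => by
        have := h i; gcongr
    _ = d * b ^ 2 := by simp
    _ ≤ (d * b) ^ 2 := by
        rw [mul_pow]
        refine mul_le_mul_of_nonneg_right ?_ (by positivity)
        have : (d : ℕ) ≤ d ^ 2 := Nat.le_self_pow (by norm_num) d
        exact_mod_cast this

theorem sv_upper {d : ℕ} {A B P Q : ℝ → Matrix (Fin d) (Fin d) ℂ} {l : Fin d → ℝ} {K K1 : ℝ} (h : TriD B l K)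
    (α : ℝ) (hQP : ∀ x, Q x * P x = 1) (hA : ∀ x, A x = P (x + α) * B x * Q x) (hK1 : 0 < K1)
    (hP : ∀ x i j, ‖P x i j‖ ≤ K1) (hQ : ∀ x i j, ‖Q x i j‖ ≤ K1) (k : Fin d) (δ : ℝ) (hδ : 0 < δ) :
    ∃ C : ℝ, 0 < C ∧ ∀ n x, singVal (k.val + 1) (matIter α A n x) ≤ C * Real.exp (l k + δ) ^ n := by
  have hd : 0 < d := k.pos
  have hd' : (0:ℝ) < d := by exact_mod_cast hd
  have hK := h.pos
  set η := Real.exp (l k + δ) - Real.exp (l k) with hη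
  have hη0 : 0 < η := sub_pos.2 (Real.exp_lt_exp.2 (by linarith))
  obtain ⟨s, hs, hs1, hsη⟩ : ∃ s : ℝ, 0 < s ∧ s ≤ 1 ∧ d * K * s ≤ η := by
    refine ⟨min 1 (η / (d * K)), by positivity, min_le_left _ _, ?_⟩
    calc d * K * min 1 (η / (d * K)) ≤ d * K * (η / (d * K)) := by gcongr; exact min_le_right _ _
      _ = η := by field_simp
  refine ⟨d * (d * K1 * (d * K1 / s ^ d)), by positivity, fun n x => ?_⟩
  refine sv_le (by positivity) fun V hV => ?_
  let φ : V →ₗ[ℂ] (Fin k.val → ℂ) :=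
    { toFun := fun v i => ((matIter α B n x).mulVec ((Q x).mulVec (WithLp.ofLp v.1))) ⟨i.val, i.2.trans k.2⟩
      map_add' := fun u v => by ext i; simp [Matrix.mulVec_add]
      map_smul' := fun c v => by ext i; simp [Matrix.mulVec_smul] }
  have hker : LinearMap.ker φ ≠ ⊥ := LinearMap.ker_ne_bot_of_finrank_lt (by simp [hV])
  obtain ⟨v, hv, hv0⟩ := Submodule.exists_mem_ne_zero_of_ne_bot hker
  refine ⟨v.1, v.2, by simpa using hv0, ?_⟩
  have hA' := matIter_conj α A B P Q hQP hA n x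
  set y := (Q x).mulVec (WithLp.ofLp v.1) with hy
  have hyle : ∀ i, ‖y i‖ ≤ d * K1 * ‖v.1‖ := mulVec_le hK1.le (hQ x) (fun j => PiLp.norm_apply_le v.1 j)
  set r := d * K1 * ‖v.1‖ / s ^ d with hr
  have hr0 : 0 ≤ r := by positivity
  have hyr : ∀ i : Fin d, ‖y i‖ ≤ r * s ^ i.val := by
    intro i
    refine (hyle i).trans ?_
    have h1 : s ^ d ≤ s ^ i.val := pow_le_pow_of_le_one hs.le hs1 i.2.le
    calc d * K1 * ‖v.1‖ = r * s ^ d := by rw [hr]; field_simp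
      _ ≤ _ := by gcongr
  have hB := tri_up h α hs hs1 k n x y r hr0 (fun i _ => hyr i)
  have hBall : ∀ i, ‖((matIter α B n x).mulVec y) i‖ ≤ Real.exp (l k + δ) ^ n * r := by
    intro i
    rcases lt_or_ge i k with hik | hki
    · have : ((matIter α B n x).mulVec y) i = 0 := by
        have := congrFun (LinearMap.mem_ker.1 hv) ⟨i.val, hik⟩
        exact this
      rw [this, norm_zero]; positivity
    · refine (hB i hki).trans ?_
      have h1 : s ^ i.val ≤ 1 := pow_le_one₀ hs.le hs1
      have h2 : (Real.exp (l k) + d * K * s) ^ n ≤ Real.exp (l k + δ) ^ n := by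
        refine pow_le_pow_left₀ (by positivity) ?_ n
        linarith
      calc _ ≤ Real.exp (l k + δ) ^ n * r * 1 := by gcongr
        _ = _ := by ring
  have hfin : ∀ i, ‖(Matrix.toEuclideanLin (matIter α A n x) v.1) i‖ ≤ d * K1 * (Real.exp (l k + δ) ^ n * r) := by
    intro i
    have : (Matrix.toEuclideanLin (matIter α A n x) v.1) i =
        ((P (x + n * α)).mulVec ((matIter α B n x).mulVec y)) i := by
      rw [hA', hy, Matrix.mulVec_mulVec, Matrix.mulVec_mulVec]
      simp [Matrix.toLpLin_apply, Matrix.mul_assoc]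
    rw [this]
    exact mulVec_le hK1.le (hP _) hBall i
  refine (euc_le _ (by positivity) hfin).trans (le_of_eq ?_)
  rw [hr]; ring

theorem sv_lower {d : ℕ} {A B P Q : ℝ → Matrix (Fin d) (Fin d) ℂ} {l : Fin d → ℝ} {K K1 : ℝ} (h : TriD B l K)
    (α : ℝ) (hQP : ∀ x, Q x * P x = 1) (hA : ∀ x, A x = P (x + α) * B x * Q x) (hK1 : 0 < K1)
    (hP : ∀ x i j, ‖P x i j‖ ≤ K1) (hQ : ∀ x i j, ‖Q x i j‖ ≤ K1) (k : Fin d) (δ : ℝ) (hδ : 0 < δ) :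
    ∃ C : ℝ, 0 < C ∧ ∀ n x, C * Real.exp (l k - δ) ^ n ≤ singVal (k.val + 1) (matIter α A n x) := by
  have hd : 0 < d := k.pos
  have hd' : (0:ℝ) < d := by exact_mod_cast hd
  have hK := h.pos
  set η := Real.exp (l k) - Real.exp (l k - δ) with hη
  have hη0 : 0 < η := sub_pos.2 (Real.exp_lt_exp.2 (by linarith))
  obtain ⟨s, hs, hs1, hsη⟩ : ∃ s : ℝ, 0 < s ∧ s ≤ 1 ∧ d * K * s ≤ η := by
    refine ⟨min 1 (η / (d * K)), by positivity, min_le_left _ _, ?_⟩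
    calc d * K * min 1 (η / (d * K)) ≤ d * K * (η / (d * K)) := by gcongr; exact min_le_right _ _
      _ = η := by field_simp
  have hexp := Real.exp_pos (l k - δ)
  have hge : Real.exp (l k - δ) ≤ Real.exp (l k) - d * K * s := by linarith
  refine ⟨s ^ d / (d * K1) / (d * (d * K1)), by positivity, fun n x => ?_⟩
  have hPinj : Function.Injective (P x).mulVec := by
    intro a b hab
    have := congrArg (Q x).mulVec hab
    simpa [Matrix.mulVec_mulVec, hQP] using this
  refine le_sv_map (Nat.succ_pos _) ((WithLp.linearEquiv 2 ℂ (Fin d → ℂ)).symm.toLinearMap ∘ₗ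
    (P x).mulVecLin ∘ₗ incl d (k.val + 1)) ?_ ?_
  · exact (WithLp.linearEquiv 2 ℂ (Fin d → ℂ)).symm.injective.comp (hPinj.comp (incl_inj k.2))
  · intro u
    have hA' := matIter_conj α A B P Q hQP hA n x
    set w := incl d (k.val + 1) u with hw
    set f : EuclideanSpace ℂ (Fin d) := WithLp.toLp 2 ((P x).mulVec w) with hf
    change _ * ‖f‖ ≤ ‖Matrix.toEuclideanLin (matIter α A n x) f‖
    have hfle : ‖f‖ ≤ d * (d * K1 * ‖w‖) :=
      euc_le f (by positivity) (mulVec_le hK1.le (hP x) (fun j => norm_le_pi_norm w j))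
    have hval : ∀ i, ((matIter α B n x).mulVec w) i =
        ((Q (x + n * α)).mulVec (WithLp.ofLp (Matrix.toEuclideanLin (matIter α A n x) f))) i := by
      intro i
      have e : WithLp.ofLp (Matrix.toEuclideanLin (matIter α A n x) f) = (matIter α A n x).mulVec ((P x).mulVec w) := by
        simp [Matrix.toLpLin_apply, hf]
      rw [e, hA', Matrix.mulVec_mulVec, Matrix.mulVec_mulVec]
      congr 2
      calc matIter α B n x = (Q (x + n * α) * P (x + n * α)) * matIter α B n x * (Q x * P x) := by
            rw [hQP, hQP]; simp
        _ = _ := by simp only [Matrix.mul_assoc]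
    have hle : ∀ i, ‖((matIter α B n x).mulVec w) i‖ ≤ d * K1 * ‖Matrix.toEuclideanLin (matIter α A n x) f‖ := by
      intro i
      rw [hval]
      exact mulVec_le hK1.le (hQ _) (fun j => PiLp.norm_apply_le _ j) i
    rcases eq_or_ne w 0 with hw0 | hw0
    · have : f = 0 := by rw [hf, hw0]; simp
      rw [this]; simp
    · have hr : 0 < ‖w‖ := norm_pos_iff.2 hw0
      have : Nonempty (Fin d) := ⟨k⟩
      obtain ⟨i0, hi0⟩ := Finite.exists_max (fun i : Fin d => ‖w i‖)
      have hi0' : ‖w‖ ≤ ‖w i0‖ := (pi_norm_le_iff_of_nonneg (norm_nonneg _)).2 hi0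
      obtain ⟨i, hi⟩ := tri_low h α hs hs1 k (hexp.trans_le hge) n x w ‖w‖ hr
        (fun i hi => incl_zero u i hi) ⟨i0, le_trans (mul_le_of_le_one_right hr.le (pow_le_one₀ hs.le hs1)) hi0'⟩
      have h1 := hi.trans (hle i)
      have h2 : Real.exp (l k - δ) ^ n * ‖w‖ * s ^ d ≤ (Real.exp (l k) - d * K * s) ^ n * ‖w‖ * s ^ i.val := by
        have e1 : s ^ d ≤ s ^ i.val := pow_le_pow_of_le_one hs.le hs1 i.2.le
        have e2 : Real.exp (l k - δ) ^ n ≤ (Real.exp (l k) - d * K * s) ^ n := pow_le_pow_left₀ hexp.le hge n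
        have e3 : 0 ≤ (Real.exp (l k) - d * K * s) ^ n := pow_nonneg (hexp.le.trans hge) n
        exact mul_le_mul (mul_le_mul_of_nonneg_right e2 hr.le) e1 (by positivity) (mul_nonneg e3 hr.le)
      have h3 := h2.trans h1
      calc s ^ d / (d * K1) / (d * (d * K1)) * Real.exp (l k - δ) ^ n * ‖f‖
          ≤ s ^ d / (d * K1) / (d * (d * K1)) * Real.exp (l k - δ) ^ n * (d * (d * K1 * ‖w‖)) := by gcongr
        _ = (Real.exp (l k - δ) ^ n * ‖w‖ * s ^ d) / (d * K1) := by field_simp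
        _ ≤ (d * K1 * ‖Matrix.toEuclideanLin (matIter α A n x) f‖) / (d * K1) := by gcongr
        _ = _ := by field_simp

theorem tri_lyap {d : ℕ} {A B P Q : ℝ → Matrix (Fin d) (Fin d) ℂ} {l : Fin d → ℝ} {K K1 : ℝ} (h : TriD B l K)
    (α : ℝ) (hQP : ∀ x, Q x * P x = 1) (hA : ∀ x, A x = P (x + α) * B x * Q x) (hK1 : 0 < K1)
    (hP : ∀ x i j, ‖P x i j‖ ≤ K1) (hQ : ∀ x i j, ‖Q x i j‖ ≤ K1) (k : Fin d) :
    HasLyapunovExp α A (k.val + 1) (l k : EReal) := by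
  refine lim_lemma _ _ ?_ ?_
  · intro δ hδ
    obtain ⟨C, hC, hle⟩ := sv_upper h α hQP hA hK1 hP hQ k δ hδ
    refine ⟨Real.log C, fun n => ?_⟩
    refine (elog_mono _ _ _ (fun x => sv_nonneg (Nat.succ_pos _) k.2 _) (hle n)).trans ?_
    rw [elog_const (by positivity), Real.log_mul (by positivity) (by positivity), Real.log_pow, Real.log_exp]
  · intro δ hδ
    obtain ⟨C, hC, hle⟩ := sv_lower h α hQP hA hK1 hP hQ k δ hδ
    refine ⟨Real.log C, fun n => ?_⟩
    refine le_trans ?_ (elog_mono _ _ _ (fun x => ?_) (hle n))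
    · rw [elog_const (by positivity), Real.log_mul (by positivity) (by positivity), Real.log_pow, Real.log_exp]
    · positivity

open MeasureTheory Filter Topology

/-- If `L₁(α,A) = -∞` (in which case all the Lyapunov exponents
`L₁,…,L_d` are `-∞`), then there is an analytic 1-periodic `A'` such that for every
`ε ≠ 0` all Lyapunov exponents of `(α, A + εA')` are distinct:
`L₁ > L₂ > … > L_d`. In particular there are arbitrarily small analytic perturbations
with simple Lyapunov spectrum. -/
theorem stmt_3 {d : ℕ} (α : ℝ) (A : ℝ → Matrix (Fin d) (Fin d) ℂ)
    (hA : AnalyticPeriodicMat A)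
    (hL1 : HasLyapunovExp α A 1 ⊥) :
    (∀ k : Fin d, HasLyapunovExp α A ((k : ℕ) + 1) ⊥) ∧
    ∃ A' : ℝ → Matrix (Fin d) (Fin d) ℂ,
      AnalyticPeriodicMat A' ∧
      ∀ ε : ℝ, ε ≠ 0 →
        ∃ L : Fin d → EReal,
          (∀ k : Fin d,
            HasLyapunovExp α (fun x => A x + (ε : ℂ) • A' x) ((k : ℕ) + 1) (L k)) ∧
          StrictAnti L := by
  have hmono : ∀ k : Fin d, HasLyapunovExp α A ((k : ℕ) + 1) ⊥ := by
    intro k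
    refine tendsto_of_tendsto_of_tendsto_of_le_of_le tendsto_const_nhds hL1 (fun n => bot_le) (fun n => ?_)
    refine mul_le_mul_of_nonneg_left ?_ (EReal.coe_nonneg.2 (by positivity : (0:ℝ) ≤ (n : ℝ)⁻¹))
    exact elog_mono _ _ _ (fun x => sv_nonneg (Nat.succ_pos _) k.2 _)
      (fun x => sv_le_one (Nat.succ_pos _) k.2 _)
  refine ⟨hmono, ?_⟩
  let M : Matrix (Fin d) (Fin d) perAn := fun i j =>
    ⟨fun x => A x i j, fun x => congrFun (congrFun (hA.1 x) i) j, fun x => hA.2 x i j⟩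
  have hM : evM M = A := rfl
  have htri : ∃ U V : Matrix (Fin d) (Fin d) perAn, V * U = 1 ∧
      ∀ i j, j ≤ i → (V.map (tau α) * M * U) i j = 0 := by
    rcases dichotomy α d M with h | h
    · exact h
    · rcases Nat.eq_zero_or_pos d with rfl | hd
      · exact ⟨1, 1, by simp, fun i => i.elim0⟩
      · exact absurd hL1 (LBd_not hd α A (hM ▸ h))
  obtain ⟨U, V, hVU, hT⟩ := htri
  set T := V.map (tau α) * M * U with hTdef
  let D : Matrix (Fin d) (Fin d) perAn := Matrix.diagonal fun i => perC (Real.exp (-(i.val : ℝ)))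
  let A'' : Matrix (Fin d) (Fin d) perAn := U.map (tau α) * D * V
  have hUV : U * V = 1 := mul_eq_one_comm.1 hVU
  have hUV' : U.map (tau α) * V.map (tau α) = 1 := by
    rw [← Matrix.map_mul, hUV]
    exact Matrix.map_one _ (map_zero _) (map_one _)
  have hMT : M = U.map (tau α) * T * V := by
    calc M = (U.map (tau α) * V.map (tau α)) * M * (U * V) := by rw [hUV, hUV']; simp
      _ = _ := by rw [hTdef]; simp only [Matrix.mul_assoc]
  refine ⟨evM A'', ⟨fun x => ?_, fun x i j => (A'' i j).2.2 x⟩, ?_⟩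
  · ext i j
    exact (A'' i j).2.1 x
  intro ε hε
  obtain ⟨KT, hKT, hTb⟩ := evM_bdd T
  obtain ⟨KU, hKU, hUb⟩ := evM_bdd U
  obtain ⟨KV, hKV, hVb⟩ := evM_bdd V
  let l : Fin d → ℝ := fun i => Real.log |ε| - i.val
  let B : ℝ → Matrix (Fin d) (Fin d) ℂ := fun x => evM T x + (ε : ℂ) • evM D x
  have hDd : ∀ x i, evM D x i i = (Real.exp (-(i.val : ℝ)) : ℂ) := fun x i => by
    simp [evM, D, evr, perC]
  have hDo : ∀ x i j, i ≠ j → evM D x i j = 0 := fun x i j hij => by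
    simp [evM, D, hij]
  have hT0 : ∀ x i j, j ≤ i → evM T x i j = 0 := fun x i j hij => by
    simp [evM, hT i j hij]
  have hB : TriD B l KT :=
    { low := fun x i j hij => by simp [B, hT0 x i j hij.le, hDo x i j hij.ne']
      diag := fun x i => by
        simp only [B, Matrix.add_apply, Matrix.smul_apply, hT0 x i i le_rfl, hDd, zero_add, l, smul_eq_mul, norm_mul,
          Complex.norm_real, Real.norm_eq_abs, Real.abs_exp, sub_eq_add_neg, Real.exp_add,
          Real.exp_log (abs_pos.2 hε)]
      up := fun x i j hij => by
        simpa [B, hDo x i j hij.ne] using hTb x i j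
      pos := hKT
      anti := fun i j hij => by
        have : (i.val : ℝ) ≤ j.val := by exact_mod_cast hij
        simp only [l]; linarith }
  refine ⟨fun k => (l k : EReal), fun k => ?_, ?_⟩
  · refine tri_lyap (P := evM U) (Q := evM V) (K1 := KU + KV) hB α (fun x => by rw [← evM_mul, hVU, evM_one])
      (fun x => ?_) (by positivity) (fun x i j => (hUb x i j).trans (by linarith))
      (fun x i j => (hVb x i j).trans (by linarith)) k
    have e1 : A x = evM U (x + α) * evM T x * evM V x := by
      rw [← hM]
      conv_lhs => rw [hMT]
      rw [evM_mul, evM_mul, evM_tau]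
    have e2 : evM A'' x = evM U (x + α) * evM D x * evM V x := by
      simp only [A'']
      rw [evM_mul, evM_mul, evM_tau]
    rw [e1, e2]
    simp only [B, Matrix.mul_add, Matrix.add_mul, Matrix.mul_smul, Matrix.smul_mul]
  · intro i j hij
    have : (i.val : ℝ) < j.val := by exact_mod_cast hij
    have h2 : l j < l i := by simp only [l]; linarith
    exact EReal.coe_lt_coe_iff.2 h2
end

section
/- Let A : ℝ → ℂ^{d×d} be real analytic and 1-periodic and let α ∈ ℝ be such that L_{k+1}(α,A) = −∞ and L_k(α,A) > −∞ for some 1 ≤ k < d. Then there exists a real analytic 1-periodic map U : ℝ → U(d) into the unitary group such that B(x) := U(x+α)^{−1} A(x) U(x) has the 2×2 block form B(x) = [[a(x), b(x)], [0, d(x)]], where a(x) is an upper triangular (d−k)×(d−k) matrix with zeros on and below the diagonal (so the cocycle (α,a) is nilpotent) and d(x) is a k×k matrix that is invertible for all but finitely many x in a period. In particular, rank A_{d−k}(x) ≤ k for all x. -/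
open MeasureTheory Filter Topology

open scoped ContDiff

def AP {F : Type*} [NormedAddCommGroup F] [NormedSpace ℝ F] (f : ℝ → F) : Prop :=
  ContDiff ℝ ω f ∧ Function.Periodic f 1

lemma AP.an {F : Type*} [NormedAddCommGroup F] [NormedSpace ℝ F] {f : ℝ → F}
    (h : AP f) : AnalyticOnNhd ℝ f Set.univ := contDiff_omega_iff_analyticOnNhd.1 h.1

lemma contDiff_of_an {F : Type*} [NormedAddCommGroup F] [NormedSpace ℝ F] {f : ℝ → F}
    (h : ∀ x, AnalyticAt ℝ f x) : ContDiff ℝ ω f :=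
  contDiff_omega_iff_analyticOnNhd.2 fun x _ => h x

lemma AP.zeros_finite {F : Type*} [NormedAddCommGroup F] [NormedSpace ℝ F] {f : ℝ → F}
    (h : AP f) (h0 : ∃ x, f x ≠ 0) : {x ∈ Set.Icc (0:ℝ) 1 | f x = 0}.Finite := by
  by_contra hinf
  obtain ⟨z, -, hz⟩ := Set.Infinite.exists_accPt_of_subset_isCompact hinf isCompact_Icc
    (fun x hx => hx.1)
  obtain ⟨x, hx⟩ := h0
  apply hx
  refine h.an.eqOn_zero_of_preconnected_of_frequently_eq_zero isPreconnected_univ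
    (Set.mem_univ z) ?_ (Set.mem_univ x)
  rw [accPt_iff_frequently_nhdsNE] at hz
  exact hz.mono fun y hy => hy.2

lemma AP.smul_zero' {F : Type*} [NormedAddCommGroup F] [NormedSpace ℂ F] [NormedSpace ℝ F]
    {h : ℝ → ℂ} {f : ℝ → F}
    (hh : AP h) (h0 : ∃ x, h x ≠ 0) (hf : ContDiff ℝ ω f) (H : ∀ x, h x • f x = 0) :
    ∀ x, f x = 0 := by
  rcases AnalyticOnNhd.eq_zero_or_eq_zero_of_smul_eq_zero hh.an
    (contDiff_omega_iff_analyticOnNhd.1 hf) (fun x _ => H x) isPreconnected_univ with h1 | h1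
  · obtain ⟨x, hx⟩ := h0
    exact absurd (h1 x (Set.mem_univ x)) hx
  · exact fun x => h1 x (Set.mem_univ x)

/-- The ring of analytic periodic functions. -/
def APRing : Subring (ℝ → ℂ) where
  carrier := {f | AP f}
  mul_mem' := fun {a b} ha hb => ⟨ha.1.mul hb.1, ha.2.mul hb.2⟩
  one_mem' := ⟨contDiff_const, fun x => rfl⟩
  add_mem' := fun {a b} ha hb => ⟨ha.1.add hb.1, ha.2.add hb.2⟩
  zero_mem' := ⟨contDiff_const, fun x => rfl⟩
  neg_mem' := fun {a} ha => ⟨ha.1.neg, fun x => by simp [ha.2 x]⟩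

instance : NoZeroDivisors APRing where
  eq_zero_or_eq_zero_of_mul_eq_zero := by
    rintro ⟨a, ha⟩ ⟨b, hb⟩ hab
    have hab' : ∀ x, a x • b x = 0 := fun x => congrFun (congrArg Subtype.val hab) x
    by_cases h0 : ∃ x, a x ≠ 0
    · right
      exact Subtype.ext (funext (AP.smul_zero' ha h0 hb.1 hab'))
    · left
      push Not at h0
      exact Subtype.ext (funext h0)

instance : IsDomain APRing := NoZeroDivisors.to_isDomain _

noncomputable def ez (x : ℝ) : ℂ := Complex.exp (2 * Real.pi * Complex.I * x)

lemma ez_contDiff : ContDiff ℝ ω ez := by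
  unfold ez
  have : ContDiff ℝ ω (fun x : ℝ => (x : ℂ)) := Complex.ofRealCLM.contDiff
  exact (contDiff_const.mul this).cexp

lemma ez_per : Function.Periodic ez 1 := by
  intro x
  unfold ez
  rw [Complex.exp_eq_exp_iff_exists_int]
  exact ⟨1, by push_cast; ring⟩

lemma ez_eq {x y : ℝ} : ez x = ez y ↔ ∃ n : ℤ, x = y + n := by
  unfold ez
  rw [Complex.exp_eq_exp_iff_exists_int]
  refine exists_congr fun n => ?_
  have h : (2 * Real.pi * Complex.I : ℂ) ≠ 0 := Complex.two_pi_I_ne_zero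
  rw [← Complex.ofReal_inj]
  push_cast
  constructor
  · intro h1
    apply mul_left_cancel₀ h
    rw [h1]; ring
  · intro h1
    rw [h1]; ring

lemma ez_local (z : ℝ) : ∃ q : ℝ → ℂ, AnalyticAt ℝ q z ∧ q z ≠ 0 ∧
    ∀ᶠ x in 𝓝 z, ez x - ez z = ((x - z : ℝ) : ℂ) * q x := by
  have han : AnalyticAt ℝ (fun x => ez x - ez z) z :=
    ((contDiff_omega_iff_analyticOnNhd.1 ez_contDiff) z (Set.mem_univ z)).sub analyticAt_const
  have hd : HasDerivAt (fun x => ez x - ez z) (ez z * (2 * Real.pi * Complex.I)) z := by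
    have h1 : HasDerivAt (fun x : ℝ => (2 * Real.pi * Complex.I : ℂ) * (x : ℂ))
        ((2 * Real.pi * Complex.I : ℂ) * 1) z :=
      (Complex.ofRealCLM.hasDerivAt).const_mul _
    have h2 := h1.cexp.sub_const (ez z)
    rw [mul_one] at h2
    exact h2
  have hne : ez z * (2 * Real.pi * Complex.I) ≠ 0 :=
    mul_ne_zero (Complex.exp_ne_zero _) Complex.two_pi_I_ne_zero
  have hnz : ¬ ∀ᶠ x in 𝓝 z, ez x - ez z = 0 := by
    intro h
    apply hne
    have h3 : HasDerivAt (fun x => ez x - ez z) 0 z :=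
      (hasDerivAt_const z (0:ℂ)).congr_of_eventuallyEq h
    exact hd.unique h3
  obtain ⟨n, g, hg, hgz, hev⟩ := (han.exists_eventuallyEq_pow_smul_nonzero_iff).2 hnz
  have hn : n = 1 := by
    rcases n with _ | _ | n
    · exfalso
      have := hev.self_of_nhds
      simp at this
      exact hgz this.symm
    · rfl
    · exfalso
      apply hne
      have h4 : HasDerivAt (fun x : ℝ => (x - z) ^ (n + 1 + 1) • g x)
        ((z - z) ^ (n + 2) • deriv g z + (((n + 1 + 1 : ℕ) : ℝ) * (z - z) ^ (n + 1) * 1) • g z) z := by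
        have h5 : HasDerivAt (fun x : ℝ => (x - z) ^ (n + 1 + 1))
          (((n + 1 + 1 : ℕ) : ℝ) * (z - z) ^ (n + 1) * 1) z := by
          have := ((hasDerivAt_id z).sub_const z).pow (n + 1 + 1)
          exact this
        exact h5.smul hg.differentiableAt.hasDerivAt
      have h6 := h4.congr_of_eventuallyEq hev
      rw [hd.unique h6]
      simp
  subst hn
  refine ⟨g, hg, hgz, hev.mono fun x hx => ?_⟩
  rw [hx]; simp

lemma remove_zero {F : Type*} [NormedAddCommGroup F] [NormedSpace ℂ F] {v : ℝ → F}
    (hv : AP v) (h0 : ∃ x, v x ≠ 0) (z : ℝ) :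
    ∃ (N : ℕ) (w : ℝ → F), AP w ∧ w z ≠ 0 ∧ ∀ x, v x = (ez x - ez z) ^ N • w x := by
  classical
  have hnz : ¬ ∀ᶠ x in 𝓝 z, v x = 0 := by
    intro h
    obtain ⟨x, hx⟩ := h0
    exact hx (hv.an.eqOn_zero_of_preconnected_of_eventuallyEq_zero isPreconnected_univ
      (Set.mem_univ z) h (Set.mem_univ x))
  obtain ⟨N, g, hg, hgz, hev⟩ :=
    ((hv.an z (Set.mem_univ z)).exists_eventuallyEq_pow_smul_nonzero_iff).2 hnz
  obtain ⟨q, hq, hqz, hqe⟩ := ez_local z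
  have hez : AnalyticOnNhd ℝ ez Set.univ := contDiff_omega_iff_analyticOnNhd.1 ez_contDiff
  set w : ℝ → F := fun x => if ez x = ez z then ((q z)⁻¹ ^ N) • g z
    else ((ez x - ez z)⁻¹ ^ N) • v x with hw
  have hper : Function.Periodic w 1 := by
    intro x
    simp only [hw, ez_per x, hv.2 x]
  have hqn : ∀ᶠ x in 𝓝 z, q x ≠ 0 := hq.continuousAt.eventually_ne hqz
  have hanz : AnalyticAt ℝ w z := by
    have h1 : AnalyticAt ℝ (fun x => ((q x)⁻¹ ^ N) • g x) z := ((hq.inv hqz).pow N).smul hg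
    refine h1.congr ?_
    filter_upwards [hev, hqe, hqn] with x h2 h3 h4
    simp only [hw]
    by_cases hxz : x = z
    · subst hxz; simp
    · have hne : ((x - z : ℝ) : ℂ) ≠ 0 := by
        rw [Complex.ofReal_ne_zero]; exact sub_ne_zero.2 hxz
      have h5 : ez x ≠ ez z := by
        intro h
        rw [h, sub_self] at h3
        exact mul_ne_zero hne h4 h3.symm
      rw [if_neg h5, h2, h3, ← Complex.coe_smul, smul_smul]
      congr 1
      push_cast at hne ⊢
      rw [← mul_pow]
      congr 1
      field_simp
  have hwz : w z ≠ 0 := by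
    simp only [hw, if_true]
    exact smul_ne_zero (pow_ne_zero _ (inv_ne_zero hqz)) hgz
  refine ⟨N, w, ⟨contDiff_of_an fun x => ?_, hper⟩, hwz, fun x => ?_⟩
  · by_cases h : ez x = ez z
    · obtain ⟨n, hn⟩ := ez_eq.1 h
      have h1 : w = fun y => w (y - n) := by
        funext y
        have := (hper.int_mul n).sub_eq y
        simpa using this.symm
      rw [h1]
      have h2 : AnalyticAt ℝ w (x - n) := by rw [hn]; simpa using hanz
      exact AnalyticAt.fun_comp (f := fun y : ℝ => y - n) h2 (analyticAt_id.sub analyticAt_const)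
    · have h1 : AnalyticAt ℝ (fun x => ((ez x - ez z)⁻¹ ^ N) • v x) x :=
        ((((hez x (Set.mem_univ x)).sub analyticAt_const).inv (sub_ne_zero.2 h)).pow N).smul
          (hv.an x (Set.mem_univ x))
      refine h1.congr ?_
      have : ∀ᶠ y in 𝓝 x, ez y ≠ ez z := (hez x (Set.mem_univ x)).continuousAt.eventually_ne h
      filter_upwards [this] with y hy
      simp only [hw, if_neg hy]
  · by_cases h : ez x = ez z
    · obtain ⟨n, hn⟩ := ez_eq.1 h
      have e1 : v x = v z := by
        rw [hn]; simpa using (hv.2.int_mul n) z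
      have e2 : w x = w z := by
        rw [hn]; simpa using (hper.int_mul n) z
      rw [e1, e2, h, sub_self, hev.self_of_nhds, sub_self]
      rcases N with _ | N
      · simp [hw]
      · simp
    · simp only [hw, if_neg h]
      rw [smul_smul, ← mul_pow, mul_inv_cancel₀ (sub_ne_zero.2 h), one_pow, one_smul]

lemma remove_all {F : Type*} [NormedAddCommGroup F] [NormedSpace ℂ F] (n : ℕ) :
    ∀ {v : ℝ → F} (_ : AP v) (_ : ∃ x, v x ≠ 0) (_ : {x ∈ Set.Ico (0:ℝ) 1 | v x = 0}.ncard ≤ n),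
    ∃ (h : ℝ → ℂ) (w : ℝ → F), AP h ∧ AP w ∧ (∀ x, w x ≠ 0) ∧ ∀ x, v x = h x • w x := by
  have hfin : ∀ {v : ℝ → F} (_ : AP v) (_ : ∃ x, v x ≠ 0),
      {x ∈ Set.Ico (0:ℝ) 1 | v x = 0}.Finite := fun hv h0 =>
    (hv.zeros_finite h0).subset fun x hx => ⟨Set.Ico_subset_Icc_self hx.1, hx.2⟩
  have hone : AP (fun _ : ℝ => (1:ℂ)) := ⟨contDiff_const, fun x => rfl⟩
  have base : ∀ {v : ℝ → F} (_ : AP v) (_ : {x ∈ Set.Ico (0:ℝ) 1 | v x = 0} = ∅),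
      ∀ x, v x ≠ 0 := by
    intro v hv he x hx
    have h1 : Int.fract x ∈ {x ∈ Set.Ico (0:ℝ) 1 | v x = 0} := by
      refine ⟨⟨Int.fract_nonneg x, Int.fract_lt_one x⟩, ?_⟩
      rw [← hx]
      have := (hv.2.int_mul ⌊x⌋).sub_eq x
      rw [mul_one] at this
      exact this
    rw [he] at h1
    exact h1
  induction n with
  | zero =>
    intro v hv h0 hc
    have he := (Set.ncard_eq_zero (hfin hv h0)).1 (Nat.le_zero.1 hc)
    exact ⟨fun _ => 1, v, hone, hv, base hv he, fun x => by simp⟩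
  | succ n ih =>
    intro v hv h0 hc
    by_cases he : {x ∈ Set.Ico (0:ℝ) 1 | v x = 0} = ∅
    · exact ⟨fun _ => 1, v, hone, hv, base hv he, fun x => by simp⟩
    obtain ⟨z, hz⟩ := Set.nonempty_iff_ne_empty.2 he
    obtain ⟨N, w, hw, hwz, hvw⟩ := remove_zero hv h0 z
    have hss : {x ∈ Set.Ico (0:ℝ) 1 | w x = 0} ⊂ {x ∈ Set.Ico (0:ℝ) 1 | v x = 0} := by
      refine ⟨fun x hx => ⟨hx.1, by rw [hvw, hx.2, smul_zero]⟩, fun hsub => ?_⟩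
      exact hwz (hsub hz).2
    have hlt := Set.ncard_lt_ncard hss (hfin hv h0)
    obtain ⟨h, u, hh, hu, hun, hwu⟩ := ih hw ⟨z, hwz⟩ (by omega)
    refine ⟨fun x => (ez x - ez z) ^ N * h x, u, ⟨?_, ?_⟩, hu, hun, fun x => ?_⟩
    · exact ((ez_contDiff.sub contDiff_const).pow N).mul hh.1
    · intro x; simp only [ez_per x, hh.2 x]
    · rw [hvw, hwu, smul_smul]

lemma contDiff_norm_E {d : ℕ} {f : ℝ → EuclideanSpace ℂ (Fin d)} (hf : ContDiff ℝ ω f)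
    (h : ∀ x, f x ≠ 0) : ContDiff ℝ ω (fun x => ‖f x‖) := by
  have h1 : ContDiff ℝ ω (fun x => (inner ℂ (f x) (f x)).re) :=
    Complex.reCLM.contDiff.comp (ContDiff.inner ℂ hf hf)
  have h2 : (fun x => ‖f x‖) = fun x => Real.sqrt ((inner ℂ (f x) (f x)).re) := by
    funext x
    have := inner_self_eq_norm_sq (𝕜 := ℂ) (f x)
    simp only [RCLike.re_to_complex] at this
    rw [this, Real.sqrt_sq (norm_nonneg _)]
  rw [h2]
  refine h1.sqrt fun x => ?_
  have := inner_self_eq_norm_sq (𝕜 := ℂ) (f x)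
  simp only [RCLike.re_to_complex] at this
  rw [this]
  exact pow_ne_zero _ (norm_ne_zero_iff.2 (h x))

lemma normalizeAP {d : ℕ} {v : ℝ → EuclideanSpace ℂ (Fin d)} (hv : AP v) (h0 : ∃ x, v x ≠ 0) :
    ∃ (h : ℝ → ℂ) (w : ℝ → EuclideanSpace ℂ (Fin d)), AP h ∧ (∃ x, h x ≠ 0) ∧ AP w ∧
      (∀ x, ‖w x‖ = 1) ∧ ∀ x, v x = h x • w x := by
  obtain ⟨h, w, hh, hw, hwn, hvw⟩ := remove_all _ hv h0 le_rfl
  have hn := contDiff_norm_E hw.1 hwn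
  have hnc : ContDiff ℝ ω (fun x => ((‖w x‖ : ℝ) : ℂ)) := Complex.ofRealCLM.contDiff.comp hn
  have hne : ∀ x, ((‖w x‖ : ℝ) : ℂ) ≠ 0 := fun x => by simpa using hwn x
  have key : ∀ x, v x = (h x * (‖w x‖ : ℝ)) • (((‖w x‖ : ℝ) : ℂ)⁻¹ • w x) := fun x => by
    rw [smul_smul, mul_assoc, mul_inv_cancel₀ (hne x), mul_one, hvw]
  refine ⟨fun x => h x * (‖w x‖ : ℝ), fun x => ((‖w x‖ : ℝ) : ℂ)⁻¹ • w x, ⟨hh.1.mul hnc, ?_⟩, ?_,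
    ⟨(hnc.inv hne).smul hw.1, ?_⟩, ?_, key⟩
  · intro x; simp only [hh.2 x, hw.2 x]
  · obtain ⟨x, hx⟩ := h0
    refine ⟨x, fun h1 => hx ?_⟩
    have h1' : h x * (‖w x‖ : ℝ) = 0 := h1
    rw [key x, h1', zero_smul]
  · intro x; simp only [hw.2 x]
  · intro x
    rw [norm_smul, norm_inv, Complex.norm_real, norm_norm, inv_mul_cancel₀]
    exact norm_ne_zero_iff.2 (hwn x)

section Frames
variable {d : ℕ}

def SS (u : ℕ → ℝ → EuclideanSpace ℂ (Fin d)) (m : ℕ) (x : ℝ) :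
    Submodule ℂ (EuclideanSpace ℂ (Fin d)) :=
  Submodule.span ℂ ((fun i => u i x) '' {i | i < m})

def Fr (m : ℕ) (u : ℕ → ℝ → EuclideanSpace ℂ (Fin d)) : Prop :=
  (∀ i < m, AP (u i)) ∧
    ∀ x, ∀ i < m, ∀ j < m, inner ℂ (u i x) (u j x) = if i = j then (1:ℂ) else 0

def Tri (α : ℝ) (A : ℝ → Matrix (Fin d) (Fin d) ℂ) (m : ℕ)
    (u : ℕ → ℝ → EuclideanSpace ℂ (Fin d)) : Prop :=
  ∀ j < m, ∀ x, Matrix.toEuclideanLin (A x) (u j x) ∈ SS u j (x + α)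

noncomputable def res (u : ℕ → ℝ → EuclideanSpace ℂ (Fin d)) (m : ℕ) (x : ℝ)
    (y : EuclideanSpace ℂ (Fin d)) : EuclideanSpace ℂ (Fin d) :=
  y - ∑ i ∈ Finset.range m, (inner ℂ (u i x) y) • u i x

lemma SS_congr {u u' : ℕ → ℝ → EuclideanSpace ℂ (Fin d)} {m : ℕ} (h : ∀ i < m, u i = u' i)
    (x : ℝ) : SS u m x = SS u' m x := by
  unfold SS
  congr 1
  exact Set.image_congr fun i hi => by rw [h i hi]

lemma SS_mono {u : ℕ → ℝ → EuclideanSpace ℂ (Fin d)} {m n : ℕ} (h : m ≤ n) (x : ℝ) :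
    SS u m x ≤ SS u n x :=
  Submodule.span_mono (Set.image_mono fun _ hi => lt_of_lt_of_le hi h)

lemma mem_SS {u : ℕ → ℝ → EuclideanSpace ℂ (Fin d)} {m i : ℕ} (h : i < m) (x : ℝ) :
    u i x ∈ SS u m x := Submodule.subset_span ⟨i, h, rfl⟩

lemma Fr.inner_res {m : ℕ} {u : ℕ → ℝ → EuclideanSpace ℂ (Fin d)} (h : Fr m u) {j : ℕ}
    (hj : j < m) (x : ℝ) (y : EuclideanSpace ℂ (Fin d)) : inner ℂ (u j x) (res u m x y) = 0 := by
  unfold res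
  rw [inner_sub_right, inner_sum, Finset.sum_eq_single j]
  · rw [inner_smul_right, h.2 x j hj j hj]; simp
  · intro i hi hij
    rw [inner_smul_right, h.2 x j hj i (Finset.mem_range.1 hi), if_neg hij.symm, mul_zero]
  · intro h1; exact absurd (Finset.mem_range.2 hj) h1

lemma inner_SS {m : ℕ} {u : ℕ → ℝ → EuclideanSpace ℂ (Fin d)} {x : ℝ}
    {w y : EuclideanSpace ℂ (Fin d)} (hw : ∀ j < m, inner ℂ w (u j x) = 0)
    (hy : y ∈ SS u m x) : inner ℂ w y = 0 := by
  unfold SS at hy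
  induction hy using Submodule.span_induction with
  | mem y hy => obtain ⟨j, hj, rfl⟩ := hy; exact hw j hj
  | zero => simp
  | add a b _ _ ha hb => rw [inner_add_right, ha, hb, add_zero]
  | smul c a _ ha => rw [inner_smul_right, ha, mul_zero]

lemma sub_res_mem (m : ℕ) (u : ℕ → ℝ → EuclideanSpace ℂ (Fin d)) (x : ℝ)
    (y : EuclideanSpace ℂ (Fin d)) : y - res u m x y ∈ SS u m x := by
  unfold res
  rw [sub_sub_cancel]
  exact Submodule.sum_mem _ fun i hi => Submodule.smul_mem _ _ (mem_SS (Finset.mem_range.1 hi) x)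

lemma Fr.mem_iff {m : ℕ} {u : ℕ → ℝ → EuclideanSpace ℂ (Fin d)} (h : Fr m u) {x : ℝ}
    {y : EuclideanSpace ℂ (Fin d)} : y ∈ SS u m x ↔ res u m x y = 0 := by
  have h1 := sub_res_mem m u x y
  constructor
  · intro hy
    have h2 : res u m x y ∈ SS u m x := by
      have := (SS u m x).sub_mem hy h1
      rwa [sub_sub_cancel] at this
    rw [← inner_self_eq_zero (𝕜 := ℂ)]
    refine inner_SS (fun j hj => ?_) h2
    rw [inner_eq_zero_symm]
    exact h.inner_res hj x y
  · intro hy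
    rwa [hy, sub_zero] at h1

lemma Fr.res_contDiff {m : ℕ} {u : ℕ → ℝ → EuclideanSpace ℂ (Fin d)} (h : Fr m u)
    (a : ℝ) {y : ℝ → EuclideanSpace ℂ (Fin d)} (hy : ContDiff ℝ ω y) :
    ContDiff ℝ ω (fun x => res u m (x + a) (y x)) := by
  unfold res
  refine hy.sub (ContDiff.sum fun i hi => ?_)
  have h1 : ContDiff ℝ ω (fun x => u i (x + a)) :=
    (h.1 i (Finset.mem_range.1 hi)).1.comp (contDiff_id.add contDiff_const)
  exact (ContDiff.inner ℂ h1 hy).smul h1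

lemma Fr.res_AP {m : ℕ} {u : ℕ → ℝ → EuclideanSpace ℂ (Fin d)} (h : Fr m u)
    {y : ℝ → EuclideanSpace ℂ (Fin d)} (hy : AP y) : AP (fun x => res u m x (y x)) := by
  refine ⟨by simpa using h.res_contDiff 0 hy.1, fun x => ?_⟩
  unfold res
  simp only [hy.2 x]
  congr 1
  exact Finset.sum_congr rfl fun i hi => by rw [(h.1 i (Finset.mem_range.1 hi)).2 x]

lemma res_smul (u : ℕ → ℝ → EuclideanSpace ℂ (Fin d)) (m : ℕ) (x : ℝ) (c : ℂ)
    (y : EuclideanSpace ℂ (Fin d)) : res u m x (c • y) = c • res u m x y := by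
  unfold res
  rw [smul_sub, Finset.smul_sum]
  congr 1
  exact Finset.sum_congr rfl fun i _ => by rw [inner_smul_right, smul_smul]

lemma Fr.extend {m : ℕ} {u : ℕ → ℝ → EuclideanSpace ℂ (Fin d)} (h : Fr m u)
    {v : ℝ → EuclideanSpace ℂ (Fin d)} (hv : AP v) (h0 : ∃ x, v x ∉ SS u m x) :
    ∃ (g : ℝ → ℂ) (w : ℝ → EuclideanSpace ℂ (Fin d)), AP g ∧ (∃ x, g x ≠ 0) ∧ AP w ∧
      Fr (m + 1) (Function.update u m w) ∧ ∀ x, res u m x (v x) = g x • w x := by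
  obtain ⟨g, w, hg, hg0, hw, hw1, hvw⟩ := normalizeAP (h.res_AP hv)
    (h0.imp fun x hx => fun h1 => hx (h.mem_iff.2 h1))
  have horth : ∀ i < m, ∀ x, inner ℂ (u i x) (w x) = 0 := by
    intro i hi
    refine AP.smul_zero' hg hg0 (ContDiff.inner ℂ (h.1 i hi).1 hw.1) fun x => ?_
    rw [smul_eq_mul, ← inner_smul_right, ← hvw, h.inner_res hi]
  refine ⟨g, w, hg, hg0, hw, ⟨fun i hi => ?_, fun x i hi j hj => ?_⟩, hvw⟩
  · by_cases him : i = m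
    · subst him; simpa using hw
    · simpa [him] using h.1 i (by omega)
  · by_cases him : i = m <;> by_cases hjm : j = m
    · subst him; subst hjm
      simp [inner_self_eq_norm_sq_to_K, hw1 x]
    · subst him
      rw [Function.update_self, Function.update_of_ne hjm, if_neg (Ne.symm hjm),
        inner_eq_zero_symm]
      exact horth j (by omega) x
    · subst hjm
      rw [Function.update_self, Function.update_of_ne him, if_neg him]
      exact horth i (by omega) x
    · rw [Function.update_of_ne him, Function.update_of_ne hjm]
      exact h.2 x i (by omega) j (by omega)

lemma apply_contDiff {A : ℝ → Matrix (Fin d) (Fin d) ℂ} (hA : AnalyticPeriodicMat A)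
    {w : ℝ → EuclideanSpace ℂ (Fin d)} (hw : ContDiff ℝ ω w) :
    ContDiff ℝ ω (fun x => Matrix.toEuclideanLin (A x) (w x)) := by
  rw [contDiff_piLp]
  intro i
  simp only [Matrix.toLpLin_apply, Matrix.mulVec, dotProduct]
  refine ContDiff.sum fun j _ => ?_
  exact (contDiff_of_an fun x => hA.2 x i j).mul ((contDiff_piLp 2).1 hw j)

lemma Fr.extend_tri {α : ℝ} {A : ℝ → Matrix (Fin d) (Fin d) ℂ} (hA : AnalyticPeriodicMat A)
    {m : ℕ} {u : ℕ → ℝ → EuclideanSpace ℂ (Fin d)} (h : Fr m u) (ht : Tri α A m u)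
    {v : ℝ → EuclideanSpace ℂ (Fin d)} (hv : AP v) (h0 : ∃ x, v x ∉ SS u m x)
    (hAv : ∀ x, Matrix.toEuclideanLin (A x) (v x) ∈ SS u m (x + α)) :
    ∃ u', Fr (m + 1) u' ∧ Tri α A (m + 1) u' := by
  obtain ⟨g, w, hg, hg0, hw, hF, hvw⟩ := h.extend hv h0
  refine ⟨_, hF, fun j hj x => ?_⟩
  have hc : SS (Function.update u m w) j (x + α) = SS u j (x + α) :=
    SS_congr (fun i hi => Function.update_of_ne (by omega) _ _) _
  rw [hc]
  by_cases hjm : j = m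
  · subst hjm
    rw [Function.update_self, h.mem_iff]
    revert x
    have : ∀ x, res u j (x + α) (Matrix.toEuclideanLin (A x) (w x)) = 0 := by
      refine AP.smul_zero' hg hg0 (h.res_contDiff α (apply_contDiff hA hw.1)) fun x => ?_
      rw [← res_smul, ← map_smul, ← hvw, ← h.mem_iff]
      unfold res
      rw [map_sub, map_sum]
      refine Submodule.sub_mem _ (hAv x) (Submodule.sum_mem _ fun i hi => ?_)
      rw [map_smul]
      exact Submodule.smul_mem _ _ (SS_mono (Finset.mem_range.1 hi).le _
        (ht i (Finset.mem_range.1 hi) x))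
    exact fun x _ => this x
  · rw [Function.update_of_ne hjm]
    exact ht j (by omega) x

lemma Fr.orthonormal {m : ℕ} {u : ℕ → ℝ → EuclideanSpace ℂ (Fin d)} (h : Fr m u) (x : ℝ) :
    Orthonormal ℂ (fun i : Fin m => u i x) := by
  rw [orthonormal_iff_ite]
  intro i j
  rw [h.2 x i i.2 j j.2]
  simp [Fin.ext_iff]

lemma SS_range (m : ℕ) (u : ℕ → ℝ → EuclideanSpace ℂ (Fin d)) (x : ℝ) :
    SS u m x = Submodule.span ℂ (Set.range (fun i : Fin m => u i x)) := by
  unfold SS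
  congr 1
  ext y
  constructor
  · rintro ⟨i, hi, rfl⟩; exact ⟨⟨i, hi⟩, rfl⟩
  · rintro ⟨i, rfl⟩; exact ⟨i, i.2, rfl⟩

lemma Fr.finrank {m : ℕ} {u : ℕ → ℝ → EuclideanSpace ℂ (Fin d)} (h : Fr m u) (x : ℝ) :
    Module.finrank ℂ (SS u m x) = m := by
  rw [SS_range, finrank_span_eq_card (h.orthonormal x).linearIndependent, Fintype.card_fin]

lemma Fr.le {m : ℕ} {u : ℕ → ℝ → EuclideanSpace ℂ (Fin d)} (h : Fr m u) : m ≤ d := by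
  have := Submodule.finrank_le (SS u m 0)
  rwa [h.finrank, finrank_euclideanSpace_fin] at this

lemma Fr.complete {m : ℕ} {u : ℕ → ℝ → EuclideanSpace ℂ (Fin d)} (h : Fr m u) (n : ℕ)
    (hn : m + n ≤ d) : ∃ u', Fr (m + n) u' ∧ ∀ i < m, u' i = u i := by
  induction n with
  | zero => exact ⟨u, h, fun _ _ => rfl⟩
  | succ n ih =>
    obtain ⟨u', h', he⟩ := ih (by omega)
    have hex : ∃ v, v ∉ SS u' (m + n) 0 := by
      by_contra hcon
      push Not at hcon
      have h1 : SS u' (m + n) 0 = ⊤ := eq_top_iff.2 fun v _ => hcon v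
      have h2 := h'.finrank 0
      rw [h1, finrank_top, finrank_euclideanSpace_fin] at h2
      omega
    obtain ⟨v, hv⟩ := hex
    obtain ⟨g, w, hg, hg0, hw, hF, hvw⟩ := h'.extend (v := fun _ => v)
      ⟨contDiff_const, fun x => rfl⟩ ⟨0, hv⟩
    refine ⟨_, hF, fun i hi => ?_⟩
    rw [Function.update_of_ne (by omega), he i hi]

lemma Fr.eq_top {u : ℕ → ℝ → EuclideanSpace ℂ (Fin d)} (h : Fr d u) (x : ℝ) :
    SS u d x = ⊤ := by
  apply Submodule.eq_top_of_finrank_eq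
  rw [h.finrank, finrank_euclideanSpace_fin]

lemma Fr.mono {m n : ℕ} {u : ℕ → ℝ → EuclideanSpace ℂ (Fin d)} (h : Fr n u) (hmn : m ≤ n) :
    Fr m u := ⟨fun i hi => h.1 i (by omega), fun x i hi j hj => h.2 x i (by omega) j (by omega)⟩

lemma Fr.sum_eq {u : ℕ → ℝ → EuclideanSpace ℂ (Fin d)} (h : Fr d u) (x : ℝ)
    (y : EuclideanSpace ℂ (Fin d)) : y = ∑ i ∈ Finset.range d, (inner ℂ (u i x) y) • u i x := by
  have h1 : res u d x y = 0 := h.mem_iff.1 (by rw [h.eq_top]; trivial)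
  exact sub_eq_zero.1 h1

lemma Fr.mem_of_inner {u : ℕ → ℝ → EuclideanSpace ℂ (Fin d)} (h : Fr d u) {m : ℕ} (x : ℝ)
    {y : EuclideanSpace ℂ (Fin d)} (hy : ∀ i, m ≤ i → i < d → inner ℂ (u i x) y = 0) :
    y ∈ SS u m x := by
  rw [h.sum_eq x y]
  refine Submodule.sum_mem _ fun i hi => ?_
  by_cases him : i < m
  · exact Submodule.smul_mem _ _ (mem_SS him x)
  · rw [hy i (by omega) (Finset.mem_range.1 hi), zero_smul]
    exact Submodule.zero_mem _

noncomputable def DD (α : ℝ) (A : ℝ → Matrix (Fin d) (Fin d) ℂ)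
    (u : ℕ → ℝ → EuclideanSpace ℂ (Fin d)) (m : ℕ) (x : ℝ) :
    Matrix (Fin (d - m)) (Fin (d - m)) ℂ :=
  Matrix.of fun i j => inner ℂ (u (m + i) (x + α)) (Matrix.toEuclideanLin (A x) (u (m + j) x))

lemma DD_AP {α : ℝ} {A : ℝ → Matrix (Fin d) (Fin d) ℂ} (hA : AnalyticPeriodicMat A)
    {u : ℕ → ℝ → EuclideanSpace ℂ (Fin d)} (h : Fr d u) (m : ℕ) (i j : Fin (d - m)) :
    AP (fun x => DD α A u m x i j) := by
  have hi := h.1 (m + i) (by omega)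
  have hj := h.1 (m + j) (by omega)
  refine ⟨?_, fun x => ?_⟩
  · exact ContDiff.inner ℂ (hi.1.comp (contDiff_id.add contDiff_const)) (apply_contDiff hA hj.1)
  · simp only [DD, Matrix.of_apply]
    rw [hA.1 x, hj.2 x, add_right_comm, hi.2]

/-- Main structure result. -/
lemma exists_frame (α : ℝ) {A : ℝ → Matrix (Fin d) (Fin d) ℂ} (hA : AnalyticPeriodicMat A) :
    ∃ (m : ℕ) (u : ℕ → ℝ → EuclideanSpace ℂ (Fin d)), m ≤ d ∧ Fr d u ∧ Tri α A m u ∧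
      AP (fun x => (DD α A u m x).det) ∧ ∃ x, (DD α A u m x).det ≠ 0 := by
  have hmax : ∃ m, (∃ u, Fr (d := d) m u ∧ Tri α A m u) ∧ ¬ ∃ u, Fr (d := d) (m + 1) u ∧ Tri α A (m + 1) u := by
    by_contra hcon
    push Not at hcon
    have hall : ∀ m, ∃ u, Fr (d := d) m u ∧ Tri α A m u := by
      intro m
      induction m with
      | zero => exact ⟨fun _ _ => 0, ⟨fun i hi => by omega, fun x i hi => by omega⟩,
          fun j hj => by omega⟩
      | succ m ih => 
        obtain ⟨u, h1, h2⟩ := ih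
        obtain ⟨u', h'⟩ := hcon m ⟨u, h1, h2⟩
        exact ⟨u', h'⟩
    obtain ⟨u, hu, -⟩ := hall (d + 1)
    have := hu.le
    omega
  obtain ⟨m, ⟨u0, hF0, hT0⟩, hm⟩ := hmax
  have hmd := hF0.le
  obtain ⟨u, hF, hu⟩ := hF0.complete (d - m) (by omega)
  rw [Nat.add_sub_cancel' hmd] at hF
  have hT : Tri α A m u := by
    intro j hj x
    rw [hu j hj, SS_congr (fun i hi => hu i (by omega))]
    exact hT0 j hj x
  let M : Matrix (Fin (d - m)) (Fin (d - m)) APRing :=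
    Matrix.of fun i j => ⟨fun x => DD α A u m x i j, DD_AP hA hF m i j⟩
  let ev : ℝ → APRing →+* ℂ := fun x => (Pi.evalRingHom (fun _ : ℝ => ℂ) x).comp APRing.subtype
  have hMx : ∀ x, (ev x).mapMatrix M = DD α A u m x := fun x => by ext i j; rfl
  have hdet : ∀ x, (DD α A u m x).det = M.det.1 x := by
    intro x
    rw [← hMx x, ← RingHom.map_det]
    rfl
  refine ⟨m, u, hmd, hF, hT, ?_, ?_⟩
  · simp_rw [hdet]; exact M.det.2
  · by_contra hcon
    push Not at hcon
    have hM0 : M.det = 0 := Subtype.ext (funext fun x => by rw [← hdet, hcon]; rfl)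
    obtain ⟨w, hw0, hw⟩ := Matrix.exists_mulVec_eq_zero_iff.2 hM0
    apply hm
    have hwx : ∀ x i, ∑ j, DD α A u m x i j * (w j).1 x = 0 := by
      intro x i
      have h1 := congrArg (ev x) (congrFun hw i)
      simp only [Matrix.mulVec, dotProduct, map_sum, map_mul, Pi.zero_apply, map_zero] at h1
      exact h1
    let v : ℝ → EuclideanSpace ℂ (Fin d) := fun x => ∑ j, (w j).1 x • u (m + j) x
    have hv : AP v := by
      refine ⟨ContDiff.sum fun j _ => (w j).2.1.smul (hF.1 (m + j) (by omega)).1, fun x => ?_⟩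
      refine Finset.sum_congr rfl fun j _ => ?_
      rw [(w j).2.2 x, (hF.1 (m + j) (by omega)).2 x]
    have hinner : ∀ x (i : Fin (d - m)), inner ℂ (u (m + i) x) (v x) = (w i).1 x := by
      intro x i
      simp only [v, inner_sum, inner_smul_right]
      rw [Finset.sum_eq_single i]
      · rw [hF.2 x _ (by omega) _ (by omega)]; simp
      · intro j _ hji
        rw [hF.2 x _ (by omega) _ (by omega), if_neg, mul_zero]
        intro h; apply hji; ext; omega
      · simp
    refine (hF.mono hmd).extend_tri hA hT hv ?_ ?_
    · obtain ⟨i, hi⟩ := Function.ne_iff.1 hw0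
      have : ∃ x, (w i).1 x ≠ 0 := by
        by_contra h
        push Not at h
        exact hi (Subtype.ext (funext h))
      obtain ⟨x, hx⟩ := this
      refine ⟨x, fun hmem => hx ?_⟩
      rw [← hinner]
      refine inner_SS (fun j hj => ?_) hmem
      rw [hF.2 x _ (by omega) _ (by omega), if_neg (by omega)]
    · intro x
      refine hF.mem_of_inner _ fun i hmi hid => ?_
      have h1 := hwx x ⟨i - m, by omega⟩
      rw [← h1]
      simp only [v, map_sum, inner_sum, map_smul, inner_smul_right, DD, Matrix.of_apply]
      refine Finset.sum_congr rfl fun j _ => ?_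
      rw [Nat.add_sub_cancel' hmi, mul_comm]

end Frames

section Lyap
variable {d : ℕ}

lemma toE_mul {n : ℕ} (M N : Matrix (Fin n) (Fin n) ℂ) (v : EuclideanSpace ℂ (Fin n)) :
    Matrix.toEuclideanLin (M * N) v = Matrix.toEuclideanLin M (Matrix.toEuclideanLin N v) := by
  ext i
  simp [Matrix.mulVec_mulVec]

lemma iter_ker {α : ℝ} {A : ℝ → Matrix (Fin d) (Fin d) ℂ} {m : ℕ}
    {u : ℕ → ℝ → EuclideanSpace ℂ (Fin d)} (ht : Tri α A m u) (n : ℕ) :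
    ∀ (j : ℕ) (x : ℝ) (y : EuclideanSpace ℂ (Fin d)), j ≤ n → j ≤ m → y ∈ SS u j x →
      Matrix.toEuclideanLin (matIter α A n x) y = 0 := by
  induction n with
  | zero =>
    intro j x y hj _ hy
    obtain rfl : j = 0 := by omega
    have : y = 0 := by simpa [SS] using hy
    rw [this, map_zero]
  | succ n ih =>
    intro j x y hj hjm hy
    rw [matIter, toE_mul]
    refine ih (j - 1) _ _ (by omega) (by omega) ?_
    unfold SS at hy
    induction hy using Submodule.span_induction with
    | mem y hy =>
      obtain ⟨i, hi, rfl⟩ := hy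
      have hi' : i < j := hi
      exact SS_mono (by omega) _ (ht i (by omega) x)
    | zero => rw [map_zero]; exact Submodule.zero_mem _
    | add a b _ _ ha hb => rw [map_add]; exact Submodule.add_mem _ ha hb
    | smul c a _ ha => rw [map_smul]; exact Submodule.smul_mem _ _ ha

lemma exists_sub {κ : ℕ} {V : Submodule ℂ (EuclideanSpace ℂ (Fin d))}
    (hV : κ ≤ Module.finrank ℂ V) : ∃ W ≤ V, Module.finrank ℂ W = κ := by
  let b := Module.finBasis ℂ V
  let w : Fin κ → EuclideanSpace ℂ (Fin d) := fun i => (b (Fin.castLE hV i) : _)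
  have hw : LinearIndependent ℂ w := by
    have h1 : LinearIndependent ℂ (fun i => (b i : EuclideanSpace ℂ (Fin d))) :=
      b.linearIndependent.map' V.subtype (Submodule.ker_subtype V)
    exact h1.comp _ (Fin.castLE_injective hV)
  refine ⟨Submodule.span ℂ (Set.range w), ?_, ?_⟩
  · rw [Submodule.span_le]
    rintro _ ⟨i, rfl⟩
    exact (b (Fin.castLE hV i)).2
  · rw [finrank_span_eq_card hw, Fintype.card_fin]

lemma singVal_zero {κ : ℕ} (hκ : κ ≤ d) {M : Matrix (Fin d) (Fin d) ℂ}
    {K : Submodule ℂ (EuclideanSpace ℂ (Fin d))}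
    (hK : ∀ y ∈ K, Matrix.toEuclideanLin M y = 0) (hlt : d < Module.finrank ℂ K + κ) :
    singVal κ M = 0 := by
  unfold singVal
  apply le_antisymm
  · refine Real.sSup_nonpos ?_
    rintro t ⟨V, hV, ht⟩
    have h1 : ¬ Disjoint K V := by
      intro hd
      have := Submodule.finrank_add_finrank_le_of_disjoint hd
      rw [finrank_euclideanSpace_fin] at this
      omega
    rw [Submodule.disjoint_def] at h1
    push Not at h1
    obtain ⟨y, hyK, hyV, hy0⟩ := h1
    have h2 := ht y hyV
    rw [hK y hyK, norm_zero] at h2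
    have h3 : 0 < ‖y‖ := norm_pos_iff.2 hy0
    by_contra hneg
    push Not at hneg
    have := mul_pos hneg h3
    linarith
  · by_cases hb : BddAbove {t : ℝ | ∃ V : Submodule ℂ (EuclideanSpace ℂ (Fin d)),
      Module.finrank ℂ V = κ ∧ ∀ v ∈ V, t * ‖v‖ ≤ ‖(Matrix.toEuclideanLin M) v‖}
    · apply le_csSup hb
      obtain ⟨V, -, hV⟩ := exists_sub (V := (⊤ : Submodule ℂ (EuclideanSpace ℂ (Fin d))))
        (κ := κ) (by rw [finrank_top, finrank_euclideanSpace_fin]; exact hκ)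
      exact ⟨V, hV, fun v _ => by rw [zero_mul]; exact norm_nonneg _⟩
    · rw [Real.sSup_of_not_bddAbove hb]

lemma singVal_ge_s4 {κ : ℕ} (hκ : 1 ≤ κ) {M : Matrix (Fin d) (Fin d) ℂ}
    {V : Submodule ℂ (EuclideanSpace ℂ (Fin d))} (hV : κ ≤ Module.finrank ℂ V) {c : ℝ}
    (hc : ∀ v ∈ V, c * ‖v‖ ≤ ‖Matrix.toEuclideanLin M v‖) : c ≤ singVal κ M := by
  unfold singVal
  apply le_csSup
  · refine ⟨‖LinearMap.toContinuousLinearMap (Matrix.toEuclideanLin M)‖, ?_⟩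
    rintro t ⟨W, hW, ht⟩
    have hWb : W ≠ ⊥ := by
      rintro rfl
      simp at hW
      omega
    obtain ⟨y, hy, hy0⟩ := Submodule.exists_mem_ne_zero_of_ne_bot hWb
    have h1 := ht y hy
    have h2 := (LinearMap.toContinuousLinearMap (Matrix.toEuclideanLin M)).le_opNorm y
    exact le_of_mul_le_mul_right (h1.trans h2) (norm_pos_iff.2 hy0)
  · obtain ⟨W, hWV, hW⟩ := exists_sub hV
    exact ⟨W, hW, fun v hv => hc v (hWV hv)⟩

noncomputable def qv (u : ℕ → ℝ → EuclideanSpace ℂ (Fin d)) (m : ℕ) (x : ℝ)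
    (y : EuclideanSpace ℂ (Fin d)) : EuclideanSpace ℂ (Fin (d - m)) :=
  WithLp.toLp 2 fun i => inner ℂ (u (m + i) x) y

lemma qv_step {α : ℝ} {A : ℝ → Matrix (Fin d) (Fin d) ℂ} {m : ℕ} (hmd : m ≤ d)
    {u : ℕ → ℝ → EuclideanSpace ℂ (Fin d)} (h : Fr d u) (ht : Tri α A m u) (x : ℝ)
    (y : EuclideanSpace ℂ (Fin d)) :
    qv u m (x + α) (Matrix.toEuclideanLin (A x) y) =
      Matrix.toEuclideanLin (DD α A u m x) (qv u m x y) := by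
  ext i
  have h1 : inner ℂ (u (m + i) (x + α)) (Matrix.toEuclideanLin (A x) y) =
      ∑ j ∈ Finset.range (m + (d - m)), inner ℂ (u j x) y *
        inner ℂ (u (m + i) (x + α)) (Matrix.toEuclideanLin (A x) (u j x)) := by
    rw [Nat.add_sub_cancel' hmd]
    conv_lhs => rw [h.sum_eq x y]
    rw [map_sum, inner_sum]
    exact Finset.sum_congr rfl fun j _ => by rw [map_smul, inner_smul_right]
  rw [Finset.sum_range_add, Finset.sum_eq_zero, zero_add, Finset.sum_range] at h1
  · simp only [qv, Matrix.toLpLin_apply, Matrix.mulVec, dotProduct, DD, Matrix.of_apply]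
    rw [← Matrix.toLpLin_apply, h1]
    exact Finset.sum_congr rfl fun j _ => mul_comm _ _
  · intro j hj
    have hj := Finset.mem_range.1 hj
    rw [inner_SS (fun l hl => ?_) (ht j hj x), mul_zero]
    rw [h.2 _ _ (by omega) _ (by omega), if_neg (by omega)]

lemma norm_split {m : ℕ} (hmd : m ≤ d)
    {u : ℕ → ℝ → EuclideanSpace ℂ (Fin d)} (h : Fr d u) (x : ℝ)
    (y : EuclideanSpace ℂ (Fin d)) :
    ‖y‖ ^ 2 = ∑ i ∈ Finset.range m, ‖inner ℂ (u i x) y‖ ^ 2 + ‖qv u m x y‖ ^ 2 := by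
  let b : OrthonormalBasis (Fin d) ℂ (EuclideanSpace ℂ (Fin d)) :=
    OrthonormalBasis.mk (h.orthonormal x) (by rw [← SS_range, h.eq_top])
  have h1 := b.sum_sq_norm_inner_right y
  have h2 : ∀ i : Fin d, b i = u i x := fun i => by simp [b]
  simp only [h2] at h1
  rw [← h1, ← Finset.sum_range (fun i => ‖inner ℂ (u i x) y‖ ^ 2)]
  have h3 : Finset.range d = Finset.range (m + (d - m)) := by rw [Nat.add_sub_cancel' hmd]
  rw [h3, Finset.sum_range_add, EuclideanSpace.norm_sq_eq]
  congr 1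
  rw [Finset.sum_range]
  rfl

lemma bounded_of_periodic {f : ℝ → ℝ} (hf : Continuous f) (hp : Function.Periodic f 1) :
    ∃ C, ∀ x, f x ≤ C := by
  obtain ⟨C, hC⟩ := (isCompact_Icc (a := (0:ℝ)) (b := 1)).bddAbove_image hf.continuousOn
  refine ⟨C, fun x => ?_⟩
  have h1 := (hp.int_mul ⌊x⌋).sub_eq x
  rw [mul_one] at h1
  rw [← h1]
  exact hC ⟨Int.fract x, ⟨Int.fract_nonneg x, (Int.fract_lt_one x).le⟩, rfl⟩

lemma det_bound {α : ℝ} {A : ℝ → Matrix (Fin d) (Fin d) ℂ} (hA : AnalyticPeriodicMat A)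
    {u : ℕ → ℝ → EuclideanSpace ℂ (Fin d)} (h : Fr d u) (m : ℕ) :
    ∃ C : ℝ, 1 ≤ C ∧ (∀ x, ‖(DD α A u m x).det‖ ≤ C) ∧
      ∀ x w, ‖(DD α A u m x).det‖ / C * ‖w‖ ≤ ‖Matrix.toEuclideanLin (DD α A u m x) w‖ := by
  have hc : Continuous (fun x => DD α A u m x) := 
    continuous_matrix fun i j => (DD_AP hA h m i j).1.continuous
  have hp : Function.Periodic (fun x => DD α A u m x) 1 := fun x => by
    ext i j; exact (DD_AP hA h m i j).2 x
  obtain ⟨C1, hC1⟩ := bounded_of_periodic (f := fun x => ‖(DD α A u m x).det‖)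
    hc.matrix_det.norm (fun x => by simp only [hp x])
  let T : Matrix (Fin (d - m)) (Fin (d - m)) ℂ →ₗ[ℂ]
      (EuclideanSpace ℂ (Fin (d - m)) →L[ℂ] EuclideanSpace ℂ (Fin (d - m))) :=
    LinearMap.toContinuousLinearMap.toLinearMap ∘ₗ Matrix.toEuclideanLin.toLinearMap
  have hT : Continuous T := LinearMap.continuous_of_finiteDimensional T
  obtain ⟨C2, hC2⟩ := bounded_of_periodic (f := fun x => ‖T (DD α A u m x).adjugate‖)
    (hT.comp hc.matrix_adjugate).norm (fun x => by simp only [hp x])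
  have hpos : 0 < max 1 (max C1 C2) := lt_of_lt_of_le one_pos (le_max_left _ _)
  refine ⟨max 1 (max C1 C2), le_max_left _ _, fun x => (hC1 x).trans (by simp), fun x w => ?_⟩
  rw [div_mul_eq_mul_div, div_le_iff₀ hpos, ← norm_smul]
  have h1 : (DD α A u m x).det • w = T (DD α A u m x).adjugate
      (Matrix.toEuclideanLin (DD α A u m x) w) := by
    change _ = Matrix.toEuclideanLin _ _
    rw [← toE_mul, Matrix.adjugate_mul, map_smul, LinearMap.smul_apply]
    congr 1
    ext i
    simp
  rw [h1, mul_comm]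
  refine (ContinuousLinearMap.le_opNorm _ _).trans ?_
  gcongr
  exact (hC2 x).trans (by simp)

lemma qv_iter {α : ℝ} {A : ℝ → Matrix (Fin d) (Fin d) ℂ} {m : ℕ} (hmd : m ≤ d)
    {u : ℕ → ℝ → EuclideanSpace ℂ (Fin d)} (h : Fr d u) (ht : Tri α A m u) {δ : ℝ → ℝ}
    (hδ0 : ∀ x, 0 ≤ δ x)
    (hδ : ∀ x w, δ x * ‖w‖ ≤ ‖Matrix.toEuclideanLin (DD α A u m x) w‖) (n : ℕ) :
    ∀ (x : ℝ) (y : EuclideanSpace ℂ (Fin d)),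
    (∏ j ∈ Finset.range n, δ (x + j * α)) * ‖qv u m x y‖ ≤
      ‖qv u m (x + n * α) (Matrix.toEuclideanLin (matIter α A n x) y)‖ := by
  induction n with
  | zero => intro x y; simp [matIter]
  | succ n ih =>
    intro x y
    rw [matIter, toE_mul, Finset.prod_range_succ']
    have h1 := ih (x + α) (Matrix.toEuclideanLin (A x) y)
    rw [qv_step hmd h ht] at h1
    have e1 : x + α + n * α = x + ((n + 1 : ℕ) : ℝ) * α := by push_cast; ring
    rw [e1] at h1
    refine le_trans ?_ h1
    have e2 : ∀ j : ℕ, δ (x + ((j + 1 : ℕ) : ℝ) * α) = δ (x + α + j * α) := fun j => by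
      congr 1; push_cast; ring
    simp only [e2]
    rw [mul_assoc]
    have e3 : δ (x + ((0:ℕ) : ℝ) * α) = δ x := by simp
    rw [e3]
    exact mul_le_mul_of_nonneg_left (hδ x _) (Finset.prod_nonneg fun j _ => hδ0 _)

lemma singVal_iter_ge {α : ℝ} {A : ℝ → Matrix (Fin d) (Fin d) ℂ} {m : ℕ} (hmd : m ≤ d)
    {u : ℕ → ℝ → EuclideanSpace ℂ (Fin d)} (h : Fr d u) (ht : Tri α A m u) {δ : ℝ → ℝ}
    (hδ0 : ∀ x, 0 ≤ δ x)
    (hδ : ∀ x w, δ x * ‖w‖ ≤ ‖Matrix.toEuclideanLin (DD α A u m x) w‖) {κ : ℕ} (hκ : 1 ≤ κ)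
    (hκm : κ ≤ d - m) (n : ℕ) (x : ℝ) :
    ∏ j ∈ Finset.range n, δ (x + j * α) ≤ singVal κ (matIter α A n x) := by
  apply singVal_ge_s4 hκ (V := (SS u m x)ᗮ)
  · have h1 := Submodule.finrank_add_finrank_orthogonal (SS u m x)
    rw [(h.mono hmd).finrank, finrank_euclideanSpace_fin] at h1
    omega
  · intro v hv
    have hnv : ‖v‖ = ‖qv u m x v‖ := by
      have h1 := norm_split hmd h x v
      rw [Finset.sum_eq_zero, zero_add] at h1
      · exact (sq_eq_sq₀ (norm_nonneg _) (norm_nonneg _)).1 h1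
      · intro i hi
        rw [(Submodule.mem_orthogonal _ _).1 hv _ (mem_SS (Finset.mem_range.1 hi) x)]
        simp
    rw [hnv]
    refine (qv_iter hmd h ht hδ0 hδ n x v).trans ?_
    have h2 := norm_split hmd h (x + n * α) (Matrix.toEuclideanLin (matIter α A n x) v)
    refine (sq_le_sq₀ (norm_nonneg _) (norm_nonneg _)).1 ?_
    rw [h2]
    have : 0 ≤ ∑ i ∈ Finset.range m, ‖inner ℂ (u i (x + n * α))
      (Matrix.toEuclideanLin (matIter α A n x) v)‖ ^ 2 := by positivity
    linarith

lemma lintegral_shift {f : ℝ → ℂ} (hf : AP f) {C : ℝ} (hC : 1 ≤ C)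
    (hfC : ∀ x, ‖f x‖ ≤ C) (a : ℝ) :
    ∫⁻ x in Set.Ioc (0:ℝ) 1, ENNReal.ofReal (Real.log C - Real.log ‖f (x + a)‖) =
      ENNReal.ofReal (∫ x in (0:ℝ)..1, (Real.log C - Real.log ‖f x‖)) := by
  have hfa : ContDiff ℝ ω (fun x => f (x + a)) := hf.1.comp (contDiff_id.add contDiff_const)
  have hint : IntervalIntegrable (fun x => Real.log ‖f (x + a)‖) volume 0 1 :=
    MeromorphicOn.intervalIntegrable_log_norm fun x _ =>
      ((contDiff_omega_iff_analyticOnNhd.1 hfa) x (Set.mem_univ x)).meromorphicAt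
  have hint2 : IntervalIntegrable (fun x => Real.log C - Real.log ‖f (x + a)‖) volume 0 1 :=
    intervalIntegrable_const.sub hint
  rw [← ofReal_integral_eq_lintegral_ofReal
    ((intervalIntegrable_iff_integrableOn_Ioc_of_le zero_le_one).1 hint2)]
  · rw [← intervalIntegral.integral_of_le zero_le_one]
    congr 1
    rw [intervalIntegral.integral_comp_add_right (fun x => Real.log C - Real.log ‖f x‖) a]
    have hp : Function.Periodic (fun x => Real.log C - Real.log ‖f x‖) 1 := fun x => by
      simp only [hf.2 x]
    have := hp.intervalIntegral_add_eq a 0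
    rw [zero_add, add_comm 1 a, this, zero_add]
  · refine Filter.Eventually.of_forall fun x => ?_
    simp only [Pi.zero_apply, sub_nonneg]
    by_cases h0 : f (x + a) = 0
    · rw [h0, norm_zero, Real.log_zero]; exact Real.log_nonneg hC
    · exact Real.log_le_log (norm_pos_iff.2 h0) (hfC _)

lemma elog_ge_s4 {n : ℕ} {g : ℝ → ℝ} {f : ℝ → ℂ} (hf : AP f) (hf0 : ∃ x, f x ≠ 0) {C : ℝ}
    (hC : 1 ≤ C) (hfC : ∀ x, ‖f x‖ ≤ C) (α : ℝ)
    (hg : ∀ x, ∏ j ∈ Finset.range n, (‖f (x + j * α)‖ / C) ≤ g x) :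
    ((-(n * ∫ x in (0:ℝ)..1, (Real.log C - Real.log ‖f x‖)) : ℝ) : EReal) ≤
      elogIntegral (volume.restrict (Set.Ioc (0:ℝ) 1)) g := by
  set I := ∫ x in (0:ℝ)..1, (Real.log C - Real.log ‖f x‖) with hI
  have hnn : ∀ x, 0 ≤ Real.log C - Real.log ‖f x‖ := by
    intro x
    rw [sub_nonneg]
    by_cases h0 : f x = 0
    · rw [h0, norm_zero, Real.log_zero]; exact Real.log_nonneg hC
    · exact Real.log_le_log (norm_pos_iff.2 h0) (hfC _)
  have hI0 : 0 ≤ I := intervalIntegral.integral_nonneg zero_le_one fun x _ => hnn x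
  have hC0 : 0 < C := lt_of_lt_of_le one_pos hC
  have hae : ∀ᵐ x ∂(volume.restrict (Set.Ioc (0:ℝ) 1)), ∀ j ∈ Finset.range n,
      f (x + j * α) ≠ 0 := by
    rw [Filter.eventually_all_finset]
    intro j _
    have hfa : AP (fun x => f (x + j * α)) :=
      ⟨hf.1.comp (contDiff_id.add contDiff_const), fun x => by
        simp only [add_right_comm x 1, hf.2 _]⟩
    have hfin := hfa.zeros_finite (by
      obtain ⟨x, hx⟩ := hf0
      exact ⟨x - j * α, by simpa using hx⟩)
    rw [ae_restrict_iff' measurableSet_Ioc]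
    have h1 := hfin.measure_zero volume
    have h2 := measure_eq_zero_iff_ae_notMem.1 h1
    filter_upwards [h2] with x hx hx1 hx0
    exact hx ⟨Set.Ioc_subset_Icc_self hx1, hx0⟩
  have hpos : ∀ x, (∀ j ∈ Finset.range n, f (x + j * α) ≠ 0) →
      0 < ∏ j ∈ Finset.range n, (‖f (x + j * α)‖ / C) := fun x hx =>
    Finset.prod_pos fun j hj => div_pos (norm_pos_iff.2 (hx j hj)) hC0
  have hnull : (volume.restrict (Set.Ioc (0:ℝ) 1)) {x | g x = 0} = 0 := by
    rw [measure_eq_zero_iff_ae_notMem]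
    filter_upwards [hae] with x hx hx0
    have h1 := hg x
    have h2 := hpos x hx
    have h3 : g x = 0 := hx0
    linarith
  have hneg : ∫⁻ x in Set.Ioc (0:ℝ) 1, ENNReal.ofReal (-Real.log (g x)) ≤
      ENNReal.ofReal (n * I) := by
    calc _ ≤ ∫⁻ x in Set.Ioc (0:ℝ) 1, ∑ j ∈ Finset.range n,
          ENNReal.ofReal (Real.log C - Real.log ‖f (x + j * α)‖) := by
          refine lintegral_mono_ae ?_
          filter_upwards [hae] with x hx
          rw [← ENNReal.ofReal_sum_of_nonneg fun j _ => hnn _]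
          apply ENNReal.ofReal_le_ofReal
          have h1 := Real.log_le_log (hpos x hx) (hg x)
          rw [Real.log_prod fun j hj =>
            (div_pos (norm_pos_iff.2 (hx j hj)) hC0).ne'] at h1
          have h2 : ∑ j ∈ Finset.range n, (Real.log C - Real.log ‖f (x + j * α)‖) =
              - ∑ j ∈ Finset.range n, Real.log (‖f (x + j * α)‖ / C) := by
            rw [← Finset.sum_neg_distrib]
            refine Finset.sum_congr rfl fun j hj => ?_
            rw [Real.log_div (norm_pos_iff.2 (hx j hj)).ne' hC0.ne']
            ring
          rw [h2]
          linarith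
      _ = ∑ j ∈ Finset.range n, ∫⁻ x in Set.Ioc (0:ℝ) 1,
          ENNReal.ofReal (Real.log C - Real.log ‖f (x + j * α)‖) := by
          refine lintegral_finsetSum _ fun j _ => ?_
          have hc : Continuous (fun x => f (x + j * α)) :=
            hf.1.continuous.comp (continuous_id.add continuous_const)
          exact (measurable_const.sub
            (Real.measurable_log.comp hc.norm.measurable)).ennreal_ofReal
      _ = ENNReal.ofReal (n * I) := by
          rw [Finset.sum_congr rfl fun (j : ℕ) _ => lintegral_shift hf hC hfC ((j : ℝ) * α)]
          rw [Finset.sum_const, Finset.card_range, nsmul_eq_mul,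
            ENNReal.ofReal_mul (Nat.cast_nonneg n), ENNReal.ofReal_natCast]
  unfold elogIntegral
  rw [if_pos ⟨hnull, (lt_of_le_of_lt hneg ENNReal.ofReal_lt_top).ne⟩]
  have h1 : (∫⁻ x in Set.Ioc (0:ℝ) 1, ENNReal.ofReal (-Real.log (g x))).toEReal ≤
      ((n * I : ℝ) : EReal) := by
    refine (EReal.coe_ennreal_le_coe_ennreal_iff.2 hneg).trans ?_
    rw [EReal.coe_ennreal_ofReal, max_eq_left (by positivity)]
  have h2 := EReal.sub_le_sub (EReal.coe_ennreal_nonneg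
    (∫⁻ x in Set.Ioc (0:ℝ) 1, ENNReal.ofReal (Real.log (g x)))) h1
  refine le_trans ?_ h2
  rw [zero_sub, EReal.coe_neg]

lemma lyap_ne_bot {f : ℝ → ℂ} (hf : AP f) (hf0 : ∃ x, f x ≠ 0) {C : ℝ}
    (hC : 1 ≤ C) (hfC : ∀ x, ‖f x‖ ≤ C) {α : ℝ} {A : ℝ → Matrix (Fin d) (Fin d) ℂ} {κ : ℕ}
    (hg : ∀ n x, ∏ j ∈ Finset.range n, (‖f (x + j * α)‖ / C) ≤ singVal κ (matIter α A n x))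
    (hL : HasLyapunovExp α A κ ⊥) : False := by
  set I := ∫ x in (0:ℝ)..1, (Real.log C - Real.log ‖f x‖) with hI
  have : ((-I : ℝ) : EReal) ≤ ⊥ := by
    refine ge_of_tendsto hL ?_
    filter_upwards [eventually_ge_atTop 1] with n hn
    have h1 := elog_ge_s4 hf hf0 hC hfC α (hg n)
    have hn0 : (0:ℝ) < n := by exact_mod_cast hn
    have h2 : (0 : EReal) ≤ (((n : ℝ)⁻¹ : ℝ) : EReal) := by
      exact_mod_cast (inv_pos.2 hn0).le
    have h3 := mul_le_mul_of_nonneg_left h1 h2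
    refine le_trans (le_of_eq ?_) h3
    rw [← EReal.coe_mul]
    congr 1
    rw [← hI]
    field_simp
  exact EReal.coe_ne_bot _ (le_bot_iff.1 this)

lemma lyap_bot {α : ℝ} {A : ℝ → Matrix (Fin d) (Fin d) ℂ} {κ m : ℕ}
    (hg : ∀ n x, m ≤ n → singVal κ (matIter α A n x) = 0) {L : EReal}
    (hL : HasLyapunovExp α A κ L) : L = ⊥ := by
  refine tendsto_nhds_unique hL (tendsto_const_nhds.congr' ?_)
  filter_upwards [eventually_ge_atTop (m + 1)] with n hn
  have h1 : elogIntegral (volume.restrict (Set.Ioc (0:ℝ) 1))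
      (fun x => singVal κ (matIter α A n x)) = ⊥ := by
    unfold elogIntegral
    rw [if_neg]
    rintro ⟨h, -⟩
    simp [hg n _ (show m ≤ n by omega)] at h
  rw [h1, EReal.coe_mul_bot_of_pos]
  have : (0:ℝ) < n := by exact_mod_cast (show 0 < n by omega)
  positivity

end Lyap

lemma rank_le_of_ker {d : ℕ} {M : Matrix (Fin d) (Fin d) ℂ}
    {K : Submodule ℂ (EuclideanSpace ℂ (Fin d))}
    (hK : ∀ y ∈ K, Matrix.toEuclideanLin M y = 0) : M.rank + Module.finrank ℂ K ≤ d := by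
  have h1 := LinearMap.finrank_range_add_finrank_ker (Matrix.toEuclideanLin M)
  rw [finrank_euclideanSpace_fin] at h1
  have h2 : K ≤ LinearMap.ker (Matrix.toEuclideanLin M) := fun y hy => hK y hy
  have h3 := Submodule.finrank_mono h2
  have h4 : M.rank = Module.finrank ℂ (LinearMap.range (Matrix.toEuclideanLin M)) := by
    rw [Matrix.rank_eq_finrank_range_toLin M (PiLp.basisFun 2 ℂ (Fin d))
      (PiLp.basisFun 2 ℂ (Fin d)), ← Matrix.toLpLin_eq_toLin]
  omega

lemma strict_iter {m : ℕ} (α : ℝ) (a : ℝ → Matrix (Fin m) (Fin m) ℂ)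
    (ha : ∀ (x : ℝ) (i j : Fin m), (j : ℕ) ≤ (i : ℕ) → a x i j = 0) (n : ℕ) :
    ∀ (x : ℝ) (i j : Fin m), (j : ℕ) < i + n → matIter α a n x i j = 0 := by
  induction n with
  | zero =>
    intro x i j hij
    rw [matIter, Matrix.one_apply_ne]
    rintro rfl
    omega
  | succ n ih =>
    intro x i j hij
    rw [matIter, Matrix.mul_apply]
    refine Finset.sum_eq_zero fun l _ => ?_
    by_cases hl : (l : ℕ) < i + n
    · rw [ih _ _ _ hl, zero_mul]
    · rw [ha x l j (by omega), mul_zero]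

/-- If `L_{k+1}(α,A) = -∞` and `L_k(α,A) > -∞` for some `1 ≤ k < d`, then
there is an analytic 1-periodic unitary `U` such that `B(x) = U(x+α)⁻¹ A(x) U(x)` has block
form `[[a, b], [0, d]]` where the `(d-k)×(d-k)` block `a` is strictly upper triangular
(hence the cocycle `(α,a)` is nilpotent: `a_{d-k} ≡ 0`) and the `k×k` block `d(x)` is
invertible for all but finitely many `x` of a period. In particular
`rank A_{d-k}(x) ≤ k` for all `x`. -/
theorem stmt_4 {d k : ℕ} (hk1 : 1 ≤ k) (hkd : k < d) (α : ℝ)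
    (A : ℝ → Matrix (Fin d) (Fin d) ℂ)
    (hA : AnalyticPeriodicMat A)
    (hLk1 : HasLyapunovExp α A (k + 1) ⊥)
    (hLk : ∃ L : EReal, L ≠ ⊥ ∧ HasLyapunovExp α A k L) :
    ∃ U : ℝ → Matrix (Fin d) (Fin d) ℂ,
      AnalyticPeriodicMat U ∧
      (∀ x : ℝ, U x ∈ Matrix.unitaryGroup (Fin d) ℂ) ∧
      -- strictly upper triangular top-left block and vanishing lower-left block
      (∀ (x : ℝ) (i j : Fin d), (j : ℕ) < d - k → (j : ℕ) ≤ (i : ℕ) →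
        (star (U (x + α)) * A x * U x) i j = 0) ∧
      -- the cocycle given by the top-left (d-k)×(d-k) block is nilpotent
      (∀ x : ℝ, matIter α
          (fun t => Matrix.of fun i j : Fin (d - k) =>
            (star (U (t + α)) * A t * U t)
              (Fin.castLE (by omega) i) (Fin.castLE (by omega) j))
          (d - k) x = 0) ∧
      -- the bottom-right k×k block is invertible off a finite subset of a period
      {x ∈ Set.Ico (0:ℝ) 1 | ¬ IsUnit (Matrix.of fun i j : Fin k =>
          (star (U (x + α)) * A x * U x)
            (⟨d - k + (i : ℕ), by have := i.isLt; omega⟩ : Fin d)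
            (⟨d - k + (j : ℕ), by have := j.isLt; omega⟩ : Fin d))}.Finite ∧
      (∀ x : ℝ, (matIter α A (d - k) x).rank ≤ k) := by
  classical
  obtain ⟨m, u, hmd, hF, hT, hdAP, hd0⟩ := exists_frame α hA
  obtain ⟨C, hC1, hCd, hCw⟩ := det_bound (α := α) hA hF m
  have hker : ∀ n x, m ≤ n → ∀ y ∈ SS u m x, Matrix.toEuclideanLin (matIter α A n x) y = 0 :=
    fun n x hn y hy => iter_ker hT n m x y hn le_rfl hy
  have hmk1 : k + m ≤ d := by
    by_contra hcon
    obtain ⟨L, hL0, hL⟩ := hLk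
    refine hL0 (lyap_bot (m := m) (fun n x hn => singVal_zero hkd.le (hker n x hn) ?_) hL)
    rw [(hF.mono hmd).finrank]
    omega
  have hmk2 : d < k + 1 + m := by
    by_contra hcon
    refine lyap_ne_bot hdAP hd0 hC1 hCd (fun n x => ?_) hLk1
    exact singVal_iter_ge hmd hF hT (δ := fun x => ‖(DD α A u m x).det‖ / C)
      (fun x => by positivity) hCw (by omega) (by omega) n x
  obtain rfl : m = d - k := by omega
  let U : ℝ → Matrix (Fin d) (Fin d) ℂ := fun x => Matrix.of fun i j => u j x i
  have hentry : ∀ x (i j : Fin d), (star (U (x + α)) * A x * U x) i j =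
      inner ℂ (u i (x + α)) (Matrix.toEuclideanLin (A x) (u j x)) := by
    intro x i j
    rw [Matrix.mul_assoc, Matrix.mul_apply, PiLp.inner_apply]
    refine Finset.sum_congr rfl fun l _ => ?_
    simp only [RCLike.inner_apply, Matrix.star_apply, Matrix.toLpLin_apply, Matrix.mul_apply,
      Matrix.mulVec, dotProduct, U, Matrix.of_apply]
    rw [mul_comm]
    rfl
  have hzero : ∀ (x : ℝ) (i j : Fin d), (j : ℕ) < d - k → (j : ℕ) ≤ (i : ℕ) →
        (star (U (x + α)) * A x * U x) i j = 0 := by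
    intro x i j hj hij
    rw [hentry]
    refine inner_SS (fun l hl => ?_) (hT j hj x)
    rw [hF.2 _ _ i.2 _ (by omega), if_neg (by omega)]
  refine ⟨U, ⟨fun x => ?_, fun x i j => ?_⟩, fun x => ?_, hzero, fun x => ?_, ?_, fun x => ?_⟩
  · ext i j
    simp only [U, Matrix.of_apply, (hF.1 j j.2).2 x]
  · have h1 := (contDiff_piLp 2).1 (hF.1 j j.2).1 i
    exact (contDiff_omega_iff_analyticOnNhd.1 h1) x (Set.mem_univ x)
  · rw [Matrix.mem_unitaryGroup_iff']
    ext i j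
    have h1 := hF.2 x i i.2 j j.2
    rw [PiLp.inner_apply] at h1
    rw [Matrix.mul_apply, Matrix.one_apply]
    simp only [Fin.ext_iff]
    rw [← h1]
    refine Finset.sum_congr rfl fun l _ => ?_
    simp only [RCLike.inner_apply, Matrix.star_apply, U, Matrix.of_apply]
    rw [mul_comm]
    rfl
  · ext i j
    refine strict_iter α _ (fun t i j hij => ?_) (d - k) x i j (by omega)
    exact hzero t _ _ j.2 hij
  · have hfin := hdAP.zeros_finite hd0
    refine hfin.subset fun x hx => ⟨Set.Ico_subset_Icc_self hx.1, ?_⟩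
    by_contra hne
    apply hx.2
    rw [Matrix.isUnit_iff_isUnit_det, isUnit_iff_ne_zero]
    intro h0
    apply hne
    have hk : d - (d - k) = k := by omega
    rw [← h0, ← Matrix.det_submatrix_equiv_self (finCongr hk).symm]
    congr 1
    ext i j
    simp only [Matrix.submatrix_apply, Matrix.of_apply, hentry, DD]
    rfl
  · have h1 := rank_le_of_ker (hker (d - k) x le_rfl)
    rw [(hF.mono hmd).finrank] at h1
    omega
end
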